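/- arXiv:math/0503246 — 2 statements merged into one kernel-verified Lean document; each statement's English description precedes it below -/
import Mathlib

section
/- Define σ_0 = ρ (the Dickman function) and, for j ≥ 0, let σ_{j+1} be the unique solution of u·σ_{j+1}(u) = ∫₀^u σ_{j+1}(u−t)·σ_j(t) dt for u > 1 with σ_{j+1}(u) = 1 for 0 ≤ u ≤ 1. Then for every fixed integer k ≥ 1, σ_k(u)^{1/u} · log_k(u) · log_{k+1}(u) → 1 as u → ∞, where log_j denotes the j-fold iterated natural logarithm. -/
open Real Filter Topology MeasureTheory Set

theorem pos_of_first_zero {w : ℝ → ℝ} {U : ℝ} (hw : Continuous w)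
    (h0 : ∀ u, 0 ≤ u → u ≤ U → 0 < w u)
    (hs : ∀ u, 0 ≤ u → U < u → (∀ v, 0 ≤ v → v < u → 0 < w v) → 0 < w u) :
    ∀ u, 0 ≤ u → 0 < w u := by
  by_contra! ⟨u, hu, hwu⟩
  set S : Set ℝ := {x | 0 ≤ x ∧ w x ≤ 0}
  have hS : IsClosed S :=
    (isClosed_le continuous_const continuous_id).inter (isClosed_le hw continuous_const)
  have hbdd : BddBelow S := ⟨0, fun x hx => hx.1⟩
  have hmem := hS.csInf_mem ⟨u, hu, hwu⟩ hbdd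
  refine absurd (hs _ hmem.1 ?_ fun v hv hvs => ?_) (not_lt.2 hmem.2)
  · by_contra! h
    exact absurd (h0 _ hmem.1 h) (not_lt.2 hmem.2)
  · by_contra! h
    exact absurd (csInf_le hbdd ⟨hv, h⟩) (not_le.2 hvs)

theorem lt_of_sub_convolution_lt {κ f g : ℝ → ℝ} {U : ℝ} (hκ : ∀ t, 0 ≤ t → 0 ≤ κ t)
    (hκi : ∀ u, IntervalIntegrable κ volume 0 u) (hf : Continuous f) (hg : Continuous g)
    (hlt : ∀ u, 0 ≤ u → u ≤ U → f u < g u)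
    (h : ∀ u, 0 ≤ u → U < u → (u * f u - ∫ t in (0 : ℝ)..u, f (u - t) * κ t) <
      u * g u - ∫ t in (0 : ℝ)..u, g (u - t) * κ t) :
    ∀ u, 0 ≤ u → f u < g u := by
  intro u hu
  refine sub_pos.1 (pos_of_first_zero (w := fun x => g x - f x) (U := U) (hg.sub hf)
    (fun v h1 h2 => sub_pos.2 (hlt v h1 h2)) (fun v hv hUv hpos => ?_) u hu)
  have hle : ∫ t in (0 : ℝ)..v, f (v - t) * κ t ≤ ∫ t in (0 : ℝ)..v, g (v - t) * κ t := by
    have hsub : Continuous fun t : ℝ => v - t := continuous_const.sub continuous_id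
    refine intervalIntegral.integral_mono_on_of_le_Ioo hv
      ((hκi v).continuousOn_mul (hf.comp hsub).continuousOn)
      ((hκi v).continuousOn_mul (hg.comp hsub).continuousOn) fun t ht => ?_
    have := hpos (v - t) (by linarith [ht.2]) (by linarith [ht.1])
    exact mul_le_mul_of_nonneg_right (by linarith) (hκ t ht.1.le)
  have h1 := h v hv hUv
  have h2 : 0 < v * (g v - f v) := by nlinarith
  exact pos_of_mul_pos_right h2 hv

theorem intervalIntegrable_reflect_mul_iff {κ f : ℝ → ℝ} (hκ : Continuous κ)
    (hκpos : ∀ t, 0 < κ t) (u : ℝ) :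
    IntervalIntegrable (fun t => f (u - t) * κ t) volume 0 u ↔ IntervalIntegrable f volume 0 u := by
  constructor
  · intro h
    have h1 : IntervalIntegrable (fun t => f (u - t)) volume 0 u := by
      have := h.mul_continuousOn (g := fun t => (κ t)⁻¹)
        (hκ.inv₀ fun t => (hκpos t).ne').continuousOn
      refine this.congr fun t _ => ?_
      have := (hκpos t).ne'
      simp [this]
    have h2 := h1.comp_sub_left u
    simp only [sub_sub_cancel, sub_zero, sub_self] at h2
    exact h2.symm
  · intro h
    have h2 := h.comp_sub_left u
    simp only [sub_zero, sub_self] at h2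
    exact h2.symm.mul_continuousOn hκ.continuousOn

theorem abs_le_of_convolution_eq {κ f : ℝ → ℝ}
    (hκpos : ∀ t, 0 < κ t) (hf1 : ∀ u ≤ 1, f u = 1)
    (hfe : ∀ u, 1 < u → u * f u = ∫ t in (0 : ℝ)..u, f (u - t) * κ t)
    {M u : ℝ} (hu : 0 ≤ u) (hM : ∀ t ∈ Icc 0 u, κ t ≤ M) (hi : IntervalIntegrable f volume 0 u) :
    |f u| ≤ 1 + M * ∫ t in (0 : ℝ)..u, |f t| := by
  have hint : 0 ≤ ∫ t in (0 : ℝ)..u, |f t| :=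
    intervalIntegral.integral_nonneg hu fun t _ => abs_nonneg _
  have hM0 : 0 < M := (hκpos 0).trans_le (hM 0 ⟨le_rfl, hu⟩)
  have hMi := mul_nonneg hM0.le hint
  rcases le_or_gt u 1 with h1 | h1
  · rw [hf1 u h1]; simp; exact hMi
  · have hb : ‖∫ t in (0 : ℝ)..u, f (u - t) * κ t‖ ≤ ∫ t in (0 : ℝ)..u, M * |f (u - t)| := by
      refine intervalIntegral.norm_integral_le_of_norm_le hu (ae_of_all _ fun t ht => ?_) ?_
      · rw [norm_mul, Real.norm_eq_abs, Real.norm_eq_abs, abs_of_pos (hκpos t), mul_comm]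
        exact mul_le_mul_of_nonneg_right (hM t ⟨ht.1.le, ht.2⟩) (abs_nonneg _)
      · have h2 := (hi.abs.const_mul M).comp_sub_left u
        simp only [sub_zero, sub_self] at h2
        exact h2.symm
    rw [intervalIntegral.integral_comp_sub_left (fun t => M * |f t|) u, sub_self, sub_zero,
      intervalIntegral.integral_const_mul, ← hfe u h1, norm_mul, Real.norm_eq_abs,
      Real.norm_eq_abs, abs_of_nonneg hu] at hb
    nlinarith [abs_nonneg (f u)]

theorem intervalIntegrable_of_convolution_eq {κ f : ℝ → ℝ} (hκ : Continuous κ)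
    (hκpos : ∀ t, 0 < κ t) (hf1 : ∀ u ≤ 1, f u = 1)
    (hfe : ∀ u, 1 < u → u * f u = ∫ t in (0 : ℝ)..u, f (u - t) * κ t)
    {U : ℝ} (hU : 1 < U) : IntervalIntegrable f volume 0 U := by
  obtain ⟨M, hM⟩ := (isCompact_Icc (a := (0 : ℝ)) (b := U)).bddAbove_image hκ.continuousOn
  have hM : ∀ t ∈ Icc 0 U, κ t ≤ M := fun t ht => hM ⟨t, ht, rfl⟩
  have hM0 : 0 < M := (hκpos 0).trans_le (hM 0 ⟨le_rfl, by linarith⟩)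
  set A : Set ℝ := {u | u ≤ U ∧ IntervalIntegrable f volume 0 u}
  have hbdd : BddAbove A := ⟨U, fun u hu => hu.1⟩
  have h1A : (1 : ℝ) ∈ A := by
    refine ⟨hU.le, ((intervalIntegrable_const (c := (1 : ℝ))).congr fun t ht => ?_)⟩
    rw [uIoc_of_le zero_le_one] at ht
    exact (hf1 t ht.2).symm
  set s := sSup A
  have hs1 : 1 ≤ s := le_csSup hbdd h1A
  have hsU : s ≤ U := csSup_le ⟨1, h1A⟩ fun u hu => hu.1
  have hlt : ∀ u, 0 ≤ u → u < s → IntervalIntegrable f volume 0 u := by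
    intro u hu hus
    obtain ⟨a, haA, hua⟩ := exists_lt_of_lt_csSup ⟨1, h1A⟩ hus
    exact haA.2.mono_set (by
      rw [uIcc_of_le hu, uIcc_of_le (hu.trans hua.le)]; exact Icc_subset_Icc le_rfl hua.le)
  have hs : IntervalIntegrable f volume 0 s := by
    set p := max (s - 1 / (2 * M)) 0
    have hp0 : 0 ≤ p := le_max_right _ _
    have hδ : 0 < 1 / (2 * M) := by positivity
    have hps : p < s := max_lt (by linarith) (by linarith)
    have hsp : s - p ≤ 1 / (2 * M) := by linarith [le_max_left (s - 1 / (2 * M)) 0]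
    have hbound : ∀ u, p ≤ u → u < s →
        ∫ t in (0 : ℝ)..u, |f t| ≤ 2 * ((∫ t in (0 : ℝ)..p, |f t|) + 1 / (2 * M)) := by
      intro u hpu hus
      have hu0 := hp0.trans hpu
      have hi := (hlt u hu0 hus).abs
      have hip := (hlt p hp0 hps).abs
      have hipu : IntervalIntegrable (fun t => |f t|) volume p u := hip.symm.trans hi
      have hsplit := intervalIntegral.integral_add_adjacent_intervals hip hipu
      have hI0 : 0 ≤ ∫ t in (0 : ℝ)..u, |f t| :=
        intervalIntegral.integral_nonneg hu0 fun t _ => abs_nonneg _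
      have hle : ∫ t in p..u, |f t| ≤ ∫ _t in p..u, (1 + M * ∫ t in (0 : ℝ)..u, |f t|) := by
        refine intervalIntegral.integral_mono_on hpu hipu intervalIntegrable_const fun t ht => ?_
        have ht0 := hp0.trans ht.1
        refine (abs_le_of_convolution_eq hκpos hf1 hfe ht0
          (fun x hx => hM x ⟨hx.1, by linarith [hx.2, ht.2]⟩)
          (hlt t ht0 (ht.2.trans_lt hus))).trans ?_
        have : ∫ t in (0 : ℝ)..t, |f t| ≤ ∫ t in (0 : ℝ)..u, |f t| :=
          intervalIntegral.integral_mono_interval le_rfl ht0 ht.2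
            (ae_of_all _ fun _ => abs_nonneg _) hi
        gcongr
      rw [intervalIntegral.integral_const, smul_eq_mul] at hle
      have h3 : (u - p) * (1 + M * ∫ t in (0 : ℝ)..u, |f t|) ≤
          1 / (2 * M) * (1 + M * ∫ t in (0 : ℝ)..u, |f t|) :=
        mul_le_mul_of_nonneg_right (by linarith) (by positivity)
      have h4 : 1 / (2 * M) * (1 + M * ∫ t in (0 : ℝ)..u, |f t|) =
          1 / (2 * M) + (∫ t in (0 : ℝ)..u, |f t|) / 2 := by field_simp
      linarith
    have htend : Tendsto (fun n : ℕ => s - 1 / ((n : ℝ) + 1)) atTop (𝓝 s) := by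
      simpa using tendsto_const_nhds.sub (tendsto_one_div_add_atTop_nhds_zero_nat (𝕜 := ℝ))
    have hn : ∀ n : ℕ, s - 1 / ((n : ℝ) + 1) < s := fun n => by
      have : 0 < 1 / ((n : ℝ) + 1) := by positivity
      linarith
    rw [intervalIntegrable_iff_integrableOn_Ioc_of_le (by linarith)]
    refine integrableOn_Ioc_of_intervalIntegral_norm_bounded_right
      (I := 2 * ((∫ t in (0 : ℝ)..p, |f t|) + 1 / (2 * M))) (fun n => ?_) htend ?_
    · rcases le_or_gt 0 (s - 1 / ((n : ℝ) + 1)) with h | h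
      · exact (intervalIntegrable_iff_integrableOn_Ioc_of_le h).1 (hlt _ h (hn n))
      · rw [Ioc_eq_empty (by linarith)]; exact integrableOn_empty
    · filter_upwards [htend.eventually_const_lt hps] with n hpn
      have := hbound _ hpn.le (hn n)
      rwa [intervalIntegral.integral_of_le (hp0.trans hpn.le)] at this
  rcases hsU.eq_or_lt with h | h
  · rwa [h] at hs
  · refine hs.trans ((intervalIntegrable_const (c := (0 : ℝ))).congr fun t ht => ?_)
    rw [uIoc_of_le hsU] at ht
    by_contra hne
    rcases le_or_gt t U with htU | htU
    · have hnot : ¬ IntervalIntegrable f volume 0 t := fun hi =>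
        absurd (le_csSup hbdd ⟨htU, hi⟩) (not_le.2 ht.1)
      have h0 := hfe t (hs1.trans_lt ht.1)
      rw [intervalIntegral.integral_undef
        (mt (intervalIntegrable_reflect_mul_iff hκ hκpos t).1 hnot)] at h0
      have : t ≠ 0 := by linarith [ht.1]
      exact hne (by simpa [this, eq_comm] using h0)
    · linarith [ht.2]

theorem continuous_of_convolution_eq {κ f : ℝ → ℝ} (hκ : Continuous κ)
    (hκpos : ∀ t, 0 < κ t) (hκ1 : ∀ t ≤ 1, κ t = 1) (hf1 : ∀ u ≤ 1, f u = 1)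
    (hfe : ∀ u, 1 < u → u * f u = ∫ t in (0 : ℝ)..u, f (u - t) * κ t) : Continuous f := by
  have hint : ∀ U, 1 < U → IntervalIntegrable f volume (-1) U := by
    intro U hU
    refine IntervalIntegrable.trans (b := 0) ?_
      (intervalIntegrable_of_convolution_eq hκ hκpos hf1 hfe hU)
    refine (intervalIntegrable_const (c := (1 : ℝ))).congr fun t ht => ?_
    rw [uIoc_of_le (by norm_num)] at ht
    exact (hf1 t (by linarith [ht.2])).symm
  have hconv : ∀ u, 1 / 2 < u → f u = (∫ t in (0 : ℝ)..u, f t * κ (u - t)) / u := by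
    intro u hu
    have hu0 : u ≠ 0 := by linarith
    rw [eq_div_iff hu0, mul_comm]
    rcases le_or_gt u 1 with h | h
    · rw [hf1 u h, intervalIntegral.integral_congr (g := fun _ => (1 : ℝ))]
      · simp
      · intro t ht
        rw [uIcc_of_le (by linarith)] at ht
        simp [hf1 t (by linarith [ht.2]), hκ1 (u - t) (by linarith [ht.1])]
    · rw [hfe u h]
      have := intervalIntegral.integral_comp_sub_left (a := 0) (b := u)
        (fun t => f t * κ (u - t)) u
      simpa using this
  rw [continuous_iff_continuousAt]
  intro x
  rcases lt_or_ge x 1 with hx | hx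
  · refine (continuousAt_const (y := (1 : ℝ))).congr ?_
    filter_upwards [Iio_mem_nhds hx] with y hy using (hf1 y (le_of_lt hy)).symm
  · have hprim : ContinuousAt (fun p : ℝ × ℝ => ∫ t in (0 : ℝ)..p.2, f t * κ (p.1 - t)) (x, x) := by
      obtain ⟨M, hM⟩ := (isCompact_Icc (a := (-2 : ℝ)) (b := x + 2)).bddAbove_image hκ.continuousOn
      have hi := hint (x + 1) (by linarith)
      refine intervalIntegral.continuousAt_parametric_primitive_of_dominated
        (F := fun y t => f t * κ (y - t)) (fun t => |f t| * M) (-1) (x + 1)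
        (fun y => ?_) ?_ (hi.abs.mul_const M) ?_ ?_ ?_ (by simp)
      · have hκy : Continuous fun t => κ (y - t) := hκ.comp (continuous_const.sub continuous_id)
        exact (intervalIntegrable_iff.1
          (hi.mul_continuousOn hκy.continuousOn)).aestronglyMeasurable
      · filter_upwards [Ioo_mem_nhds (show x - 1 < x by linarith) (show x < x + 1 by linarith)]
          with y hy
        refine (ae_restrict_iff' measurableSet_uIoc).2 (ae_of_all _ fun t ht => ?_)
        rw [uIoc_of_le (by linarith)] at ht
        rw [norm_mul, Real.norm_eq_abs, Real.norm_eq_abs, abs_of_pos (hκpos _)]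
        refine mul_le_mul_of_nonneg_left (hM ⟨y - t, ⟨?_, ?_⟩, rfl⟩) (abs_nonneg _)
        · linarith [ht.2, hy.1]
        · linarith [ht.1, hy.2]
      · exact ae_of_all _ fun t =>
          (continuous_const.mul (hκ.comp (continuous_id.sub continuous_const))).continuousAt
      · constructor <;> linarith
      · constructor <;> linarith
    have hdiag : ContinuousAt (fun u : ℝ => (u, u)) x :=
      (continuous_id.prodMk continuous_id).continuousAt
    have hcomp : ContinuousAt (fun u : ℝ => ∫ t in (0 : ℝ)..u, f t * κ (u - t)) x :=
      ContinuousAt.comp (f := fun u : ℝ => (u, u)) hprim hdiag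
    refine (hcomp.div continuousAt_id (by simp; linarith)).congr ?_
    filter_upwards [Ioi_mem_nhds (show 1 / 2 < x by linarith)] with y hy using (hconv y hy).symm

theorem pos_of_convolution_eq {κ f : ℝ → ℝ} (hκ : Continuous κ) (hκpos : ∀ t, 0 < κ t)
    (hf : Continuous f) (hf1 : ∀ u ≤ 1, f u = 1)
    (hfe : ∀ u, 1 < u → u * f u = ∫ t in (0 : ℝ)..u, f (u - t) * κ t) (u : ℝ) : 0 < f u := by
  rcases le_or_gt u 1 with h | h
  · rw [hf1 u h]; exact one_pos
  refine pos_of_first_zero (U := 1) hf (fun v _ hv => by rw [hf1 v hv]; exact one_pos)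
    (fun v hv h1v hpos => ?_) u (by linarith)
  refine pos_of_mul_pos_right (a := v) ?_ hv
  rw [hfe v h1v]
  refine intervalIntegral.intervalIntegral_pos_of_pos_on
    (((hf.comp (continuous_const.sub continuous_id)).mul hκ).intervalIntegrable _ _)
    (fun t ht => ?_) (by linarith)
  exact mul_pos (hpos _ (by linarith [ht.2]) (by linarith [ht.1])) (hκpos t)

/-- The indicator of `(-∞, 1]`: the kernel in the integral equation of the Dickman function. -/
noncomputable def unitKernel (t : ℝ) : ℝ := (Iic (1 : ℝ)).indicator (fun _ => 1) t

theorem unitKernel_of_le {t : ℝ} (h : t ≤ 1) : unitKernel t = 1 := by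
  simp [unitKernel, h]

theorem unitKernel_of_lt {t : ℝ} (h : 1 < t) : unitKernel t = 0 := by
  simp [unitKernel, h]

theorem unitKernel_nonneg (t : ℝ) : 0 ≤ unitKernel t :=
  indicator_nonneg (fun _ _ => zero_le_one) t

theorem intervalIntegrable_unitKernel (a b : ℝ) : IntervalIntegrable unitKernel volume a b := by
  have h : IntervalIntegrable (fun _ : ℝ => (1 : ℝ)) volume a b := intervalIntegrable_const
  exact ⟨h.1.indicator measurableSet_Iic, h.2.indicator measurableSet_Iic⟩

theorem integral_mul_unitKernel {φ : ℝ → ℝ} (hφ : Continuous φ) {u : ℝ} (hu : 1 ≤ u) :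
    ∫ t in (0 : ℝ)..u, φ t * unitKernel t = ∫ t in (0 : ℝ)..1, φ t := by
  have hi : ∀ a b, IntervalIntegrable (fun t => φ t * unitKernel t) volume a b := fun a b =>
    (intervalIntegrable_unitKernel a b).continuousOn_mul hφ.continuousOn
  rw [← intervalIntegral.integral_add_adjacent_intervals (hi 0 1) (hi 1 u)]
  have h1 : ∫ t in (1 : ℝ)..u, φ t * unitKernel t = 0 := by
    rw [intervalIntegral.integral_congr_Ioo_of_le hu (g := fun _ => 0)]
    · simp
    · intro t ht
      simp [unitKernel_of_lt ht.1]
  have h0 : ∫ t in (0 : ℝ)..1, φ t * unitKernel t = ∫ t in (0 : ℝ)..1, φ t := by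
    refine intervalIntegral.integral_congr fun t ht => ?_
    rw [uIcc_of_le zero_le_one] at ht
    simp [unitKernel_of_le ht.2]
  rw [h0, h1, add_zero]

theorem dickman_mul_eq_integral {f : ℝ → ℝ} (hf : Continuous f) (hf1 : ∀ u ≤ 1, f u = 1)
    (hfd : ∀ u, 1 < u → HasDerivAt f (-f (u - 1) / u) u) {u : ℝ} (hu : 1 ≤ u) :
    u * f u = ∫ t in (u - 1)..u, f t := by
  set P : ℝ → ℝ := fun x => ∫ t in (0 : ℝ)..x, f t
  have hP : ∀ x, HasDerivAt P (f x) x := fun x => intervalIntegral.integral_hasDerivAt_right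
    (hf.intervalIntegrable _ _) (hf.stronglyMeasurableAtFilter _ _) hf.continuousAt
  have hPc : Continuous P := continuous_iff_continuousAt.2 fun x => (hP x).continuousAt
  set Q : ℝ → ℝ := fun x => x * f x - (P x - P (x - 1))
  have hQc : Continuous Q := (continuous_id.mul hf).sub
    (hPc.sub (hPc.comp (continuous_id.sub continuous_const)))
  have hQd : ∀ x, 1 < x → HasDerivAt Q 0 x := by
    intro x hx
    have h1 : HasDerivAt (fun y => P (y - 1)) (f (x - 1)) x := by
      simpa using (hP (x - 1)).comp_sub_const x 1
    have h := ((hasDerivAt_id x).mul (hfd x hx)).sub ((hP x).sub h1)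
    refine h.congr_deriv ?_
    have : x ≠ 0 := by linarith
    simp only [id]
    field_simp
    ring
  have hQ1 : Q 1 = 0 := by
    have : ∫ t in (0 : ℝ)..1, f t = ∫ t in (0 : ℝ)..1, (1 : ℝ) :=
      intervalIntegral.integral_congr fun t ht => by
        rw [uIcc_of_le zero_le_one] at ht
        exact hf1 t ht.2
    simp [Q, P, this, hf1 1 le_rfl]
  have hQu : Q u = 0 := by
    rcases hu.eq_or_lt with h | h
    · rw [← h, hQ1]
    · obtain ⟨c, hc, hc'⟩ := exists_hasDerivAt_eq_slope Q (fun _ => 0) h hQc.continuousOn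
        fun x hx => hQd x hx.1
      have : u - 1 ≠ 0 := by linarith
      rw [hQ1, eq_div_iff this] at hc'
      linarith
  have hsub : P u - P (u - 1) = ∫ t in (u - 1)..u, f t :=
    intervalIntegral.integral_interval_sub_left (hf.intervalIntegrable _ _)
      (hf.intervalIntegrable _ _)
  simp only [Q] at hQu
  linarith

theorem dickman_pos {f : ℝ → ℝ} (hf : Continuous f) (hf1 : ∀ u ≤ 1, f u = 1)
    (hfd : ∀ u, 1 < u → HasDerivAt f (-f (u - 1) / u) u) (u : ℝ) : 0 < f u := by
  rcases le_or_gt u 1 with h | h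
  · rw [hf1 u h]; exact one_pos
  refine pos_of_first_zero (U := 1) hf (fun v _ hv => by rw [hf1 v hv]; exact one_pos)
    (fun v hv h1v hpos => ?_) u (by linarith)
  refine pos_of_mul_pos_right (a := v) ?_ hv
  rw [dickman_mul_eq_integral hf hf1 hfd h1v.le]
  exact intervalIntegral.intervalIntegral_pos_of_pos_on (hf.intervalIntegrable _ _)
    (fun t ht => hpos t (by linarith [ht.1]) ht.2) (by linarith)

theorem dickman_convolution_eq {f : ℝ → ℝ} (hf : Continuous f) (hf1 : ∀ u ≤ 1, f u = 1)
    (hfd : ∀ u, 1 < u → HasDerivAt f (-f (u - 1) / u) u) {u : ℝ} (hu : 1 < u) :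
    u * f u = ∫ t in (0 : ℝ)..u, f (u - t) * unitKernel t := by
  rw [integral_mul_unitKernel (φ := fun t => f (u - t))
      (hf.comp (continuous_const.sub continuous_id)) hu.le,
    dickman_mul_eq_integral hf hf1 hfd hu.le]
  simp

/-- `H` is eventually continuous and grows like a slowly varying perturbation of `a * log`. -/
def RegularGrowth (a : ℝ) (H : ℝ → ℝ) : Prop :=
  (∀ᶠ u in atTop, ContinuousAt H u) ∧ ∀ η > 0, ∀ᶠ u₀ in atTop, ∀ v u, u₀ ≤ v → v ≤ u →
    a * log (u / v) ≤ H u - H v ∧ H u - H v ≤ (a + η) * log (u / v)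

/-- `f u = exp (-u (H u - a + o(1)))` as `u → ∞`. -/
def HasDecay (a : ℝ) (H f : ℝ → ℝ) : Prop :=
  ∀ ε > 0, ∀ᶠ u in atTop, exp (-(u * (H u - a + ε))) ≤ f u ∧ f u ≤ exp (-(u * (H u - a - ε)))

theorem mul_sub_le_of_growth {b u₀ : ℝ} {H : ℝ → ℝ} (hb : 0 ≤ b) (hu₀ : 0 < u₀)
    (hH : ∀ v u, u₀ ≤ v → v ≤ u → H u - H v ≤ b * log (u / v)) {v u : ℝ} (hv : 0 ≤ v)
    (hvu : v ≤ u) (hu : u₀ ≤ u) : v * (H (max u u₀) - H (max v u₀)) ≤ b * (u - v) := by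
  rcases hv.eq_or_lt with rfl | hv
  · simpa using mul_nonneg hb hvu
  have h1 := hH (max v u₀) u (le_max_right _ _) (max_le hvu hu)
  have hup : 0 < u := hu₀.trans_le hu
  have h2 : log (u / max v u₀) ≤ log (u / v) := by
    apply log_le_log (by positivity)
    gcongr
    exact le_max_left _ _
  have h3 : log (u / v) ≤ u / v - 1 := log_le_sub_one_of_pos (by positivity)
  rw [max_eq_left hu]
  calc v * (H u - H (max v u₀)) ≤ v * (b * (u / v - 1)) := by
        gcongr
        exact h1.trans (by gcongr; exact h2.trans h3)
    _ = b * (u - v) := by field_simp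

theorem le_mul_sub_of_growth {a u₀ : ℝ} {H : ℝ → ℝ} (ha : 0 ≤ a) (hu₀ : 0 < u₀)
    (hH : ∀ v u, u₀ ≤ v → v ≤ u → a * log (u / v) ≤ H u - H v) {v u : ℝ} (hv : u₀ ≤ v)
    (hvu : v ≤ u) : a * (v * (1 - v / u)) ≤ v * (H u - H v) := by
  have hv0 : 0 < v := hu₀.trans_le hv
  have hu0 : 0 < u := hv0.trans_le hvu
  have h := one_sub_inv_le_log_of_pos (show 0 < u / v by positivity)
  rw [inv_div] at h
  calc a * (v * (1 - v / u)) = v * (a * (1 - v / u)) := by ring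
    _ ≤ v * (H u - H v) := by
      gcongr
      exact le_trans (by gcongr) (hH v u hv hvu)

theorem continuous_barrier {H : ℝ → ℝ} {u₀ : ℝ} (hH : ∀ u, u₀ ≤ u → ContinuousAt H u) (d : ℝ) :
    Continuous fun u => exp (-(u * (H (max u u₀) + d))) := by
  have h : Continuous fun u => H (max u u₀) := continuous_iff_continuousAt.2 fun x =>
    ContinuousAt.comp (f := fun u => max u u₀) (hH _ (le_max_right x u₀))
      (continuous_id.max continuous_const).continuousAt
  exact continuous_exp.comp (continuous_id.mul (h.add continuous_const)).neg

theorem barrier_ratio (h : ℝ → ℝ) (d u t : ℝ) :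
    exp (-((u - t) * (h (u - t) + d))) =
      exp (-(u * (h u + d))) * exp (t * (h u + d) + (u - t) * (h u - h (u - t))) := by
  rw [← exp_add]
  congr 1
  ring

theorem exists_const_mul_gt_on_Icc {f g : ℝ → ℝ} (hf : Continuous f) (hg : Continuous g)
    (hgpos : ∀ u, 0 < g u) (U : ℝ) : ∃ C > 0, ∀ u, 0 ≤ u → u ≤ U → f u < C * g u := by
  obtain ⟨C, hC⟩ := (isCompact_Icc (a := (0 : ℝ)) (b := U)).bddAbove_image
    (hf.div hg fun u => (hgpos u).ne').continuousOn
  refine ⟨max C 0 + 1, by positivity, fun u h0 hU => ?_⟩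
  have h : f u / g u ≤ C := hC ⟨u, ⟨h0, hU⟩, rfl⟩
  rw [← div_lt_iff₀ (hgpos u)]
  linarith [le_max_left C 0]

theorem le_exp_of_laplace_lt {a : ℝ} (ha : 0 ≤ a) {κ f H : ℝ → ℝ} (hκ : ∀ t, 0 ≤ t → 0 ≤ κ t)
    (hκi : ∀ u, IntervalIntegrable κ volume 0 u) (hf : Continuous f)
    (hfe : ∀ u, 1 < u → u * f u = ∫ t in (0 : ℝ)..u, f (u - t) * κ t)
    (hH : RegularGrowth a H)
    (hup : ∀ ε > 0, ∀ᶠ u in atTop, ∫ t in (0 : ℝ)..u, exp (t * (H u - ε)) * κ t < u)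
    {ε : ℝ} (hε : 0 < ε) : ∀ᶠ u in atTop, f u ≤ exp (-(u * (H u - a - ε))) := by
  obtain ⟨u₀, hcont, hgrow, hu₀⟩ := ((eventually_forall_ge_atTop.2 hH.1).and
    ((hH.2 (ε / 4) (by linarith)).and (eventually_gt_atTop 0))).exists
  obtain ⟨U, hU, hUu₀, hU1⟩ := ((eventually_forall_ge_atTop.2 (hup (ε / 4) (by linarith))).and
    ((eventually_ge_atTop u₀).and (eventually_ge_atTop 1))).exists
  set h : ℝ → ℝ := fun u => H (max u u₀)
  set g : ℝ → ℝ := fun u => exp (-(u * (h u + (-a - ε / 2))))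
  have hg : Continuous g := continuous_barrier hcont _
  have hgpos : ∀ u, 0 < g u := fun u => exp_pos _
  obtain ⟨C, hC0, hC⟩ := exists_const_mul_gt_on_Icc hf hg hgpos U
  have hlt : ∀ u, 0 ≤ u → f u < C * g u := by
    refine lt_of_sub_convolution_lt hκ hκi hf (continuous_const.mul hg) hC fun u hu0 hUu => ?_
    have hle : ∫ t in (0 : ℝ)..u, C * g (u - t) * κ t ≤
        ∫ t in (0 : ℝ)..u, C * g u * (exp (t * (H u - ε / 4)) * κ t) := by
      have hgu : Continuous fun t => C * g (u - t) :=
        continuous_const.mul (hg.comp (continuous_const.sub continuous_id))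
      refine intervalIntegral.integral_mono_on hu0 ((hκi u).continuousOn_mul hgu.continuousOn)
        (((hκi u).continuousOn_mul (Continuous.continuousOn (by fun_prop))).const_mul _)
        fun t ht => ?_
      have hratio : g (u - t) ≤ g u * exp (t * (H u - ε / 4)) := by
        simp only [g]
        rw [barrier_ratio h]
        gcongr
        have h1 := mul_sub_le_of_growth (b := a + ε / 4) (by linarith) hu₀
          (fun v u h1 h2 => (hgrow v u h1 h2).2) (sub_nonneg.2 ht.2)
          (show u - t ≤ u by linarith [ht.1]) (hUu₀.trans hUu.le)
        have h2 : h u = H u := by simp only [h]; rw [max_eq_left (hUu₀.trans hUu.le)]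
        simp only [h] at h1 h2 ⊢
        rw [h2] at h1 ⊢
        linarith
      calc C * g (u - t) * κ t ≤ C * (g u * exp (t * (H u - ε / 4))) * κ t := by
            have := hκ t ht.1
            gcongr
        _ = _ := by ring
    rw [intervalIntegral.integral_const_mul] at hle
    have h1 := hfe u (hU1.trans_lt hUu)
    have h2 := mul_lt_mul_of_pos_left (hU u hUu.le) (mul_pos hC0 (hgpos u))
    linarith
  filter_upwards [eventually_ge_atTop (log C / (ε / 2)), eventually_ge_atTop u₀]
    with u hu huu₀
  refine (hlt u (hu₀.le.trans huu₀)).le.trans ?_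
  rw [div_le_iff₀ (by linarith)] at hu
  rw [← exp_log hC0]
  simp only [g, h]
  rw [max_eq_left huu₀, ← exp_add]
  gcongr
  linarith

theorem exp_le_of_lt_laplace {a : ℝ} (ha : 0 ≤ a) (ha1 : a ≤ 1) {κ f H : ℝ → ℝ}
    (hκ : ∀ t, 0 ≤ t → 0 ≤ κ t)
    (hκi : ∀ u, IntervalIntegrable κ volume 0 u) (hf : Continuous f) (hfpos : ∀ u, 0 < f u)
    (hfe : ∀ u, 1 < u → u * f u = ∫ t in (0 : ℝ)..u, f (u - t) * κ t)
    (hH : RegularGrowth a H)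
    (hlo : ∀ ε > 0, ∀ η > 0, ∀ᶠ u in atTop,
      u < ∫ t in (0 : ℝ)..(η * u), exp (t * (H u + ε)) * κ t)
    {ε : ℝ} (hε : 0 < ε) : ∀ᶠ u in atTop, exp (-(u * (H u - a + ε))) ≤ f u := by
  set η := min (ε / 4) (1 / 2)
  have hη : 0 < η := lt_min (by linarith) (by norm_num)
  have hη1 : η ≤ ε / 4 := min_le_left _ _
  have hη2 : η ≤ 1 / 2 := min_le_right _ _
  obtain ⟨u₀, hcont, hgrow, hu₀⟩ := ((eventually_forall_ge_atTop.2 hH.1).and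
    ((hH.2 1 one_pos).and (eventually_gt_atTop 0))).exists
  obtain ⟨U, hU, hUu₀, hU1⟩ :=
    ((eventually_forall_ge_atTop.2 (hlo (ε / 4) (by linarith) η hη)).and
      ((eventually_ge_atTop (2 * u₀)).and (eventually_ge_atTop 1))).exists
  set h : ℝ → ℝ := fun u => H (max u u₀)
  have hh : ∀ u, u₀ ≤ u → h u = H u := fun u hu => by simp only [h]; rw [max_eq_left hu]
  set g : ℝ → ℝ := fun u => exp (-(u * (h u + (-a + ε / 2))))
  have hg : Continuous g := continuous_barrier hcont _
  have hgpos : ∀ u, 0 < g u := fun u => exp_pos _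
  obtain ⟨C, hC0, hC⟩ := exists_const_mul_gt_on_Icc hg hf hfpos U
  have hlt : ∀ u, 0 ≤ u → g u < C * f u := by
    refine lt_of_sub_convolution_lt hκ hκi hg (continuous_const.mul hf) hC fun u hu0 hUu => ?_
    have hηu : η * u ≤ 1 / 2 * u := by gcongr
    have hηu0 : 0 ≤ η * u := by positivity
    have hgu : Continuous fun t => g (u - t) := hg.comp (continuous_const.sub continuous_id)
    have hle : ∫ t in (0 : ℝ)..(η * u), g u * (exp (t * (H u + ε / 4)) * κ t) ≤
        ∫ t in (0 : ℝ)..(η * u), g (u - t) * κ t := by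
      refine intervalIntegral.integral_mono_on hηu0
        (((hκi _).continuousOn_mul (Continuous.continuousOn (by fun_prop))).const_mul _)
        ((hκi _).continuousOn_mul hgu.continuousOn)
        fun t ht => ?_
      have hratio : g u * exp (t * (H u + ε / 4)) ≤ g (u - t) := by
        simp only [g]
        rw [barrier_ratio h]
        gcongr
        have hup : 0 < u := by linarith
        have h1 := le_mul_sub_of_growth ha hu₀
          (fun v u h1 h2 => (hgrow v u h1 h2).1) (show u₀ ≤ u - t by linarith [ht.2])
          (show u - t ≤ u by linarith [ht.1])
        rw [hh u (by linarith), hh (u - t) (by linarith [ht.2])]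
        have h2 : a * ((u - t) * (1 - (u - t) / u)) = a * t - a * t * (t / u) := by
          field_simp
          ring
        have h3 : t / u ≤ ε / 4 := by
          rw [div_le_iff₀ hup]
          exact ht.2.trans (by gcongr)
        have h4 : a * t * (t / u) ≤ 1 * t * (ε / 4) := by
          have := ht.1
          gcongr
        linarith
      rw [← mul_assoc]
      exact mul_le_mul_of_nonneg_right hratio (hκ t ht.1)
    rw [intervalIntegral.integral_const_mul] at hle
    have hmono : ∫ t in (0 : ℝ)..(η * u), g (u - t) * κ t ≤
        ∫ t in (0 : ℝ)..u, g (u - t) * κ t := by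
      refine intervalIntegral.integral_mono_interval le_rfl hηu0 (by linarith) ?_
        ((hκi _).continuousOn_mul hgu.continuousOn)
      refine (ae_restrict_iff' measurableSet_Ioc).2 (ae_of_all _ fun t ht => ?_)
      exact mul_nonneg (hgpos _).le (hκ t ht.1.le)
    have h1 := hfe u (hU1.trans_lt hUu)
    have h2 := mul_lt_mul_of_pos_left (hU u hUu.le) (hgpos u)
    have h3 : ∫ t in (0 : ℝ)..u, C * f (u - t) * κ t =
        C * ∫ t in (0 : ℝ)..u, f (u - t) * κ t := by
      rw [← intervalIntegral.integral_const_mul]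
      simp only [mul_assoc]
    rw [h3, ← h1]
    linarith
  filter_upwards [eventually_ge_atTop (log C / (ε / 2)), eventually_ge_atTop u₀]
    with u hu huu₀
  rw [div_le_iff₀ (by linarith)] at hu
  have h1 := hlt u (hu₀.le.trans huu₀)
  refine le_of_mul_le_mul_left (le_trans ?_ h1.le) hC0
  rw [← exp_log hC0]
  simp only [g]
  rw [hh u huu₀, ← exp_add]
  gcongr
  linarith

theorem RegularGrowth.comp_log {a : ℝ} (ha : 0 ≤ a) {H : ℝ → ℝ} (hH : RegularGrowth a H) :
    RegularGrowth 0 (fun u => H (log u)) := by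
  refine ⟨?_, fun η hη => ?_⟩
  · filter_upwards [tendsto_log_atTop.eventually hH.1, eventually_gt_atTop 0] with u hu hu0
    exact ContinuousAt.comp (f := log) hu (continuousAt_log hu0.ne')
  · filter_upwards [tendsto_log_atTop.eventually (hH.2 1 one_pos), eventually_gt_atTop 1,
      tendsto_log_atTop.eventually_ge_atTop ((a + 1) / η)] with u₀ hgrow hu₀ hlog v u hv hvu
    have hv0 : 0 < v := by linarith
    have hu0 : 0 < u := by linarith
    have hlv : log u₀ ≤ log v := log_le_log (by linarith) hv
    have hlu : log v ≤ log u := log_le_log hv0 hvu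
    have hlv0 : 0 < log v := (log_pos hu₀).trans_le hlv
    obtain ⟨h1, h2⟩ := hgrow (log v) (log u) hlv hlu
    have h3 : 0 ≤ log (log u / log v) := log_nonneg ((one_le_div hlv0).2 hlu)
    have h4 : log (log u / log v) ≤ log (u / v) / log v := by
      refine (log_le_sub_one_of_pos (div_pos (hlv0.trans_le hlu) hlv0)).trans_eq ?_
      rw [log_div hu0.ne' hv0.ne']
      field_simp
    have h5 : 0 ≤ log (u / v) := log_nonneg ((one_le_div hv0).2 hvu)
    refine ⟨by rw [zero_mul]; exact le_trans (by positivity) h1, h2.trans ?_⟩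
    have h6 : (a + 1) / log v ≤ η := by
      rw [div_le_iff₀ hlv0]
      rw [div_le_iff₀ hη] at hlog
      nlinarith
    calc (a + 1) * log (log u / log v) ≤ (a + 1) * (log (u / v) / log v) := by gcongr
      _ = (a + 1) / log v * log (u / v) := by ring
      _ ≤ (0 + η) * log (u / v) := by rw [zero_add]; gcongr

theorem regularGrowth_log_add_log_log : RegularGrowth 1 (fun u => log u + log (log u)) := by
  have hlog : RegularGrowth 1 log := by
    refine ⟨?_, fun η hη => ?_⟩
    · filter_upwards [eventually_gt_atTop 0] with u hu using continuousAt_log hu.ne'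
    · filter_upwards [eventually_gt_atTop 0] with u₀ hu₀ v u hv hvu
      have hv0 : 0 < v := by linarith
      have hu0 : 0 < u := by linarith
      have h5 : 0 ≤ log (u / v) := log_nonneg ((one_le_div hv0).2 hvu)
      rw [← log_div hu0.ne' hv0.ne']
      constructor <;> nlinarith
  have hloglog := hlog.comp_log zero_le_one
  refine ⟨?_, fun η hη => ?_⟩
  · filter_upwards [hlog.1, hloglog.1] with u h1 h2 using h1.add h2
  · filter_upwards [hlog.2 (η / 2) (by linarith), hloglog.2 (η / 2) (by linarith)]
      with u₀ h1 h2 v u hv hvu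
    obtain ⟨h3, h4⟩ := h1 v u hv hvu
    obtain ⟨h5, h6⟩ := h2 v u hv hvu
    constructor <;> linarith

theorem RegularGrowth.eventually_le_mul {a : ℝ} (ha : 0 ≤ a) {H : ℝ → ℝ} (hH : RegularGrowth a H)
    {δ : ℝ} (hδ : 0 < δ) : ∀ᶠ y in atTop, H y ≤ δ * y := by
  obtain ⟨u₀, hgrow, hu₀⟩ := ((hH.2 1 one_pos).and (eventually_gt_atTop 0)).exists
  have hc : 0 < δ / (2 * (a + 1)) := by positivity
  filter_upwards [isLittleO_log_id_atTop.bound hc, eventually_ge_atTop u₀, eventually_ge_atTop 1,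
    eventually_ge_atTop ((H u₀ - (a + 1) * log u₀) / (δ / 2))] with y hy hyu₀ hy1 hyc
  have h1 := (hgrow u₀ y le_rfl hyu₀).2
  have hy0 : 0 < y := by linarith
  rw [log_div hy0.ne' hu₀.ne'] at h1
  rw [div_le_iff₀ (by linarith)] at hyc
  rw [Real.norm_eq_abs, Real.norm_eq_abs, id, abs_of_pos hy0] at hy
  have h2 : (a + 1) * log y ≤ (a + 1) * (δ / (2 * (a + 1)) * y) := by
    gcongr
    exact (le_abs_self _).trans hy
  have h3 : (a + 1) * (δ / (2 * (a + 1)) * y) = δ / 2 * y := by field_simp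
  linarith

theorem integral_exp_mul_const {c : ℝ} (hc : c ≠ 0) (u : ℝ) :
    ∫ t in (0 : ℝ)..u, exp (t * c) = (exp (u * c) - 1) / c := by
  rw [intervalIntegral.integral_comp_mul_right (fun x => exp x) hc, integral_exp]
  simp [div_eq_inv_mul]

theorem mul_log_add_le {b d t y : ℝ} (hb : 0 < b) (ht : 0 < t) (hy : 0 < y) :
    t * (b * log (y / t) + d) ≤ b * exp (d / b - 1) * y := by
  have h := log_le_sub_one_of_pos (show 0 < y / t * exp (d / b - 1) by positivity)
  rw [log_mul (by positivity) (by positivity), log_exp] at h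
  calc t * (b * log (y / t) + d) = b * t * (log (y / t) + (d / b - 1) + 1) := by
        field_simp
        ring
    _ ≤ b * t * (y / t * exp (d / b - 1)) := by gcongr; linarith
    _ = b * exp (d / b - 1) * y := by field_simp

theorem RegularGrowth.exists_mul_sub_le {a : ℝ} (ha : 0 ≤ a) (ha1 : a ≤ 1) {H : ℝ → ℝ}
    (hH : RegularGrowth a H) {e : ℝ} (he : 0 < e) :
    ∃ θ, 0 < θ ∧ θ < 1 ∧ ∀ᶠ t₀ in atTop, ∀ t y, t₀ ≤ t → t₀ ≤ y →
      t * (H y - H t + a - e) ≤ θ * y := by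
  set η := min e 1 / 2
  have hm : 0 < min e 1 := lt_min he one_pos
  have hη : 0 < η := by positivity
  have hηsq : η * η < e := by
    have h1 : min e 1 ≤ e := min_le_left _ _
    have h2 : min e 1 ≤ 1 := min_le_right _ _
    have : η * η = min e 1 * min e 1 / 4 := by simp only [η]; ring
    nlinarith
  set b := a + η
  set d := a - e
  have hb : 0 < b := by positivity
  have hθ1 : b * exp (d / b - 1) < 1 := by
    have h1 : b < 2 - d / b := by
      rw [lt_sub_iff_add_lt', div_add' _ _ _ hb.ne', div_lt_iff₀ hb]
      simp only [b, d]
      nlinarith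
    have h2 := add_one_le_exp (1 - d / b)
    have h3 : exp (d / b - 1) = (exp (1 - d / b))⁻¹ := by rw [← exp_neg]; ring_nf
    rw [h3, ← div_eq_mul_inv, div_lt_one (exp_pos _)]
    linarith
  refine ⟨max (b * exp (d / b - 1)) (1 - e), lt_max_of_lt_left (by positivity),
    max_lt hθ1 (by linarith), ?_⟩
  filter_upwards [hH.2 η hη, eventually_gt_atTop 0] with t₀ hgrow ht₀ t y htt hty
  have ht0 : 0 < t := by linarith
  have hy0 : 0 < y := by linarith
  rcases le_total t y with h | h
  · have h1 := (hgrow t y htt h).2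
    calc t * (H y - H t + a - e) ≤ t * (b * log (y / t) + d) := by
          gcongr
          simp only [d]
          linarith
      _ ≤ b * exp (d / b - 1) * y := mul_log_add_le hb ht0 hy0
      _ ≤ _ := by gcongr; exact le_max_left _ _
  · have h1 := (hgrow y t hty h).1
    have h2 := one_sub_inv_le_log_of_pos (show 0 < t / y by positivity)
    rw [inv_div] at h2
    calc t * (H y - H t + a - e) ≤ t * (a * (y / t) - e) := by
          gcongr
          nlinarith
      _ = a * y - e * t := by field_simp
      _ ≤ (1 - e) * y := by nlinarith
      _ ≤ _ := by gcongr; exact le_max_right _ _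

theorem RegularGrowth.laplace_lt {a : ℝ} (ha : 0 ≤ a) (ha1 : a ≤ 1) {H κ : ℝ → ℝ}
    (hH : RegularGrowth a H) (hκ : Continuous κ)
    (hdecay : ∀ ε > 0, ∀ᶠ t in atTop, κ t ≤ exp (-(t * (H t - a - ε)))) {ε : ℝ} (hε : 0 < ε) :
    ∀ᶠ u in atTop, ∫ t in (0 : ℝ)..u, exp (t * (H (log u) - ε)) * κ t < u := by
  have he : 0 < ε / 3 := by linarith
  set e := ε / 3 with he_def
  obtain ⟨θ, hθ0, hθ1, hθ⟩ := hH.exists_mul_sub_le ha ha1 he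
  obtain ⟨t₀, ht₀, hκt₀, hpos⟩ := (hθ.and ((eventually_forall_ge_atTop.2 (hdecay e he)).and
    (eventually_gt_atTop 0))).exists
  obtain ⟨M, hM⟩ := (isCompact_Icc (a := (0 : ℝ)) (b := t₀)).bddAbove_image hκ.continuousOn
  have hbound : ∀ y, t₀ ≤ y → H y ≤ θ / t₀ * y → ∀ t, 0 ≤ t →
      exp (t * (H y - ε)) * κ t ≤ max M 1 * exp (θ * y) * exp (t * -e) := by
    intro y hty hHy t ht
    rw [mul_assoc, ← exp_add]
    rcases le_or_gt t t₀ with h | h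
    · rw [mul_comm]
      have h1 : κ t ≤ max M 1 := (hM ⟨t, ⟨ht, h⟩, rfl⟩).trans (le_max_left _ _)
      have h2 : t * H y ≤ θ * y := by
        calc t * H y ≤ t * (θ / t₀ * y) := by gcongr
          _ ≤ t₀ * (θ / t₀ * y) := by
            have : 0 ≤ y := by linarith
            gcongr
          _ = θ * y := by field_simp
      gcongr
      nlinarith
    · calc exp (t * (H y - ε)) * κ t
          ≤ exp (t * (H y - ε)) * exp (-(t * (H t - a - e))) := by gcongr; exact hκt₀ t h.le
        _ = exp (t * (H y - H t + a - e) + t * -e) := by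
          rw [← exp_add]
          congr 1
          rw [show ε = 3 * e by rw [he_def]; ring]
          ring
        _ ≤ 1 * exp (θ * y + t * -e) := by
          rw [one_mul, exp_le_exp]
          linarith [ht₀ t y h.le hty]
        _ ≤ _ := by gcongr; exact le_max_right _ _
  have hM0 : 0 < max M 1 := lt_max_of_lt_right one_pos
  filter_upwards [tendsto_log_atTop.eventually_ge_atTop t₀, eventually_gt_atTop 0,
    tendsto_log_atTop.eventually (hH.eventually_le_mul ha (div_pos hθ0 hpos)),
    tendsto_log_atTop.eventually_gt_atTop (log (max M 1 / e) / (1 - θ))] with u hty hu0 hHy hlarge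
  calc ∫ t in (0 : ℝ)..u, exp (t * (H (log u) - ε)) * κ t
      ≤ ∫ t in (0 : ℝ)..u, max M 1 * exp (θ * log u) * exp (t * -e) := by
        refine intervalIntegral.integral_mono_on hu0.le
          (Continuous.intervalIntegrable (by fun_prop) _ _)
          (Continuous.intervalIntegrable (by fun_prop) _ _)
          fun t ht => hbound _ hty hHy t ht.1
    _ = max M 1 * exp (θ * log u) * ((1 - exp (u * -e)) / e) := by
        rw [intervalIntegral.integral_const_mul, integral_exp_mul_const (by linarith)]
        congr 1
        field_simp
        ring
    _ ≤ max M 1 * exp (θ * log u) * (1 / e) := by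
        gcongr
        linarith [exp_pos (u * -e)]
    _ = exp (log (max M 1 / e) + θ * log u) := by
        rw [exp_add, exp_log (by positivity)]
        ring
    _ < exp (log u) := by
        rw [div_lt_iff₀ (by linarith)] at hlarge
        gcongr
        linarith
    _ = u := exp_log hu0

theorem RegularGrowth.lt_laplace {a : ℝ} (ha : a = 0 ∨ a = 1) {H κ : ℝ → ℝ}
    (hH : RegularGrowth a H) (hκ : Continuous κ) (hκ0 : ∀ t, 0 < κ t)
    (hdecay : ∀ ε > 0, ∀ᶠ t in atTop, exp (-(t * (H t - a + ε))) ≤ κ t)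
    {ε η : ℝ} (hε : 0 < ε) (hη : 0 < η) :
    ∀ᶠ u in atTop, u < ∫ t in (0 : ℝ)..(η * u), exp (t * (H (log u) + ε)) * κ t := by
  have ha0 : 0 ≤ a := by rcases ha with rfl | rfl <;> norm_num
  obtain ⟨l, hl1, hl⟩ : ∃ l, 1 ≤ l ∧ 1 < l * (a + ε / 2 - a * log l) := by
    rcases ha with rfl | rfl
    · refine ⟨4 / ε + 1, by linarith [show 0 < 4 / ε by positivity], ?_⟩
      have : (4 / ε + 1) * (0 + ε / 2 - 0 * log (4 / ε + 1)) = 2 + ε / 2 := by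
        field_simp
        ring
      linarith
    · exact ⟨1, le_rfl, by simp; linarith⟩
  have hl0 : 0 < l := by linarith
  have hlogl : 0 ≤ log l := log_nonneg hl1
  set r := a + ε / 2 - a * log l
  have hr : 0 < r := pos_of_mul_pos_right (zero_lt_one.trans hl) hl0.le
  set ζ := ε / (8 * (log l + 1))
  have hζ : 0 < ζ := by positivity
  have hζl : ζ * (log l + 1) = ε / 8 := by simp only [ζ]; field_simp
  obtain ⟨t₀, hgrow, hκt₀, ht₀⟩ := ((hH.2 ζ hζ).and
    ((eventually_forall_ge_atTop.2 (hdecay (ε / 4) (by linarith))).and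
      (eventually_gt_atTop 0))).exists
  have hbound : ∀ y, t₀ ≤ y → 1 ≤ y → 8 * a / ε ≤ y → ∀ t, l * y ≤ t → t ≤ l * y + 1 →
      exp (l * y * r) ≤ exp (t * (H y + ε)) * κ t := by
    intro y hty hy1 hy8 t hlt htl
    have hyt : y ≤ t := le_trans (by nlinarith) hlt
    have hy0 : 0 < y := by linarith
    have ht0 : 0 < t := by linarith
    have hlog : log (t / y) ≤ log l + 1 / y := by
      have h1 : t / y ≤ l * (1 + 1 / y) := by
        rw [div_le_iff₀ hy0]
        have : l * (1 + 1 / y) * y = l * y + l := by field_simp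
        linarith
      have h2 : log (l * (1 + 1 / y)) = log l + log (1 + 1 / y) :=
        log_mul hl0.ne' (by positivity)
      have h3 := log_le_sub_one_of_pos (show 0 < 1 + 1 / y by positivity)
      have h4 := log_le_log (show 0 < t / y by positivity) h1
      linarith
    have hH1 := (hgrow y t hty hyt).2
    have hy' : 1 / y ≤ 1 := by rw [div_le_one hy0]; exact hy1
    have hay : a * (1 / y) ≤ ε / 8 := by
      rw [div_le_iff₀ hε] at hy8
      rw [mul_one_div, div_le_iff₀ hy0]
      linarith
    have hH2 : H t - H y ≤ a * log l + ε / 4 := by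
      calc H t - H y ≤ (a + ζ) * (log l + 1 / y) := hH1.trans (by gcongr)
        _ = a * log l + a * (1 / y) + ζ * (log l + 1 / y) := by ring
        _ ≤ a * log l + ε / 8 + ζ * (log l + 1) := by gcongr
        _ = _ := by rw [hζl]; ring
    calc exp (l * y * r) ≤ exp (t * (H y + ε) + -(t * (H t - a + ε / 4))) := by
          gcongr
          calc l * y * r ≤ t * r := by gcongr
            _ ≤ t * (H y - H t + a + ε * (3 / 4)) := by
              gcongr
              simp only [r]
              linarith
            _ = _ := by ring
      _ ≤ _ := by
          rw [exp_add]
          gcongr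
          exact hκt₀ t (hty.trans hyt)
  have hlin : ∀ᶠ u : ℝ in atTop, l * log u + 1 ≤ η * u := by
    have hc : 0 < η / (2 * l) := by positivity
    filter_upwards [isLittleO_log_id_atTop.bound hc, eventually_ge_atTop (2 / η),
      eventually_ge_atTop 0] with u hu hu1 hu0
    rw [Real.norm_eq_abs, Real.norm_eq_abs, id, abs_of_nonneg hu0] at hu
    rw [div_le_iff₀ hη] at hu1
    have h1 : l * log u ≤ l * (η / (2 * l) * u) := by
      gcongr
      exact (le_abs_self _).trans hu
    have h2 : l * (η / (2 * l) * u) = η / 2 * u := by field_simp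
    linarith
  filter_upwards [tendsto_log_atTop.eventually_ge_atTop t₀,
    tendsto_log_atTop.eventually_ge_atTop 1, tendsto_log_atTop.eventually_ge_atTop (8 * a / ε),
    eventually_gt_atTop 0, hlin] with u h1 h2 h3 hu0 hu
  have hly : 0 ≤ l * log u := by positivity
  have hi : ∀ p q, IntervalIntegrable (fun t => exp (t * (H (log u) + ε)) * κ t) volume p q :=
    fun p q => Continuous.intervalIntegrable (by fun_prop) _ _
  calc u = exp (log u) := (exp_log hu0).symm
    _ < exp (l * log u * r) := by
        gcongr
        nlinarith
    _ = ∫ _t in (l * log u)..(l * log u + 1), exp (l * log u * r) := by simp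
    _ ≤ ∫ t in (l * log u)..(l * log u + 1), exp (t * (H (log u) + ε)) * κ t :=
        intervalIntegral.integral_mono_on (by linarith) intervalIntegrable_const (hi _ _)
          fun t ht => hbound _ h1 h2 h3 t ht.1 ht.2
    _ ≤ _ := intervalIntegral.integral_mono_interval hly (by linarith) hu
        (ae_of_all _ fun t => mul_nonneg (exp_pos _).le (hκ0 t).le) (hi _ _)

theorem laplace_unitKernel_lt {ε : ℝ} (hε : 0 < ε) : ∀ᶠ u in atTop,
    ∫ t in (0 : ℝ)..u, exp (t * (log u + log (log u) - ε)) * unitKernel t < u := by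
  filter_upwards [eventually_ge_atTop 1, tendsto_log_atTop.eventually_gt_atTop 0,
    (tendsto_log_atTop.comp tendsto_log_atTop).eventually_gt_atTop ε] with u hu hlog hloglog
  simp only [Function.comp] at hloglog
  have hu0 : 0 < u := by linarith
  set A := log u + log (log u) - ε with hA
  have hA0 : 0 < A := by linarith
  rw [integral_mul_unitKernel (by fun_prop) hu, integral_exp_mul_const hA0.ne', one_mul,
    div_lt_iff₀ hA0]
  have h1 : exp A ≤ u * log u := by
    rw [← exp_log (mul_pos hu0 hlog), log_mul hu0.ne' hlog.ne']
    gcongr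
    linarith
  have h2 : u * log u ≤ u * A := by gcongr; linarith
  linarith

theorem lt_laplace_unitKernel {ε η : ℝ} (hε : 0 < ε) (hη : 0 < η) : ∀ᶠ u in atTop,
    u < ∫ t in (0 : ℝ)..(η * u), exp (t * (log u + log (log u) + ε)) * unitKernel t := by
  filter_upwards [eventually_gt_atTop 1, tendsto_log_atTop.eventually_gt_atTop 1,
    eventually_ge_atTop (1 / η), tendsto_log_atTop.eventually_ge_atTop (2 * (ε + 1) / ε),
    tendsto_log_atTop.eventually (isLittleO_log_id_atTop.bound (show 0 < ε / 2 by positivity))]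
    with u hu hlog huη hl1 hl2
  have hu0 : 0 < u := by linarith
  have hll : 0 < log (log u) := log_pos hlog
  rw [div_le_iff₀ hη] at huη
  rw [div_le_iff₀ hε] at hl1
  rw [Real.norm_eq_abs, Real.norm_eq_abs, id, abs_of_pos hll, abs_of_pos (by linarith)] at hl2
  set A := log u + log (log u) + ε with hA
  have hA0 : 0 < A := by linarith
  rw [integral_mul_unitKernel (by fun_prop) (by linarith), integral_exp_mul_const hA0.ne', one_mul,
    lt_div_iff₀ hA0]
  have h1 : exp A = u * log u * exp ε := by
    rw [hA, exp_add, exp_add, exp_log hu0, exp_log (by linarith)]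
  have h2 : u * log u * (ε + 1) ≤ exp A := by
    rw [h1]
    gcongr
    exact add_one_le_exp ε
  have h3 : u * (A + 1) ≤ u * (log u * (ε + 1)) := by
    gcongr
    linarith
  nlinarith

theorem dickman_hasDecay {f : ℝ → ℝ} (hf : Continuous f) (hf1 : ∀ u ≤ 1, f u = 1)
    (hfd : ∀ u, 1 < u → HasDerivAt f (-f (u - 1) / u) u) :
    HasDecay 1 (fun u => log u + log (log u)) f := by
  have hfe : ∀ u, 1 < u → u * f u = ∫ t in (0 : ℝ)..u, f (u - t) * unitKernel t :=
    fun u hu => dickman_convolution_eq hf hf1 hfd hu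
  intro ε hε
  exact (exp_le_of_lt_laplace zero_le_one le_rfl (fun t _ => unitKernel_nonneg t)
    (intervalIntegrable_unitKernel 0) hf (dickman_pos hf hf1 hfd) hfe
    regularGrowth_log_add_log_log (fun ε hε η hη => lt_laplace_unitKernel hε hη) hε).and
    (le_exp_of_laplace_lt zero_le_one (fun t _ => unitKernel_nonneg t)
    (intervalIntegrable_unitKernel 0) hf hfe
    regularGrowth_log_add_log_log (fun ε hε => laplace_unitKernel_lt hε) hε)

theorem hasDecay_comp_log_of_convolution_eq {a : ℝ} (ha : a = 0 ∨ a = 1) {H κ f : ℝ → ℝ}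
    (hH : RegularGrowth a H) (hκ : Continuous κ) (hκpos : ∀ t, 0 < κ t)
    (hdecay : HasDecay a H κ) (hf : Continuous f) (hfpos : ∀ u, 0 < f u)
    (hfe : ∀ u, 1 < u → u * f u = ∫ t in (0 : ℝ)..u, f (u - t) * κ t) :
    HasDecay 0 (fun u => H (log u)) f := by
  have ha0 : 0 ≤ a := by rcases ha with rfl | rfl <;> norm_num
  have ha1 : a ≤ 1 := by rcases ha with rfl | rfl <;> norm_num
  intro ε hε
  exact (exp_le_of_lt_laplace le_rfl zero_le_one (fun t _ => (hκpos t).le)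
    (hκ.intervalIntegrable 0) hf hfpos hfe (hH.comp_log ha0)
    (fun ε hε η hη => hH.lt_laplace ha hκ hκpos
      (fun δ hδ => (hdecay δ hδ).mono fun _ h => h.1) hε hη) hε).and
    (le_exp_of_laplace_lt le_rfl (fun t _ => (hκpos t).le)
    (hκ.intervalIntegrable 0) hf hfe (hH.comp_log ha0)
    (fun ε hε => hH.laplace_lt ha0 ha1 hκ
      (fun δ hδ => (hdecay δ hδ).mono fun _ h => h.2) hε) hε)

theorem tendsto_iterate_log_atTop (k : ℕ) : Tendsto (Real.log^[k]) atTop atTop := by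
  induction k with
  | zero => exact tendsto_id
  | succ k ih => exact ih.comp tendsto_log_atTop

theorem exists_hasDecay_iterate {τ : ℕ → ℝ → ℝ} (h0 : Continuous (τ 0))
    (h1 : ∀ j, ∀ u ≤ 1, τ j u = 1)
    (hd : ∀ u, 1 < u → HasDerivAt (τ 0) (-τ 0 (u - 1) / u) u)
    (he : ∀ j, ∀ u, 1 < u → u * τ (j + 1) u = ∫ t in (0 : ℝ)..u, τ (j + 1) (u - t) * τ j t)
    (j : ℕ) : Continuous (τ j) ∧ (∀ u, 0 < τ j u) ∧ ∃ a, (a = 0 ∨ a = 1) ∧ (1 ≤ j → a = 0) ∧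
      RegularGrowth a (fun u => Real.log^[j + 1] u + Real.log^[j + 2] u) ∧
      HasDecay a (fun u => Real.log^[j + 1] u + Real.log^[j + 2] u) (τ j) := by
  induction j with
  | zero =>
    exact ⟨h0, dickman_pos h0 (h1 0) hd, 1, Or.inr rfl, by simp, regularGrowth_log_add_log_log,
      dickman_hasDecay h0 (h1 0) hd⟩
  | succ j ih =>
    obtain ⟨hc, hpos, a, ha, -, hH, hdecay⟩ := ih
    have ha0 : 0 ≤ a := by rcases ha with rfl | rfl <;> norm_num
    have hc' := continuous_of_convolution_eq hc hpos (h1 j) (h1 (j + 1)) (he j)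
    have hpos' := pos_of_convolution_eq hc hpos hc' (h1 (j + 1)) (he j)
    exact ⟨hc', hpos', 0, Or.inl rfl, fun _ => rfl, hH.comp_log ha0,
      hasDecay_comp_log_of_convolution_eq ha hH hc hpos hdecay hc' hpos' (he j)⟩

theorem tendsto_rpow_mul_of_hasDecay {f : ℝ → ℝ} (hf : ∀ u, 0 < f u) {k : ℕ}
    (h : HasDecay 0 (fun u => Real.log^[k + 1] u + Real.log^[k + 2] u) f) :
    Tendsto (fun u : ℝ => f u ^ (1 / u) * (Real.log^[k] u) * (Real.log^[k + 1] u))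
      atTop (𝓝 1) := by
  have hlim : Tendsto (fun u => log (f u) * (1 / u) + (Real.log^[k + 1] u + Real.log^[k + 2] u))
      atTop (𝓝 0) := by
    rw [Metric.tendsto_nhds]
    intro ε hε
    filter_upwards [h (ε / 2) (by linarith), eventually_gt_atTop 0] with u hu hu0
    rw [← le_log_iff_exp_le (hf u), ← log_le_iff_le_exp (hf u)] at hu
    rw [Real.dist_eq, sub_zero, mul_one_div, abs_lt]
    constructor
    · have := (le_div_iff₀' hu0).2 (show u * -(Real.log^[k + 1] u + Real.log^[k + 2] u - 0 + ε / 2)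
        ≤ log (f u) by linarith [hu.1])
      linarith
    · have := (div_le_iff₀' hu0).2 (show log (f u) ≤
        u * -(Real.log^[k + 1] u + Real.log^[k + 2] u - 0 - ε / 2) by linarith [hu.2])
      linarith
  have hexp := (continuous_exp.tendsto 0).comp hlim
  rw [exp_zero] at hexp
  refine hexp.congr' ?_
  filter_upwards [(tendsto_iterate_log_atTop k).eventually_gt_atTop 0,
    (tendsto_iterate_log_atTop (k + 1)).eventually_gt_atTop 0] with u h1 h2
  have e1 : exp (Real.log^[k + 1] u) = Real.log^[k] u := by
    rw [Function.iterate_succ_apply', exp_log h1]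
  have e2 : exp (Real.log^[k + 2] u) = Real.log^[k + 1] u := by
    rw [Function.iterate_succ_apply' Real.log (k + 1), exp_log h2]
  rw [Function.comp_apply, exp_add, exp_add, e1, e2, ← rpow_def_of_pos (hf u), mul_assoc]

theorem statement3
    -- the Dickman function `ρ`
    (ρ : ℝ → ℝ) (hρ_cont : ContinuousOn ρ (Set.Ici 0))
    (hρ_init : ∀ u : ℝ, 0 ≤ u → u ≤ 1 → ρ u = 1)
    (hρ_deriv : ∀ u : ℝ, 1 < u → HasDerivAt ρ (-ρ (u - 1) / u) u)
    -- the iterated functions `σ_j`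
    (σ : ℕ → ℝ → ℝ) (hσ0 : σ 0 = ρ)
    (hσ_init : ∀ j : ℕ, ∀ u : ℝ, 0 ≤ u → u ≤ 1 → σ (j + 1) u = 1)
    (hσ_eq : ∀ j : ℕ, ∀ u : ℝ, 1 < u →
      u * σ (j + 1) u = ∫ t in (0 : ℝ)..u, σ (j + 1) (u - t) * σ j t)
    (k : ℕ) (hk : 1 ≤ k) :
    Filter.Tendsto
      (fun u : ℝ => (σ k u) ^ (1 / u) * (Real.log^[k] u) * (Real.log^[k + 1] u))
      Filter.atTop (nhds 1) := by
  have hnn : ∀ u : ℝ, 0 ≤ u → max u 0 = u := fun u hu => max_eq_left hu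
  set τ : ℕ → ℝ → ℝ := fun j u => σ j (max u 0) with hτ
  have hτσ : ∀ j u, 0 ≤ u → τ j u = σ j u := fun j u hu => by simp only [hτ, hnn u hu]
  have h1 : ∀ j, ∀ u ≤ 1, τ j u = 1 := by
    intro j u hu
    have hle : max u 0 ≤ 1 := max_le hu zero_le_one
    cases j with
    | zero => simp only [hτ, hσ0]; exact hρ_init _ (le_max_right _ _) hle
    | succ j => exact hσ_init j _ (le_max_right _ _) hle
  have h0 : Continuous (τ 0) := by
    simp only [hτ, hσ0]
    exact hρ_cont.comp_continuous (continuous_id.max continuous_const) fun u =>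
      mem_Ici.2 (le_max_right _ _)
  have hd : ∀ u, 1 < u → HasDerivAt (τ 0) (-τ 0 (u - 1) / u) u := by
    intro u hu
    rw [hτσ 0 (u - 1) (by linarith), hσ0]
    refine (hρ_deriv u hu).congr_of_eventuallyEq ?_
    filter_upwards [Ioi_mem_nhds (show 0 < u by linarith)] with v hv
    rw [hτσ 0 v (le_of_lt hv), hσ0]
  have he : ∀ j, ∀ u, 1 < u →
      u * τ (j + 1) u = ∫ t in (0 : ℝ)..u, τ (j + 1) (u - t) * τ j t := by
    intro j u hu
    rw [hτσ _ u (by linarith), hσ_eq j u hu]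
    refine intervalIntegral.integral_congr fun t ht => ?_
    rw [uIcc_of_le (by linarith)] at ht
    simp only [hτσ _ (u - t) (by linarith [ht.2]), hτσ j t ht.1]
  obtain ⟨-, hpos, a, -, hak, -, hdecay⟩ := exists_hasDecay_iterate h0 h1 hd he k
  obtain rfl := hak hk
  refine (tendsto_rpow_mul_of_hasDecay hpos hdecay).congr' ?_
  filter_upwards [eventually_ge_atTop 0] with u hu
  rw [hτσ k u hu]
end

section
/- Fix U > 1. For each real y ≥ 2 set x = y^U and let P(y) be a set of primes ≤ x containing every prime ≤ y. Define χ_y(t) = 1 for 0 ≤ t ≤ 1 and χ_y(t) = (#{p ∈ P(y) : p ≤ y^t})/π(y^t) for 1 < t ≤ U, and let σ_y be the unique solution of u·σ_y(u) = ∫₀^u σ_y(u−t)·χ_y(t) dt for u > 1 with σ_y(u) = 1 for 0 ≤ u ≤ 1. Then sup_{1 ≤ u ≤ U} |Ψ(y^u, P(y))/y^u − σ_y(u)| → 0 as y → ∞. -/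
/-- `primePi x` is the number of primes `p ≤ x`. -/
noncomputable def primePi (x : ℝ) : ℕ := {p : ℕ | p.Prime ∧ (p : ℝ) ≤ x}.ncard

/-- `smoothIn x P` is the number of positive integers `n ≤ x` all of whose prime divisors
lie in `P`. -/
noncomputable def smoothIn (x : ℝ) (P : Set ℕ) : ℕ :=
  {n : ℕ | 0 < n ∧ (n : ℝ) ≤ x ∧ ∀ p : ℕ, p.Prime → p ∣ n → p ∈ P}.ncard

open Complex MeasureTheory Filter Topology Chebyshev
open scoped ArithmeticFunction

/-- The relative error `ψ(e^u) / e^u - 1` in the prime number theorem, on a logarithmic scale. -/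
noncomputable def psiError (u : ℝ) : ℝ := ψ (Real.exp u) * Real.exp (-u) - 1

lemma measurable_psiError : Measurable psiError :=
  ((psi_mono.measurable.comp Real.measurable_exp).mul
    (Real.measurable_exp.comp measurable_neg)).sub_const 1

lemma abs_psiError_le (u : ℝ) : |psiError u| ≤ Real.log 4 + 5 := by
  have h1 := psi_le_const_mul_self (Real.exp_pos u).le
  have h2 := psi_nonneg (Real.exp u)
  have h3 : Real.exp u * Real.exp (-u) = 1 := by rw [← Real.exp_add]; simp
  have h4 := Real.exp_pos (-u)
  have h5 : 0 ≤ Real.log 4 := Real.log_nonneg (by norm_num)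
  unfold psiError
  rw [abs_le]
  constructor
  · have := mul_nonneg h2 h4.le
    linarith
  · have : ψ (Real.exp u) * Real.exp (-u) ≤ (Real.log 4 + 4) * Real.exp u * Real.exp (-u) :=
      mul_le_mul_of_nonneg_right h1 h4.le
    rw [mul_assoc, h3] at this
    linarith

/-- Minus the logarithmic derivative of `ζ`, minus `1 / (s - 1)`, continuous up to `Re s = 1`. -/
noncomputable def zetaAux (s : ℂ) : ℂ :=
  ArithmeticFunction.vonMangoldt.LFunctionResidueClassAux (1 : ZMod 1) s

lemma continuousOn_zetaAux : ContinuousOn zetaAux {s | 1 ≤ s.re} :=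
  ArithmeticFunction.vonMangoldt.continuousOn_LFunctionResidueClassAux (q := 1) 1

lemma LSeries_vonMangoldt_eq_zetaAux {s : ℂ} (hs : 1 < s.re) :
    LSeries (fun n ↦ (Λ n : ℂ)) s = zetaAux s + 1 / (s - 1) := by
  have h := ArithmeticFunction.vonMangoldt.eqOn_LFunctionResidueClassAux
    (q := 1) (a := 1) isUnit_one hs
  have h2 : (fun n : ℕ ↦ ((ArithmeticFunction.vonMangoldt.residueClass (1 : ZMod 1) n : ℝ) : ℂ))
      = fun n ↦ (Λ n : ℂ) := by
    ext n
    simp [ArithmeticFunction.vonMangoldt.residueClass, Subsingleton.elim (n : ZMod 1) 1]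
  rw [zetaAux, h]
  simp only [h2]
  simp

lemma isBigO_sum_vonMangoldt :
    (fun n : ℕ ↦ ∑ k ∈ Finset.Icc 1 n, Λ k) =O[atTop] fun n ↦ (n : ℝ) ^ (1 : ℝ) := by
  refine Asymptotics.IsBigO.of_bound (Real.log 4 + 4) (Eventually.of_forall fun n ↦ ?_)
  have h : ∑ k ∈ Finset.Icc 1 n, Λ k = ψ n := by
    rw [psi, Nat.floor_natCast]; rfl
  rw [h, Real.rpow_one, Real.norm_of_nonneg (psi_nonneg _), Real.norm_of_nonneg n.cast_nonneg]
  exact psi_le_const_mul_self n.cast_nonneg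

lemma integrableOn_psiError_mul_exp {s : ℂ} (hs : 0 < s.re) :
    IntegrableOn (fun u : ℝ ↦ (psiError u : ℂ) * cexp (-s * u)) (Set.Ioi 0) := by
  have h := integrableOn_exp_mul_complex_Ioi (a := -s) (by simpa using hs) 0
  refine h.bdd_mul (c := Real.log 4 + 5) ?_ ?_
  · exact (measurable_ofReal.comp measurable_psiError).aestronglyMeasurable
  · exact Eventually.of_forall fun u ↦ by simpa using abs_psiError_le u

lemma integral_psiError_mul_exp {s : ℂ} (hs : 0 < s.re) :
    ∫ u in Set.Ioi (0 : ℝ), (psiError u : ℂ) * cexp (-s * u) =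
      (zetaAux (1 + s) - 1) / (1 + s) := by
  have hs1 : 1 < (1 + s).re := by simpa using hs
  have hne : (1 + s) ≠ 0 := fun h ↦ by rw [h] at hs1; simp at hs1; linarith
  have hs0 : s ≠ 0 := fun h ↦ by rw [h] at hs; simp at hs
  have h1 := LSeries_eq_mul_integral_of_nonneg (fun n ↦ Λ n) zero_le_one hs1
    isBigO_sum_vonMangoldt (fun n ↦ ArithmeticFunction.vonMangoldt_nonneg)
  rw [LSeries_vonMangoldt_eq_zetaAux hs1] at h1
  have h2 := integral_comp_exp_Ioi
    (fun t : ℝ ↦ (∑ k ∈ Finset.Icc 1 ⌊t⌋₊, (Λ k : ℂ)) * (t : ℂ) ^ (-(1 + s + 1))) 0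
  rw [Real.exp_zero] at h2
  rw [← h2] at h1
  have h3 : ∀ u : ℝ, Real.exp u • ((∑ k ∈ Finset.Icc 1 ⌊Real.exp u⌋₊, (Λ k : ℂ)) *
      ((Real.exp u : ℝ) : ℂ) ^ (-(1 + s + 1))) =
      (psiError u : ℂ) * cexp (-s * u) + cexp (-s * u) := by
    intro u
    have h4 : ∑ k ∈ Finset.Icc 1 ⌊Real.exp u⌋₊, (Λ k : ℂ) = ((ψ (Real.exp u) : ℝ) : ℂ) := by
      rw [psi]; push_cast; rfl
    have h5 : ((Real.exp u : ℝ) : ℂ) ≠ 0 := by exact_mod_cast (Real.exp_pos u).ne'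
    have h6 : ((Real.exp u : ℝ) : ℂ) ^ (-(1 + s + 1)) =
        cexp (-(u : ℂ)) * cexp (-(u : ℂ)) * cexp (-s * u) := by
      rw [cpow_def_of_ne_zero h5, ← ofReal_log (Real.exp_pos u).le, Real.log_exp,
        ← Complex.exp_add, ← Complex.exp_add]
      ring_nf
    have h7 : cexp (u : ℂ) * cexp (-(u : ℂ)) = 1 := by rw [← Complex.exp_add]; simp
    rw [h4, h6, psiError, real_smul]
    push_cast
    linear_combination (ψ (Real.exp u) : ℂ) * cexp (-(u : ℂ)) * cexp (-s * u) * h7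
  simp_rw [h3] at h1
  rw [integral_add (integrableOn_psiError_mul_exp hs)
    (integrableOn_exp_mul_complex_Ioi (a := -s) (by simpa using hs) 0),
    integral_exp_mul_complex_Ioi (a := -s) (by simpa using hs) 0] at h1
  simp at h1
  field_simp at h1 ⊢
  refine mul_left_cancel₀ hs0 ?_
  linear_combination -h1

/-- The (unnormalised) Fejér kernel, up to its value at `0`. -/
noncomputable def fejer (x : ℝ) : ℝ := 2 * (1 - Real.cos x) / x ^ 2

lemma measurable_fejer : Measurable fejer := by
  unfold fejer; fun_prop

lemma fejer_nonneg (x : ℝ) : 0 ≤ fejer x :=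
  div_nonneg (by linarith [Real.cos_le_one x]) (sq_nonneg x)

lemma fejer_le (x : ℝ) : fejer x ≤ 5 * (1 + x ^ 2)⁻¹ := by
  rcases eq_or_ne x 0 with rfl | hx
  · simp [fejer]
  have hx2 : 0 < x ^ 2 := by positivity
  rw [fejer, ← div_eq_mul_inv, div_le_div_iff₀ hx2 (by positivity)]
  have h1 := Real.one_sub_sq_div_two_le_cos (x := x)
  have h2 := Real.neg_one_le_cos x
  nlinarith [mul_nonneg (by linarith : 0 ≤ Real.cos x + 1) hx2.le]

lemma integrable_fejer : Integrable fejer := by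
  refine (integrable_inv_one_add_sq.const_mul 5).mono' measurable_fejer.aestronglyMeasurable ?_
  exact Eventually.of_forall fun x ↦ by
    rw [Real.norm_of_nonneg (fejer_nonneg x)]; exact fejer_le x

lemma integral_one_sub_abs_mul_exp {x : ℝ} (hx : x ≠ 0) :
    ∫ t in (-1 : ℝ)..1, ((1 - |t| : ℝ) : ℂ) * cexp (I * t * x) = fejer x := by
  have hx' : (x : ℂ) ≠ 0 := by exact_mod_cast hx
  have hc : Continuous fun t : ℝ ↦ ((1 - |t| : ℝ) : ℂ) * cexp (I * t * x) := by fun_prop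
  have key : ∀ (c : ℂ) (t : ℝ), HasDerivAt (fun t : ℝ ↦
      (1 - c * t) * cexp (I * t * x) / (I * x) - c * cexp (I * t * x) / x ^ 2)
      ((1 - c * t) * cexp (I * t * x)) t := by
    intro c t
    have h1 : HasDerivAt (fun t : ℝ ↦ cexp (I * t * x)) (cexp (I * t * x) * (I * 1 * x)) t :=
      (((hasDerivAt_id t).ofReal_comp.const_mul I).mul_const (x : ℂ)).cexp
    have h2 : HasDerivAt (fun t : ℝ ↦ 1 - c * (t : ℂ)) (-(c * 1)) t :=
      ((hasDerivAt_id t).ofReal_comp.const_mul c).const_sub 1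
    refine (((h2.mul h1).div_const (I * x)).sub
      ((h1.const_mul c).div_const ((x : ℂ) ^ 2))).congr_deriv ?_
    have hI : (I : ℂ) ≠ 0 := I_ne_zero
    field_simp
    rw [I_sq]
    ring
  rw [← intervalIntegral.integral_add_adjacent_intervals (b := 0)
    (hc.intervalIntegrable _ _) (hc.intervalIntegrable _ _)]
  have e1 : ∫ t in (-1 : ℝ)..0, ((1 - |t| : ℝ) : ℂ) * cexp (I * t * x) =
      ∫ t in (-1 : ℝ)..0, (1 - (-1 : ℂ) * t) * cexp (I * t * x) := by
    refine intervalIntegral.integral_congr fun t ht ↦ ?_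
    rw [Set.uIcc_of_le (by norm_num)] at ht
    simp only [abs_of_nonpos ht.2]; push_cast; ring
  have e2 : ∫ t in (0 : ℝ)..1, ((1 - |t| : ℝ) : ℂ) * cexp (I * t * x) =
      ∫ t in (0 : ℝ)..1, (1 - (1 : ℂ) * t) * cexp (I * t * x) := by
    refine intervalIntegral.integral_congr fun t ht ↦ ?_
    rw [Set.uIcc_of_le (by norm_num)] at ht
    simp only [abs_of_nonneg ht.1]; push_cast; ring
  rw [e1, e2, intervalIntegral.integral_eq_sub_of_hasDerivAt
      (fun t _ ↦ key (-1) t)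
      ((by fun_prop : Continuous _).intervalIntegrable _ _),
    intervalIntegral.integral_eq_sub_of_hasDerivAt
      (fun t _ ↦ key 1 t)
      ((by fun_prop : Continuous _).intervalIntegrable _ _)]
  have hcos : ((Real.cos x : ℝ) : ℂ) = (cexp (x * I) + cexp (-x * I)) / 2 := by
    rw [ofReal_cos, Complex.cos]
  rw [fejer]
  push_cast
  rw [← ofReal_cos, hcos]
  have h1 : I * 1 * (x : ℂ) = x * I := by ring
  have h2 : I * (-1) * (x : ℂ) = -x * I := by ring
  simp only [h1, h2, mul_zero, zero_mul, Complex.exp_zero]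
  field_simp
  ring

lemma fejer_integral_eq_of_laplace {R : ℝ → ℝ} {B : ℝ} {G : ℂ → ℂ} (hR : Measurable R)
    (hB : ∀ u, |R u| ≤ B)
    (hL : ∀ s : ℂ, 0 < s.re → ∫ u in Set.Ioi (0 : ℝ), (R u : ℂ) * cexp (-s * u) = G s)
    {l : ℝ} (hl : 0 < l) (v : ℝ) {ε : ℝ} (hε : 0 < ε) :
    ∫ t in Set.Ioc (-1 : ℝ) 1, ((1 - |t| : ℝ) : ℂ) * cexp (I * t * (l * v)) * G (ε + l * t * I) =
      ∫ u in Set.Ioi (0 : ℝ), (R u : ℂ) * cexp (-ε * u) * fejer (l * (v - u)) := by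
  have h1 : ∀ t : ℝ, ((1 - |t| : ℝ) : ℂ) * cexp (I * t * (l * v)) * G (ε + l * t * I) =
      ∫ u in Set.Ioi (0 : ℝ), ((1 - |t| : ℝ) : ℂ) * cexp (I * t * (l * v)) *
        ((R u : ℂ) * cexp (-(ε + l * t * I) * u)) := by
    intro t
    rw [← hL _ (by simpa using hε), integral_const_mul]
  simp_rw [h1]
  rw [integral_integral_swap]
  · refine integral_congr_ae ?_
    have h2 : ∀ᵐ u : ℝ ∂(volume.restrict (Set.Ioi 0)), u ≠ v :=
      ae_restrict_of_ae (Measure.ae_ne volume v)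
    filter_upwards [h2] with u hu
    have hne : l * (v - u) ≠ 0 := mul_ne_zero hl.ne' (sub_ne_zero.2 (Ne.symm hu))
    rw [← integral_one_sub_abs_mul_exp hne, intervalIntegral.integral_of_le (by norm_num),
      ← integral_const_mul]
    congr 1
    ext t
    have h3 : cexp (-(ε + l * t * I) * u) = cexp (-ε * u) * cexp (-(I * t * (l * u))) := by
      rw [← Complex.exp_add]; ring_nf
    have h4 : cexp (I * t * ((l * (v - u) : ℝ) : ℂ)) =
        cexp (I * t * (l * v)) * cexp (-(I * t * (l * u))) := by
      rw [← Complex.exp_add]; push_cast; ring_nf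
    rw [h3, h4]
    ring
  · have hbd : Integrable (fun p : ℝ × ℝ ↦ (1 : ℝ) * (B * Real.exp (-ε * p.2)))
        ((volume.restrict (Set.Ioc (-1) 1)).prod (volume.restrict (Set.Ioi 0))) :=
      Integrable.mul_prod (f := fun _ : ℝ ↦ (1 : ℝ)) (g := fun u : ℝ ↦ B * Real.exp (-ε * u))
        (integrable_const _) ((integrableOn_exp_mul_Ioi (by linarith) 0).const_mul B)
    refine hbd.mono' ?_ ?_
    · refine Measurable.aestronglyMeasurable ?_
      unfold Function.uncurry
      have h5 : Measurable fun p : ℝ × ℝ ↦ ((R p.2 : ℝ) : ℂ) :=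
        measurable_ofReal.comp (hR.comp measurable_snd)
      fun_prop
    · rw [Measure.prod_restrict]
      refine (ae_restrict_mem (measurableSet_Ioc.prod measurableSet_Ioi)).mono ?_
      rintro ⟨t, u⟩ ⟨ht, -⟩
      simp only [Set.mem_Ioc] at ht
      have h6 : |t| ≤ 1 := abs_le.2 ⟨ht.1.le, ht.2⟩
      have h7 : ‖((1 - |t| : ℝ) : ℂ)‖ ≤ 1 := by
        rw [norm_real, Real.norm_of_nonneg (by linarith)]; linarith [abs_nonneg t]
      have h8 : ‖cexp (I * t * (l * v))‖ = 1 := by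
        rw [Complex.norm_exp]; simp
      have h9 : ‖cexp (-(ε + l * t * I) * u)‖ = Real.exp (-ε * u) := by
        rw [Complex.norm_exp]; simp
      simp only [Function.uncurry, norm_mul, h8, h9, norm_real (R u)]
      have := hB u
      rw [mul_one]
      gcongr
      exact this

lemma integrable_fejer_comp {l : ℝ} (hl : 0 < l) (v : ℝ) :
    Integrable fun u ↦ fejer (l * (v - u)) :=
  (integrable_fejer.comp_mul_left' hl.ne').comp_sub_left v

lemma fejer_integral_eq_of_laplace_boundary {R : ℝ → ℝ} {B : ℝ} {G : ℂ → ℂ} (hR : Measurable R)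
    (hB : ∀ u, |R u| ≤ B) (hG : ContinuousOn G {s | 0 ≤ s.re})
    (hL : ∀ s : ℂ, 0 < s.re → ∫ u in Set.Ioi (0 : ℝ), (R u : ℂ) * cexp (-s * u) = G s)
    {l : ℝ} (hl : 0 < l) (v : ℝ) :
    ∫ t in Set.Ioc (-1 : ℝ) 1, ((1 - |t| : ℝ) : ℂ) * cexp (I * t * (l * v)) * G (l * t * I) =
      ((∫ u in Set.Ioi (0 : ℝ), R u * fejer (l * (v - u)) : ℝ) : ℂ) := by
  have hR' : Measurable fun u : ℝ ↦ ((R u : ℝ) : ℂ) := measurable_ofReal.comp hR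
  have hGc : Continuous fun p : ℝ × ℝ ↦ G (((max p.1 0 : ℝ) : ℂ) + l * p.2 * I) :=
    hG.comp_continuous (by fun_prop) (by simp)
  have hpos : ∀ᶠ ε : ℝ in 𝓝[>] 0, 0 < ε := eventually_mem_nhdsWithin
  have hle : ∀ᶠ ε : ℝ in 𝓝[>] 0, ε ≤ 1 :=
    eventually_nhdsWithin_of_eventually_nhds (Iic_mem_nhds one_pos)
  obtain ⟨C, hC⟩ := ((isCompact_Icc.prod isCompact_Icc).image_of_continuousOn
    (s := Set.Icc (0 : ℝ) 1 ×ˢ Set.Icc (-1 : ℝ) 1) hGc.continuousOn).isBounded.exists_norm_le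
  have hC' : ∀ ε ∈ Set.Icc (0 : ℝ) 1, ∀ t ∈ Set.Icc (-1 : ℝ) 1, ‖G (ε + l * t * I)‖ ≤ C := by
    intro ε hε t ht
    have := hC _ (Set.mem_image_of_mem _ (Set.mk_mem_prod hε ht))
    simpa [max_eq_left hε.1] using this
  have hnorm : ∀ t : ℝ, ‖cexp (I * t * (l * v))‖ = 1 := fun t ↦ by
    rw [Complex.norm_exp]; simp
  have hleft : Tendsto (fun ε : ℝ ↦ ∫ t in Set.Ioc (-1 : ℝ) 1,
      ((1 - |t| : ℝ) : ℂ) * cexp (I * t * (l * v)) * G (ε + l * t * I)) (𝓝[>] 0)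
      (𝓝 (∫ t in Set.Ioc (-1 : ℝ) 1,
        ((1 - |t| : ℝ) : ℂ) * cexp (I * t * (l * v)) * G (l * t * I))) := by
    refine tendsto_integral_filter_of_dominated_convergence (fun _ ↦ C) ?_ ?_
      (integrable_const C) ?_
    · filter_upwards [hpos] with ε hε
      have h1 : Continuous fun t : ℝ ↦ G (ε + l * t * I) := by
        have := hGc.comp (Continuous.prodMk_right (Y := ℝ) ε)
        simpa [Function.comp_def, max_eq_left hε.le] using this
      exact ((by fun_prop : Continuous fun t : ℝ ↦ ((1 - |t| : ℝ) : ℂ) *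
        cexp (I * t * (l * v))).mul h1).aestronglyMeasurable
    · filter_upwards [hpos, hle] with ε hε hε1
      refine (ae_restrict_mem measurableSet_Ioc).mono fun t ht ↦ ?_
      have h6 : |t| ≤ 1 := abs_le.2 ⟨ht.1.le, ht.2⟩
      have h7 : ‖((1 - |t| : ℝ) : ℂ)‖ ≤ 1 := by
        rw [norm_real, Real.norm_of_nonneg (by linarith)]; linarith [abs_nonneg t]
      have h8 := hC' ε ⟨hε.le, hε1⟩ t ⟨ht.1.le, ht.2⟩
      rw [norm_mul, norm_mul, hnorm, mul_one]
      calc _ ≤ 1 * C := mul_le_mul h7 h8 (norm_nonneg _) zero_le_one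
        _ = C := one_mul C
    · refine Eventually.of_forall fun t ↦ Tendsto.const_mul _ ?_
      have h1 : Tendsto (fun ε : ℝ ↦ G (((max ε 0 : ℝ) : ℂ) + l * t * I)) (𝓝 0)
          (𝓝 (G (((max 0 0 : ℝ) : ℂ) + l * t * I))) :=
        (hGc.comp (Continuous.prodMk_left (X := ℝ) t)).tendsto 0
      simp only [max_self, ofReal_zero, zero_add] at h1
      refine (h1.mono_left nhdsWithin_le_nhds).congr' ?_
      filter_upwards [hpos] with ε hε
      rw [max_eq_left hε.le]
  have hright : Tendsto (fun ε : ℝ ↦ ∫ u in Set.Ioi (0 : ℝ),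
      (R u : ℂ) * cexp (-ε * u) * fejer (l * (v - u))) (𝓝[>] 0)
      (𝓝 (∫ u in Set.Ioi (0 : ℝ), (R u : ℂ) * fejer (l * (v - u)))) := by
    refine tendsto_integral_filter_of_dominated_convergence
      (fun u ↦ B * fejer (l * (v - u))) ?_ ?_
      ((integrable_fejer_comp hl v).const_mul B).integrableOn ?_
    · refine Eventually.of_forall fun ε ↦ Measurable.aestronglyMeasurable ?_
      have : Measurable fun u : ℝ ↦ ((fejer (l * (v - u)) : ℝ) : ℂ) :=
        measurable_ofReal.comp (measurable_fejer.comp (by fun_prop))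
      fun_prop
    · filter_upwards [hpos] with ε hε
      refine (ae_restrict_mem measurableSet_Ioi).mono fun u hu ↦ ?_
      have hu : 0 < u := hu
      have h1 : ‖cexp (-ε * u)‖ ≤ 1 := by
        rw [Complex.norm_exp]
        simp only [Real.exp_le_one_iff]
        have : 0 < ε * u := by positivity
        simp only [mul_re, neg_re, ofReal_re, neg_im, ofReal_im, mul_zero, sub_zero]
        linarith
      rw [norm_mul, norm_mul, norm_real, norm_real, Real.norm_of_nonneg (fejer_nonneg _)]
      refine mul_le_mul_of_nonneg_right ?_ (fejer_nonneg _)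
      calc _ ≤ B * 1 := mul_le_mul (hB u) h1 (norm_nonneg _) ((abs_nonneg _).trans (hB u))
        _ = B := mul_one B
    · refine Eventually.of_forall fun u ↦ Tendsto.mul_const _ ?_
      have h1 : Tendsto (fun ε : ℝ ↦ (R u : ℂ) * cexp (-ε * u)) (𝓝 0)
          (𝓝 ((R u : ℂ) * cexp (-(0 : ℝ) * u))) :=
        Continuous.tendsto (by fun_prop) 0
      simp only [ofReal_zero, neg_zero, zero_mul, Complex.exp_zero, mul_one] at h1
      exact h1.mono_left nhdsWithin_le_nhds
  have heq : ∀ᶠ ε : ℝ in 𝓝[>] 0, (∫ t in Set.Ioc (-1 : ℝ) 1,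
      ((1 - |t| : ℝ) : ℂ) * cexp (I * t * (l * v)) * G (ε + l * t * I)) =
      ∫ u in Set.Ioi (0 : ℝ), (R u : ℂ) * cexp (-ε * u) * fejer (l * (v - u)) := by
    filter_upwards [hpos] with ε hε using fejer_integral_eq_of_laplace hR hB hL hl v hε
  rw [tendsto_nhds_unique (hleft.congr' heq) hright, ← integral_complex_ofReal]
  simp

/-- A bounded function whose Laplace transform extends continuously to the imaginary axis has
vanishing Fejér means at infinity. -/
lemma tendsto_fejer_integral_of_laplace {R : ℝ → ℝ} {B : ℝ} {G : ℂ → ℂ} (hR : Measurable R)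
    (hB : ∀ u, |R u| ≤ B) (hG : ContinuousOn G {s | 0 ≤ s.re})
    (hL : ∀ s : ℂ, 0 < s.re → ∫ u in Set.Ioi (0 : ℝ), (R u : ℂ) * cexp (-s * u) = G s)
    {l : ℝ} (hl : 0 < l) :
    Tendsto (fun v ↦ ∫ u in Set.Ioi (0 : ℝ), R u * fejer (l * (v - u))) atTop (𝓝 0) := by
  have h1 := Real.tendsto_integral_exp_smul_cocompact
    ((Set.Ioc (-1 : ℝ) 1).indicator fun t ↦ ((1 - |t| : ℝ) : ℂ) * G (l * t * I))
  have h2 : Tendsto (fun v : ℝ ↦ -(l * v / (2 * Real.pi))) atTop (cocompact ℝ) := by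
    refine Tendsto.mono_right ?_ atBot_le_cocompact
    exact tendsto_neg_atTop_atBot.comp
      ((tendsto_id.const_mul_atTop hl).atTop_div_const (by positivity))
  have h3 := h1.comp h2
  rw [← tendsto_ofReal_iff, ofReal_zero]
  refine h3.congr fun v ↦ ?_
  rw [← fejer_integral_eq_of_laplace_boundary hR hB hG hL hl v, Function.comp_apply,
    ← integral_indicator measurableSet_Ioc]
  congr 1
  ext t
  by_cases ht : t ∈ Set.Ioc (-1 : ℝ) 1
  · simp only [Set.indicator_of_mem ht, Circle.smul_def, Real.fourierChar_apply, smul_eq_mul]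
    have : ((2 * Real.pi * -(t * -(l * v / (2 * Real.pi))) : ℝ) : ℂ) * I =
        I * t * (l * v) := by
      have : (Real.pi : ℂ) ≠ 0 := by exact_mod_cast Real.pi_ne_zero
      push_cast
      field_simp
    rw [this]
    ring
  · simp [Set.indicator_of_notMem ht]

lemma integral_fejer_pos : 0 < ∫ x, fejer x := by
  rw [integral_pos_iff_support_of_nonneg fejer_nonneg integrable_fejer]
  refine lt_of_lt_of_le (b := volume (Set.Ioo (0 : ℝ) 1)) (by simp) (measure_mono fun x hx ↦ ?_)
  have h1 : Real.cos x < 1 := by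
    rw [← Real.cos_zero]
    exact Real.cos_lt_cos_of_nonneg_of_le_pi le_rfl (by linarith [hx.2, Real.pi_gt_three]) hx.1
  exact (div_pos (by linarith) (pow_pos hx.1 2)).ne'

lemma exists_fejer_tail_le {e : ℝ} (he : 0 < e) :
    ∃ X : ℝ, 0 < X ∧ ∫ x, (Set.Icc (-X) X)ᶜ.indicator fejer x ≤ e := by
  have h : Tendsto (fun X : ℝ ↦ ∫ x, (Set.Icc (-X) X)ᶜ.indicator fejer x) atTop
      (𝓝 (∫ _ : ℝ, (0 : ℝ))) := by
    refine tendsto_integral_filter_of_dominated_convergence fejer ?_ ?_ integrable_fejer ?_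
    · exact Eventually.of_forall fun X ↦
        (measurable_fejer.indicator measurableSet_Icc.compl).aestronglyMeasurable
    · exact Eventually.of_forall fun X ↦ Eventually.of_forall fun x ↦ by
        rw [Real.norm_of_nonneg (Set.indicator_nonneg (fun x _ ↦ fejer_nonneg x) x)]
        exact Set.indicator_le_self' (fun x _ ↦ fejer_nonneg x) x
    · refine Eventually.of_forall fun x ↦ tendsto_const_nhds.congr' ?_
      filter_upwards [eventually_ge_atTop |x|] with X hX
      rw [Set.indicator_of_notMem]
      simpa using abs_le.1 hX
  rw [integral_zero] at h
  obtain ⟨X, h1, h2⟩ := ((h.eventually (ge_mem_nhds he)).and (eventually_gt_atTop 0)).exists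
  exact ⟨X, h2, h1⟩

/-- If all Fejér means of a bounded function tend to zero, the function cannot stay above a fixed
positive level on intervals of fixed length arbitrarily far out. -/
lemma eventually_exists_lt_of_fejer {r : ℝ → ℝ} {B : ℝ} (hr : Measurable r) (hB : ∀ u, |r u| ≤ B)
    (hlim : ∀ l : ℝ, 0 < l → Tendsto (fun v ↦ ∫ u, r u * fejer (l * (v - u))) atTop (𝓝 0))
    {η h : ℝ} (hη : 0 < η) (hh : 0 < h) :
    ∀ᶠ v in atTop, ∃ u ∈ Set.Icc (v - h) (v + h), r u < η := by
  have hB0 : 0 ≤ B := (abs_nonneg _).trans (hB 0)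
  set c := ∫ x, fejer x with hc
  have hcpos : 0 < c := integral_fejer_pos
  obtain ⟨X, hX, hT⟩ := exists_fejer_tail_le (e := η * c / (2 * (η + B))) (by positivity)
  set l := X / h with hl
  have hlpos : 0 < l := by positivity
  have hlow : 0 < η * c / (4 * l) := by positivity
  filter_upwards [(hlim l hlpos).eventually (gt_mem_nhds hlow)] with v hv
  by_contra! hcon
  set tail : ℝ → ℝ := (Set.Icc (-X) X)ᶜ.indicator fejer with htail
  have htail_int : Integrable tail := integrable_fejer.indicator measurableSet_Icc.compl
  have htail_comp : Integrable fun u ↦ tail (l * (v - u)) :=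
    (htail_int.comp_mul_left' hlpos.ne').comp_sub_left v
  have hsub : ∀ g : ℝ → ℝ, ∫ u, g (l * (v - u)) = l⁻¹ * ∫ x, g x := by
    intro g
    rw [integral_sub_left_eq_self (fun u ↦ g (l * u)) volume v, Measure.integral_comp_mul_left,
      abs_of_pos (by positivity), smul_eq_mul]
  have hpt : ∀ u, η * fejer (l * (v - u)) - (η + B) * tail (l * (v - u)) ≤
      r u * fejer (l * (v - u)) := by
    intro u
    have hf := fejer_nonneg (l * (v - u))
    by_cases hu : u ∈ Set.Icc (v - h) (v + h)
    · have h1 := hcon u hu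
      have h2 : 0 ≤ tail (l * (v - u)) := Set.indicator_nonneg (fun x _ ↦ fejer_nonneg x) _
      nlinarith [mul_le_mul_of_nonneg_right h1 hf, mul_nonneg (by positivity : 0 ≤ η + B) h2]
    · have h1 : l * (v - u) ∈ (Set.Icc (-X) X)ᶜ := by
        intro hmem
        apply hu
        have hXl : X = l * h := by rw [hl]; field_simp
        rw [hXl] at hmem
        have h3 : -h ≤ v - u := by
          refine le_of_mul_le_mul_left ?_ hlpos
          linarith [hmem.1]
        have h4 : v - u ≤ h := le_of_mul_le_mul_left hmem.2 hlpos
        exact ⟨by linarith, by linarith⟩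
      rw [htail, Set.indicator_of_mem h1]
      nlinarith [mul_le_mul_of_nonneg_right (neg_le_of_abs_le (hB u)) hf]
  have hf_int := integrable_fejer_comp hlpos v
  have hrint : Integrable fun u ↦ r u * fejer (l * (v - u)) :=
    hf_int.bdd_mul hr.aestronglyMeasurable (Eventually.of_forall hB)
  have hge := integral_mono ((hf_int.const_mul η).sub (htail_comp.const_mul (η + B))) hrint hpt
  simp only [Pi.sub_apply] at hge
  rw [integral_sub (hf_int.const_mul η) (htail_comp.const_mul (η + B)), integral_const_mul,
    integral_const_mul, hsub fejer, hsub tail, ← hc] at hge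
  have h5 : (η + B) * ∫ x, tail x ≤ η * c / 2 := by
    calc _ ≤ (η + B) * (η * c / (2 * (η + B))) := by gcongr
      _ = _ := by field_simp
  have h6 : η * c / (4 * l) = l⁻¹ * (η * c / 4) := by field_simp
  have h7 : η * (l⁻¹ * c) - (η + B) * (l⁻¹ * ∫ x, tail x) =
      l⁻¹ * (η * c - (η + B) * ∫ x, tail x) := by ring
  rw [h7] at hge
  have h8 : l⁻¹ * (η * c / 2) ≤ l⁻¹ * (η * c - (η + B) * ∫ x, tail x) := by
    gcongr; linarith
  have h9 : 0 < l⁻¹ * (η * c / 4) := by positivity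
  linarith

/-- The **prime number theorem** on a logarithmic scale. -/
lemma tendsto_psiError : Tendsto psiError atTop (𝓝 0) := by
  set r : ℝ → ℝ := (Set.Ioi 0).indicator psiError with hrdef
  have hr : Measurable r := measurable_psiError.indicator measurableSet_Ioi
  have hrB : ∀ u, |r u| ≤ Real.log 4 + 5 := fun u ↦
    (by simpa using norm_indicator_le_norm_self (s := Set.Ioi (0 : ℝ)) psiError u :
      |r u| ≤ |psiError u|).trans (abs_psiError_le u)
  have hG : ContinuousOn (fun s : ℂ ↦ (zetaAux (1 + s) - 1) / (1 + s)) {s | 0 ≤ s.re} := by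
    refine ContinuousOn.div ((continuousOn_zetaAux.comp (by fun_prop) ?_).sub
      continuousOn_const) (by fun_prop) ?_
    · intro s hs
      simpa using hs
    · intro s hs h
      have : (1 + s).re = 0 := by rw [h]; simp
      simp at this hs
      linarith
  have hlim : ∀ l : ℝ, 0 < l →
      Tendsto (fun v ↦ ∫ u, r u * fejer (l * (v - u))) atTop (𝓝 0) := by
    intro l hl
    refine (tendsto_fejer_integral_of_laplace measurable_psiError abs_psiError_le hG
      (fun s hs ↦ integral_psiError_mul_exp hs) hl).congr fun v ↦ ?_
    rw [← integral_indicator measurableSet_Ioi]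
    congr 1
    ext u
    by_cases hu : u ∈ Set.Ioi (0 : ℝ) <;> simp [r, hu]
  have hlim' : ∀ l : ℝ, 0 < l →
      Tendsto (fun v ↦ ∫ u, -r u * fejer (l * (v - u))) atTop (𝓝 0) := by
    intro l hl
    simpa [neg_mul, integral_neg] using (hlim l hl).neg
  have hpe : ∀ a b : ℝ, a ≤ b → (psiError a + 1) * (1 - (b - a)) ≤ psiError b + 1 := by
    intro a b hab
    have h1 : ψ (Real.exp a) ≤ ψ (Real.exp b) := psi_mono (Real.exp_le_exp.2 hab)
    have h2 : 1 - (b - a) ≤ Real.exp (-(b - a)) := by linarith [Real.add_one_le_exp (-(b - a))]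
    have h3 : Real.exp (-b) = Real.exp (-a) * Real.exp (-(b - a)) := by
      rw [← Real.exp_add]; ring_nf
    have h4 : 0 ≤ ψ (Real.exp a) * Real.exp (-a) := mul_nonneg (psi_nonneg _) (Real.exp_pos _).le
    simp only [psiError, sub_add_cancel]
    calc _ ≤ ψ (Real.exp a) * Real.exp (-a) * Real.exp (-(b - a)) := by gcongr
      _ = ψ (Real.exp a) * Real.exp (-b) := by rw [h3]; ring
      _ ≤ _ := by gcongr
  have hpos : ∀ u, 0 ≤ psiError u + 1 := fun u ↦ by
    simp only [psiError, sub_add_cancel]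
    exact mul_nonneg (psi_nonneg _) (Real.exp_pos _).le
  rw [Metric.tendsto_nhds]
  intro ε hε
  set η := ε / 2 with hη
  have hηpos : 0 < η := by positivity
  set h := η / (2 * (1 + 2 * η)) with hh
  have hhpos : 0 < h := by positivity
  have hheq : 2 * h * (1 + 2 * η) = η := by rw [hh]; field_simp
  have hhη : 2 * h ≤ η := by nlinarith
  have e1 := (tendsto_atTop_add_const_right atTop h tendsto_id).eventually
    (eventually_exists_lt_of_fejer hr hrB hlim hηpos hhpos)
  have e2 := (tendsto_atTop_add_const_right atTop (-h) tendsto_id).eventually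
    (eventually_exists_lt_of_fejer (r := fun u ↦ -r u) hr.neg (by simpa using hrB) hlim'
      hηpos hhpos)
  filter_upwards [e1, e2, eventually_gt_atTop (2 * h)] with v h1 h2 hv
  simp only [id] at h1 h2
  obtain ⟨a, ha, hra⟩ := h1
  obtain ⟨b, hb, hrb⟩ := h2
  have ha0 : (0 : ℝ) < a := by linarith [ha.1]
  have hb0 : (0 : ℝ) < b := by linarith [hb.1]
  rw [hrdef, Set.indicator_of_mem (Set.mem_Ioi.2 ha0)] at hra
  simp only [hrdef, Set.indicator_of_mem (Set.mem_Ioi.2 hb0)] at hrb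
  have p1 := hpe v a (by linarith [ha.1])
  have p2 := hpe b v (by linarith [hb.2])
  rw [Real.dist_0_eq_abs, abs_lt]
  constructor
  · by_contra! hcon
    have q : (psiError b + 1) * (1 - 2 * h) ≤ (psiError b + 1) * (1 - (v - b)) := by
      gcongr
      · exact hpos b
      · linarith [hb.1]
    have q2 : 2 * h ≤ 1 := by nlinarith
    nlinarith
  · by_contra! hcon
    have q : (psiError v + 1) * (1 - 2 * h) ≤ (psiError v + 1) * (1 - (a - v)) := by
      gcongr
      · exact hpos v
      · linarith [ha.2]
    have q2 : 2 * h < 1 := by nlinarith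
    nlinarith

/-- The **prime number theorem** for Chebyshev's function `ψ`. -/
theorem tendsto_psi_div_self : Tendsto (fun x ↦ ψ x / x) atTop (𝓝 1) := by
  have h := (tendsto_psiError.comp Real.tendsto_log_atTop).add_const 1
  rw [zero_add] at h
  refine h.congr' ?_
  filter_upwards [eventually_gt_atTop 0] with x hx
  simp [psiError, Real.exp_log hx, Real.exp_neg, div_eq_mul_inv]

open scoped Classical in
/-- The indicator function of the positive integers all of whose prime divisors lie in `P`. -/
noncomputable def smoothFun (P : Set ℕ) : ArithmeticFunction ℝ :=
  ⟨fun n ↦ if 0 < n ∧ ∀ p : ℕ, p.Prime → p ∣ n → p ∈ P then 1 else 0, by simp⟩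

open scoped Classical in
lemma smoothFun_apply (P : Set ℕ) (n : ℕ) :
    smoothFun P n = if 0 < n ∧ ∀ p : ℕ, p.Prime → p ∣ n → p ∈ P then 1 else 0 := rfl

lemma smoothFun_nonneg (P : Set ℕ) (n : ℕ) : 0 ≤ smoothFun P n := by
  rw [smoothFun_apply]; split_ifs <;> norm_num

lemma smoothFun_le_one (P : Set ℕ) (n : ℕ) : smoothFun P n ≤ 1 := by
  rw [smoothFun_apply]; split_ifs <;> norm_num

lemma smoothFun_mul (P : Set ℕ) (m n : ℕ) :
    smoothFun P (m * n) = smoothFun P m * smoothFun P n := by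
  simp only [smoothFun_apply, ← ite_and, mul_ite, mul_one, mul_zero]
  congr 1
  apply propext
  constructor
  · rintro ⟨h0, h⟩
    exact ⟨⟨Nat.pos_of_mul_pos_left h0, fun p hp hd ↦ h p hp (hd.mul_left m)⟩,
      ⟨Nat.pos_of_mul_pos_right h0, fun p hp hd ↦ h p hp (hd.mul_right n)⟩⟩
  · rintro ⟨⟨h1, h2⟩, h3, h4⟩
    exact ⟨Nat.mul_pos h3 h1, fun p hp hd ↦ (hp.dvd_mul.1 hd).elim (h4 p hp) (h2 p hp)⟩

open scoped Classical in
lemma smoothFun_prime (P : Set ℕ) {p : ℕ} (hp : p.Prime) :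
    smoothFun P p = if p ∈ P then 1 else 0 := by
  rw [smoothFun_apply]
  congr 1
  apply propext
  constructor
  · exact fun h ↦ h.2 p hp dvd_rfl
  · exact fun h ↦ ⟨hp.pos, fun q hq hd ↦ ((Nat.prime_dvd_prime_iff_eq hq hp).1 hd) ▸ h⟩

lemma smoothIn_eq_sum {x : ℝ} (hx : 0 ≤ x) (P : Set ℕ) :
    (smoothIn x P : ℝ) = ∑ n ∈ Finset.Ioc 0 ⌊x⌋₊, smoothFun P n := by
  classical
  have h : {n : ℕ | 0 < n ∧ (n : ℝ) ≤ x ∧ ∀ p : ℕ, p.Prime → p ∣ n → p ∈ P} =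
      ↑((Finset.Ioc 0 ⌊x⌋₊).filter fun n ↦ 0 < n ∧ ∀ p : ℕ, p.Prime → p ∣ n → p ∈ P) := by
    ext n
    simp only [Set.mem_ofPred_eq, Finset.coe_filter, Finset.mem_Ioc, Nat.le_floor_iff hx]
    tauto
  rw [smoothIn, h, Set.ncard_coe_finset, Finset.card_filter]
  push_cast
  rfl

lemma smoothIn_le {x : ℝ} (hx : 0 ≤ x) (P : Set ℕ) : (smoothIn x P : ℝ) ≤ x := by
  rw [smoothIn_eq_sum hx]
  calc _ ≤ ∑ n ∈ Finset.Ioc 0 ⌊x⌋₊, (1 : ℝ) := Finset.sum_le_sum fun n _ ↦ smoothFun_le_one P n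
    _ = ⌊x⌋₊ := by simp
    _ ≤ x := Nat.floor_le hx

lemma smoothFun_eq_one {P : Set ℕ} {y : ℝ} (hPy : ∀ p : ℕ, p.Prime → (p : ℝ) ≤ y → p ∈ P)
    {n : ℕ} (hn : 0 < n) (hny : (n : ℝ) ≤ y) : smoothFun P n = 1 := by
  rw [smoothFun_apply, if_pos]
  exact ⟨hn, fun p hp hd ↦ hPy p hp (le_trans (by exact_mod_cast Nat.le_of_dvd hn hd) hny)⟩

lemma abs_smoothIn_sub_le {P : Set ℕ} {x y : ℝ}
    (hPy : ∀ p : ℕ, p.Prime → (p : ℝ) ≤ y → p ∈ P) (hx : 0 ≤ x) (hxy : x ≤ y) :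
    |(smoothIn x P : ℝ) - x| ≤ 1 := by
  have h : (smoothIn x P : ℝ) = ⌊x⌋₊ := by
    rw [smoothIn_eq_sum hx, Finset.sum_congr rfl (g := fun _ ↦ (1 : ℝ))]
    · simp
    · intro n hn
      rw [Finset.mem_Ioc, Nat.le_floor_iff hx] at hn
      exact smoothFun_eq_one hPy hn.1 (hn.2.trans hxy)
  rw [h, abs_le]
  constructor <;> linarith [Nat.floor_le hx, Nat.lt_floor_add_one x]

lemma sum_smoothFun_mul_log (P : Set ℕ) {x : ℝ} (hx : 0 ≤ x) :
    ∑ n ∈ Finset.Ioc 0 ⌊x⌋₊, smoothFun P n * Real.log n =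
      ∑ d ∈ Finset.Ioc 0 ⌊x⌋₊, smoothFun P d * Λ d * smoothIn (x / d) P := by
  have h := ArithmeticFunction.sum_Ioc_mul_eq_sum_sum
    (ArithmeticFunction.pmul (smoothFun P) Λ) (smoothFun P) ⌊x⌋₊
  have h1 : ∀ n ∈ Finset.Ioc 0 ⌊x⌋₊, (ArithmeticFunction.pmul (smoothFun P) Λ * smoothFun P) n =
      smoothFun P n * Real.log n := by
    intro n hn
    rw [ArithmeticFunction.mul_apply, ← ArithmeticFunction.vonMangoldt_sum, Finset.mul_sum,
      Nat.sum_divisorsAntidiagonal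
        (f := fun a b ↦ ArithmeticFunction.pmul (smoothFun P) Λ a * smoothFun P b)]
    refine Finset.sum_congr rfl fun d hd ↦ ?_
    have h2 : smoothFun P n = smoothFun P d * smoothFun P (n / d) := by
      rw [← smoothFun_mul, Nat.mul_div_cancel' (Nat.dvd_of_mem_divisors hd)]
    rw [h2, ArithmeticFunction.pmul_apply]
    ring
  rw [← Finset.sum_congr rfl h1, h]
  refine Finset.sum_congr rfl fun d _ ↦ ?_
  rw [ArithmeticFunction.pmul_apply, smoothIn_eq_sum (by positivity), Nat.floor_div_natCast]

lemma sum_log_div_le {x : ℝ} (hx : 1 ≤ x) :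
    ∑ n ∈ Finset.Ioc 0 ⌊x⌋₊, (Real.log x - Real.log n) ≤ 2 * x := by
  set N := ⌊x⌋₊ with hN
  have hN1 : 1 ≤ N := (Nat.one_le_floor_iff x).2 hx
  have hN0 : (0 : ℝ) < N := by exact_mod_cast hN1
  have hNx : (N : ℝ) ≤ x := Nat.floor_le (by linarith)
  have hxN : x < N + 1 := Nat.lt_floor_add_one x
  have h1 : ∑ n ∈ Finset.Ioc 0 N, Real.log n = Real.log N.factorial := by
    clear * -
    induction N with
    | zero => simp
    | succ n ih =>
      rw [Finset.sum_Ioc_succ_top n.zero_le, ih, Nat.factorial_succ, Nat.cast_mul,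
        Real.log_mul (by positivity) (by positivity), add_comm]
  have h2 : (N : ℝ) * Real.log N - N ≤ Real.log N.factorial := by
    have h3 : (N : ℝ) ^ N / N.factorial ≤ Real.exp N := Real.pow_div_factorial_le_exp N hN0.le N
    have h4 : Real.log ((N : ℝ) ^ N / N.factorial) ≤ N :=
      (Real.log_le_log (by positivity) h3).trans_eq (Real.log_exp _)
    rw [Real.log_div (by positivity) (by positivity), Real.log_pow] at h4
    linarith
  have h5 : Real.log x - Real.log N ≤ x / N - 1 := by
    rw [← Real.log_div (by linarith) hN0.ne']
    exact Real.log_le_sub_one_of_pos (by positivity)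
  have h6 : (N : ℝ) * (Real.log x - Real.log N) ≤ x - N := by
    calc _ ≤ (N : ℝ) * (x / N - 1) := by gcongr
      _ = _ := by field_simp
  rw [Finset.sum_sub_distrib, h1, Finset.sum_const, Nat.card_Ioc, nsmul_eq_mul]
  simp only [tsub_zero]
  linarith

/-- The approximate functional equation for the counting function of integers composed of primes
from `P`. -/
lemma abs_smoothIn_mul_log_sub_le (P : Set ℕ) {x : ℝ} (hx : 1 ≤ x) :
    |(smoothIn x P : ℝ) * Real.log x -
      ∑ d ∈ Finset.Ioc 0 ⌊x⌋₊, smoothFun P d * Λ d * smoothIn (x / d) P| ≤ 2 * x := by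
  have hx0 : 0 ≤ x := by linarith
  have hnn : ∀ n ∈ Finset.Ioc 0 ⌊x⌋₊, 0 ≤ Real.log x - Real.log n := by
    intro n hn
    rw [Finset.mem_Ioc, Nat.le_floor_iff hx0] at hn
    have : (0 : ℝ) < n := by exact_mod_cast hn.1
    linarith [Real.log_le_log this hn.2]
  rw [← sum_smoothFun_mul_log P hx0, smoothIn_eq_sum hx0, Finset.sum_mul,
    ← Finset.sum_sub_distrib, abs_of_nonneg]
  · refine le_trans (Finset.sum_le_sum fun n hn ↦ ?_) (sum_log_div_le hx)
    rw [← mul_sub]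
    exact mul_le_of_le_one_left (hnn n hn) (smoothFun_le_one P n)
  · refine Finset.sum_nonneg fun n hn ↦ ?_
    rw [← mul_sub]
    exact mul_nonneg (smoothFun_nonneg P n) (hnn n hn)

/-- The part of Chebyshev's function `ψ` supported on integers composed of primes from `P`. -/
noncomputable def psiIn (P : Set ℕ) (x : ℝ) : ℝ :=
  ∑ n ∈ Finset.Ioc 0 ⌊x⌋₊, smoothFun P n * Λ n

/-- The proportion of the primes up to `x` that lie in `P`. -/
noncomputable def primeRatio (P : Set ℕ) (x : ℝ) : ℝ :=
  ({p : ℕ | p ∈ P ∧ (p : ℝ) ≤ x}.ncard : ℝ) / (primePi x : ℝ)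

lemma psiIn_nonneg (P : Set ℕ) (x : ℝ) : 0 ≤ psiIn P x :=
  Finset.sum_nonneg fun n _ ↦
    mul_nonneg (smoothFun_nonneg P n) ArithmeticFunction.vonMangoldt_nonneg

lemma psiIn_le_psi (P : Set ℕ) (x : ℝ) : psiIn P x ≤ ψ x :=
  Finset.sum_le_sum fun n _ ↦
    mul_le_of_le_one_left ArithmeticFunction.vonMangoldt_nonneg (smoothFun_le_one P n)

lemma psiIn_le (P : Set ℕ) {x : ℝ} (hx : 0 ≤ x) : psiIn P x ≤ (Real.log 4 + 4) * x :=
  (psiIn_le_psi P x).trans (psi_le_const_mul_self hx)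

lemma ncard_eq_sum_smoothFun {P : Set ℕ} (hP : ∀ p ∈ P, p.Prime) {x : ℝ} (hx : 0 ≤ x) :
    ({p : ℕ | p ∈ P ∧ (p : ℝ) ≤ x}.ncard : ℝ) =
      ∑ p ∈ Finset.Ioc 0 ⌊x⌋₊ with p.Prime, smoothFun P p := by
  classical
  have h : {p : ℕ | p ∈ P ∧ (p : ℝ) ≤ x} =
      ↑(((Finset.Ioc 0 ⌊x⌋₊).filter Nat.Prime).filter fun p ↦ p ∈ P) := by
    ext n
    simp only [Set.mem_ofPred_eq, Finset.coe_filter, Finset.mem_filter, Finset.mem_Ioc,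
      Nat.le_floor_iff hx]
    constructor
    · exact fun h ↦ ⟨⟨⟨(hP n h.1).pos, h.2⟩, hP n h.1⟩, h.1⟩
    · exact fun h ↦ ⟨h.2, h.1.1.2⟩
  rw [h, Set.ncard_coe_finset, Finset.card_filter]
  push_cast
  exact Finset.sum_congr rfl fun p hp ↦ (smoothFun_prime P (Finset.mem_filter.1 hp).2).symm

lemma primePi_eq_sum {x : ℝ} (hx : 0 ≤ x) :
    (primePi x : ℝ) = ∑ p ∈ Finset.Ioc 0 ⌊x⌋₊ with p.Prime, (1 : ℝ) := by
  have h := ncard_eq_sum_smoothFun (P := {p | p.Prime}) (fun p hp ↦ hp) hx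
  refine Eq.trans h (Finset.sum_congr rfl fun p hp ↦ ?_)
  rw [smoothFun_prime _ (Finset.mem_filter.1 hp).2]
  exact if_pos (Finset.mem_filter.1 hp).2

lemma primePi_eq_primeCounting {x : ℝ} (hx : 0 ≤ x) : primePi x = Nat.primeCounting ⌊x⌋₊ := by
  have h := primePi_eq_sum hx
  rw [Finset.sum_const, nsmul_one] at h
  rw [Nat.cast_injective h, Nat.primeCounting, Nat.primeCounting', Nat.count_eq_card_filter_range]
  congr 1
  ext p
  simp only [Finset.mem_filter, Finset.mem_Ioc, Finset.mem_range, Nat.lt_succ_iff]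
  exact ⟨fun h ↦ ⟨h.1.2, h.2⟩, fun h ↦ ⟨⟨h.2.pos, h.1⟩, h.2⟩⟩

lemma primeRatio_nonneg (P : Set ℕ) (x : ℝ) : 0 ≤ primeRatio P x := by
  unfold primeRatio; positivity

lemma ncard_le_primePi {P : Set ℕ} (hP : ∀ p ∈ P, p.Prime) {x : ℝ} (hx : 0 ≤ x) :
    ({p : ℕ | p ∈ P ∧ (p : ℝ) ≤ x}.ncard : ℝ) ≤ primePi x := by
  rw [ncard_eq_sum_smoothFun hP hx, primePi_eq_sum hx]
  exact Finset.sum_le_sum fun p _ ↦ smoothFun_le_one P p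

lemma primeRatio_le_one {P : Set ℕ} (hP : ∀ p ∈ P, p.Prime) {x : ℝ} (hx : 0 ≤ x) :
    primeRatio P x ≤ 1 :=
  div_le_one_of_le₀ (ncard_le_primePi hP hx) (by positivity)

lemma primePi_pos {x : ℝ} (hx : 2 ≤ x) : 0 < primePi x := by
  rw [primePi_eq_primeCounting (by linarith), Nat.pos_iff_ne_zero, Ne,
    Nat.primeCounting_eq_zero_iff, not_le]
  exact Nat.le_floor hx

lemma primeRatio_eq_one {P : Set ℕ} (hP : ∀ p ∈ P, p.Prime) {x y : ℝ}
    (hPy : ∀ p : ℕ, p.Prime → (p : ℝ) ≤ y → p ∈ P) (hx : 2 ≤ x) (hxy : x ≤ y) :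
    primeRatio P x = 1 := by
  have h0 : (0 : ℝ) < primePi x := by exact_mod_cast primePi_pos hx
  rw [primeRatio, div_eq_one_iff_eq h0.ne', primePi]
  congr 2
  ext p
  exact ⟨fun h ↦ ⟨hP p h.1, h.2⟩, fun h ↦ ⟨hPy p h.1 (h.2.trans hxy), h.2⟩⟩

lemma abs_psiIn_sub_primeRatio_mul_le {P : Set ℕ} (hP : ∀ p ∈ P, p.Prime) {x : ℝ} (hx : 1 ≤ x) :
    |psiIn P x - primeRatio P x * x| ≤
      (ψ x - θ x) + (primePi x * Real.log x - θ x) + |primePi x * Real.log x - x| := by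
  have hx0 : 0 ≤ x := by linarith
  have hsplit : psiIn P x = ∑ n ∈ Finset.Ioc 0 ⌊x⌋₊ with n.Prime, smoothFun P n * Real.log n +
      ∑ n ∈ Finset.Ioc 0 ⌊x⌋₊ with ¬ n.Prime, smoothFun P n * Λ n := by
    rw [psiIn, ← Finset.sum_filter_add_sum_filter_not _ Nat.Prime]
    congr 1
    refine Finset.sum_congr rfl fun p hp ↦ ?_
    rw [ArithmeticFunction.vonMangoldt_apply_prime (Finset.mem_filter.1 hp).2]
  have hA0 : 0 ≤ ∑ n ∈ Finset.Ioc 0 ⌊x⌋₊ with ¬ n.Prime, smoothFun P n * Λ n :=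
    Finset.sum_nonneg fun n _ ↦
      mul_nonneg (smoothFun_nonneg P n) ArithmeticFunction.vonMangoldt_nonneg
  have hA1 : ∑ n ∈ Finset.Ioc 0 ⌊x⌋₊ with ¬ n.Prime, smoothFun P n * Λ n ≤ ψ x - θ x := by
    rw [psi_sub_theta_eq_sum_not_prime]
    exact Finset.sum_le_sum fun n _ ↦
      mul_le_of_le_one_left ArithmeticFunction.vonMangoldt_nonneg (smoothFun_le_one P n)
  have hlog : ∀ p ∈ (Finset.Ioc 0 ⌊x⌋₊).filter Nat.Prime, 0 ≤ Real.log x - Real.log p := by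
    intro p hp
    rw [Finset.mem_filter, Finset.mem_Ioc, Nat.le_floor_iff hx0] at hp
    have : (0 : ℝ) < p := by exact_mod_cast hp.1.1
    linarith [Real.log_le_log this hp.1.2]
  have hB : ({p : ℕ | p ∈ P ∧ (p : ℝ) ≤ x}.ncard : ℝ) * Real.log x -
      ∑ n ∈ Finset.Ioc 0 ⌊x⌋₊ with n.Prime, smoothFun P n * Real.log n =
      ∑ n ∈ Finset.Ioc 0 ⌊x⌋₊ with n.Prime, smoothFun P n * (Real.log x - Real.log n) := by
    rw [ncard_eq_sum_smoothFun hP hx0, Finset.sum_mul, ← Finset.sum_sub_distrib]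
    exact Finset.sum_congr rfl fun p _ ↦ by ring
  have hC : primePi x * Real.log x - θ x =
      ∑ n ∈ Finset.Ioc 0 ⌊x⌋₊ with n.Prime, (Real.log x - Real.log n) := by
    rw [primePi_eq_sum hx0, Finset.sum_mul, theta, ← Finset.sum_sub_distrib]
    exact Finset.sum_congr rfl fun p _ ↦ by ring
  have hB0 : 0 ≤ ∑ n ∈ Finset.Ioc 0 ⌊x⌋₊ with n.Prime,
      smoothFun P n * (Real.log x - Real.log n) :=
    Finset.sum_nonneg fun n hn ↦ mul_nonneg (smoothFun_nonneg P n) (hlog n hn)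
  have hB1 : ∑ n ∈ Finset.Ioc 0 ⌊x⌋₊ with n.Prime,
      smoothFun P n * (Real.log x - Real.log n) ≤ primePi x * Real.log x - θ x := by
    rw [hC]
    exact Finset.sum_le_sum fun n hn ↦ mul_le_of_le_one_left (hlog n hn) (smoothFun_le_one P n)
  have hD : ({p : ℕ | p ∈ P ∧ (p : ℝ) ≤ x}.ncard : ℝ) = primeRatio P x * primePi x := by
    rcases eq_or_ne (primePi x : ℝ) 0 with h | h
    · rw [h, mul_zero]
      exact le_antisymm (h ▸ ncard_le_primePi hP hx0) (by positivity)
    · rw [primeRatio, div_mul_cancel₀ _ h]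
  have hE : |primeRatio P x * (primePi x * Real.log x - x)| ≤ |primePi x * Real.log x - x| := by
    rw [abs_mul, abs_of_nonneg (primeRatio_nonneg P x)]
    exact mul_le_of_le_one_left (abs_nonneg _) (primeRatio_le_one hP hx0)
  rw [hD] at hB
  have h1 := abs_le.1 hE
  rw [hsplit, abs_le]
  constructor <;> nlinarith [h1.1, h1.2]

lemma tendsto_psi_sub_theta_div : Tendsto (fun x ↦ (ψ x - θ x) / x) atTop (𝓝 0) := by
  have h : (fun x ↦ ψ x - θ x) =o[atTop] fun x : ℝ ↦ x := by
    refine isBigO_psi_sub_theta_sqrt.trans_isLittleO ?_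
    refine Asymptotics.isLittleO_iff_tendsto' ?_ |>.2 ?_
    · filter_upwards [eventually_gt_atTop 0] with x hx h using absurd h hx.ne'
    · simp_rw [Real.sqrt_div_self]
      exact Real.tendsto_sqrt_atTop.inv_tendsto_atTop
  exact h.tendsto_div_nhds_zero

lemma tendsto_primePi_mul_log_sub_theta_div :
    Tendsto (fun x ↦ (primePi x * Real.log x - θ x) / x) atTop (𝓝 0) := by
  have h1 := primeCounting_sub_theta_div_log_isBigO.mul
    (Asymptotics.isBigO_refl Real.log atTop)
  have h2 : (fun x : ℝ ↦ x / Real.log x ^ 2 * Real.log x) =o[atTop] fun x : ℝ ↦ x := by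
    have h3 : Tendsto (fun x : ℝ ↦ (Real.log x)⁻¹) atTop (𝓝 0) :=
      Real.tendsto_log_atTop.inv_tendsto_atTop
    have h4 := (Asymptotics.isBigO_refl (fun x : ℝ ↦ x) atTop).mul_isLittleO
      ((Asymptotics.isLittleO_one_iff ℝ).2 h3)
    refine h4.congr' ?_ ?_
    · filter_upwards [eventually_gt_atTop 1] with x hx
      have := Real.log_pos hx
      field_simp
    · exact Eventually.of_forall fun x ↦ mul_one x
  refine (h1.trans_isLittleO h2).tendsto_div_nhds_zero.congr' ?_
  filter_upwards [eventually_gt_atTop 1] with x hx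
  have := Real.log_pos hx
  rw [primePi_eq_primeCounting (by linarith)]
  field_simp

/-- Uniformly in the set of primes `P`, the restricted Chebyshev function is asymptotically
`x` times the proportion of primes up to `x` lying in `P`. -/
lemma exists_abs_psiIn_sub_primeRatio_mul_le {η : ℝ} (hη : 0 < η) :
    ∃ z : ℝ, 2 ≤ z ∧ ∀ P : Set ℕ, (∀ p ∈ P, p.Prime) → ∀ x, z ≤ x →
      |psiIn P x - primeRatio P x * x| ≤ η * x := by
  have h1 := tendsto_psi_sub_theta_div.eventually_le_const (show (0 : ℝ) < η / 5 by positivity)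
  have h2 := tendsto_primePi_mul_log_sub_theta_div.eventually_le_const
    (show (0 : ℝ) < η / 5 by positivity)
  have h3 := tendsto_primePi_mul_log_sub_theta_div.eventually_const_le
    (show -(η / 5) < (0 : ℝ) by linarith)
  have h4 := tendsto_psi_div_self.eventually_le_const
    (show (1 : ℝ) < 1 + η / 5 by linarith)
  have h5 := tendsto_psi_div_self.eventually_const_le
    (show 1 - η / 5 < (1 : ℝ) by linarith)
  obtain ⟨z, hz⟩ := eventually_atTop.1 (h1.and (h2.and (h3.and (h4.and h5))))
  refine ⟨max z 2, le_max_right _ _, fun P hP x hx ↦ ?_⟩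
  have hx2 : 2 ≤ x := (le_max_right _ _).trans hx
  have hx0 : 0 < x := by linarith
  obtain ⟨h1, h2, h3, h4, h5⟩ := hz x ((le_max_left _ _).trans hx)
  rw [div_le_iff₀ hx0] at h1 h2 h4
  rw [le_div_iff₀ hx0] at h3 h5
  refine (abs_psiIn_sub_primeRatio_mul_le hP (by linarith)).trans ?_
  have h6 : |primePi x * Real.log x - x| ≤ 3 * (η / 5) * x := by
    have := theta_le_psi x
    rw [abs_le]
    constructor <;> linarith
  linarith

/-- The density of `P` among the primes, on the logarithmic scale with base `y`. -/
noncomputable def densityFun (P : Set ℕ) (y t : ℝ) : ℝ :=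
  if t ≤ 1 then 1 else primeRatio P (y ^ t)

lemma finite_setOf_natCast_le (x : ℝ) : {p : ℕ | (p : ℝ) ≤ x}.Finite :=
  (Set.finite_Iic ⌊x⌋₊).subset fun _ hp ↦ Nat.le_floor hp

lemma monotone_ncard_natCast_le (P : Set ℕ) :
    Monotone fun x : ℝ ↦ {p : ℕ | p ∈ P ∧ (p : ℝ) ≤ x}.ncard := fun _ b hab ↦
  Set.ncard_le_ncard (fun _ hp ↦ ⟨hp.1, hp.2.trans hab⟩)
    ((finite_setOf_natCast_le b).subset fun _ hp ↦ hp.2)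

lemma monotone_psiIn (P : Set ℕ) : Monotone (psiIn P) := fun _ _ hab ↦
  Finset.sum_le_sum_of_subset_of_nonneg
    (Finset.Ioc_subset_Ioc_right (Nat.floor_le_floor hab)) fun n _ _ ↦
    mul_nonneg (smoothFun_nonneg P n) ArithmeticFunction.vonMangoldt_nonneg

lemma measurable_primeRatio (P : Set ℕ) : Measurable (primeRatio P) := by
  refine Measurable.div ?_ ?_
  · exact measurable_from_top.comp (monotone_ncard_natCast_le P).measurable
  · exact measurable_from_top.comp (monotone_ncard_natCast_le {p | p.Prime}).measurable

lemma measurable_densityFun (P : Set ℕ) (y : ℝ) : Measurable (densityFun P y) :=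
  Measurable.ite measurableSet_Iic measurable_const
    ((measurable_primeRatio P).comp (measurable_const.pow measurable_id))

lemma densityFun_nonneg (P : Set ℕ) (y t : ℝ) : 0 ≤ densityFun P y t := by
  unfold densityFun
  split_ifs
  exacts [zero_le_one, primeRatio_nonneg P _]

lemma densityFun_le_one {P : Set ℕ} (hP : ∀ p ∈ P, p.Prime) {y : ℝ} (hy : 0 ≤ y) (t : ℝ) :
    densityFun P y t ≤ 1 := by
  unfold densityFun
  split_ifs
  exacts [le_rfl, primeRatio_le_one hP (by positivity)]

lemma densityFun_eq_primeRatio {P : Set ℕ} (hP : ∀ p ∈ P, p.Prime) {y t : ℝ}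
    (hPy : ∀ p : ℕ, p.Prime → (p : ℝ) ≤ y → p ∈ P) (hy : 1 ≤ y) (ht : 2 ≤ y ^ t) :
    densityFun P y t = primeRatio P (y ^ t) := by
  unfold densityFun
  split_ifs with h
  · refine (primeRatio_eq_one hP hPy ht ?_).symm
    simpa using Real.rpow_le_rpow_of_exponent_le hy h
  · rfl

/-- The density function is bounded away from zero on bounded intervals. -/
lemma exists_le_densityFun {P : Set ℕ} {y : ℝ}
    (hPy : ∀ p : ℕ, p.Prime → (p : ℝ) ≤ y → p ∈ P) (hy : 2 ≤ y) (U : ℝ) :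
    ∃ c > 0, ∀ t ≤ U, c ≤ densityFun P y t := by
  refine ⟨min 1 (primePi y / (primePi (y ^ U) + 1)), ?_, fun t ht ↦ ?_⟩
  · have := primePi_pos hy
    positivity
  · unfold densityFun
    split_ifs with h
    · exact min_le_left _ _
    · push Not at h
      refine (min_le_right _ _).trans ?_
      have h1 : y ≤ y ^ t := by
        simpa using Real.rpow_le_rpow_of_exponent_le (by linarith : 1 ≤ y) h.le
      have h2 : y ^ t ≤ y ^ U := Real.rpow_le_rpow_of_exponent_le (by linarith) ht
      have h3 : primePi (y ^ t) ≤ primePi (y ^ U) := monotone_ncard_natCast_le {p | p.Prime} h2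
      have h4 : primePi y ≤ {p : ℕ | p ∈ P ∧ (p : ℝ) ≤ y ^ t}.ncard :=
        Set.ncard_le_ncard (fun p hp ↦ ⟨hPy p hp.1 hp.2, hp.2.trans h1⟩)
          ((finite_setOf_natCast_le _).subset fun _ hp ↦ hp.2)
      have h5 : 0 < primePi (y ^ t) := primePi_pos (hy.trans h1)
      unfold primeRatio
      gcongr
      exact_mod_cast h3.trans (Nat.le_succ _)

lemma intervalIntegrable_of_measurable_of_abs_le {g : ℝ → ℝ} (hg : Measurable g) {C : ℝ}
    (h : ∀ x, |g x| ≤ C) (a b : ℝ) : IntervalIntegrable g volume a b :=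
  (intervalIntegrable_const (c := C)).mono_fun' hg.aestronglyMeasurable (ae_of_all _ h)

lemma intervalIntegrable_densityFun {P : Set ℕ} (hP : ∀ p ∈ P, p.Prime) {y : ℝ} (hy : 0 ≤ y)
    (a b : ℝ) : IntervalIntegrable (densityFun P y) volume a b :=
  intervalIntegrable_of_measurable_of_abs_le (measurable_densityFun P y)
    (fun x ↦ by
      rw [abs_of_nonneg (densityFun_nonneg P y x)]
      exact densityFun_le_one hP hy x) a b

lemma monotone_psiIn_rpow (P : Set ℕ) {y : ℝ} (hy : 1 ≤ y) :
    Monotone fun r : ℝ ↦ psiIn P (y ^ r) :=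
  fun _ _ h ↦ monotone_psiIn P (Real.rpow_le_rpow_of_exponent_le hy h)

lemma continuous_rpow_neg_exponent {y : ℝ} (hy : 0 < y) : Continuous fun r : ℝ ↦ y ^ (-r) :=
  (Real.continuous_const_rpow hy.ne').comp continuous_neg

lemma integral_rpow_neg_exponent {y : ℝ} (hy : 1 < y) (a b : ℝ) :
    ∫ r in a..b, y ^ (-r) = (y ^ (-a) - y ^ (-b)) / Real.log y := by
  have hL := Real.log_pos hy
  have hd : ∀ r ∈ Set.uIcc a b, HasDerivAt (fun r : ℝ ↦ -(y ^ (-r)) / Real.log y) (y ^ (-r)) r := by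
    intro r _
    have h := (((hasDerivAt_neg r).const_rpow (by linarith : 0 < y)).neg).div_const (Real.log y)
    refine h.congr_deriv ?_
    field_simp
  rw [intervalIntegral.integral_eq_sub_of_hasDerivAt hd
    ((continuous_rpow_neg_exponent (by linarith)).intervalIntegrable _ _)]
  ring

/-- Partial summation for the restricted Mertens sum on the logarithmic scale. -/
lemma integral_psiIn_rpow (P : Set ℕ) {y t : ℝ} (hy : 1 < y) (ht : 0 ≤ t) :
    ∫ r in (0 : ℝ)..t, psiIn P (y ^ r) * y ^ (-r) =
      ∑ d ∈ Finset.Ioc 0 ⌊y ^ t⌋₊, smoothFun P d * Λ d / (d * Real.log y) -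
        psiIn P (y ^ t) / (y ^ t * Real.log y) := by
  have hL := Real.log_pos hy
  have hy0 : 0 < y := by linarith
  have hlogb : ∀ d ∈ Finset.Ioc 0 ⌊y ^ t⌋₊, y ^ (Real.log d / Real.log y) = d := by
    intro d hd
    have : (0 : ℝ) < d := by exact_mod_cast (Finset.mem_Ioc.1 hd).1
    rw [Real.rpow_def_of_pos hy0, mul_div_cancel₀ _ hL.ne', Real.exp_log this]
  have hpt : ∀ r ∈ Set.uIcc 0 t, psiIn P (y ^ r) * y ^ (-r) =
      ∑ d ∈ Finset.Ioc 0 ⌊y ^ t⌋₊, smoothFun P d * Λ d *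
        (Set.Ici (Real.log d / Real.log y)).indicator (fun r ↦ y ^ (-r)) r := by
    intro r hr
    rw [Set.uIcc_of_le ht] at hr
    have hsub : Finset.Ioc 0 ⌊y ^ r⌋₊ ⊆ Finset.Ioc 0 ⌊y ^ t⌋₊ :=
      Finset.Ioc_subset_Ioc_right
        (Nat.floor_le_floor (Real.rpow_le_rpow_of_exponent_le hy.le hr.2))
    have hiff : ∀ d ∈ Finset.Ioc 0 ⌊y ^ t⌋₊,
        d ∈ Finset.Ioc 0 ⌊y ^ r⌋₊ ↔ r ∈ Set.Ici (Real.log d / Real.log y) := by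
      intro d hd
      rw [Finset.mem_Ioc, Nat.le_floor_iff (by positivity), Set.mem_Ici,
        ← Real.rpow_le_rpow_left_iff hy (y := Real.log d / Real.log y), hlogb d hd]
      simp [(Finset.mem_Ioc.1 hd).1]
    rw [psiIn, Finset.sum_mul, ← Finset.sum_subset hsub (fun d hd hd2 ↦ ?_)]
    · refine Finset.sum_congr rfl fun d hd ↦ ?_
      rw [Set.indicator_of_mem ((hiff d (hsub hd)).1 hd)]
    · rw [Set.indicator_of_notMem (fun h ↦ hd2 ((hiff d hd).2 h)), mul_zero]
  have hInt : ∀ s : ℝ, IntervalIntegrable ((Set.Ici s).indicator (fun r : ℝ ↦ y ^ (-r)))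
      volume 0 t := fun s ↦ by
    have := (continuous_rpow_neg_exponent hy0).intervalIntegrable (μ := volume) 0 t
    rw [intervalIntegrable_iff] at this ⊢
    exact this.indicator measurableSet_Ici
  have hone : ∀ d ∈ Finset.Ioc 0 ⌊y ^ t⌋₊,
      ∫ r in (0 : ℝ)..t, (Set.Ici (Real.log d / Real.log y)).indicator (fun r ↦ y ^ (-r)) r =
        (1 / d - 1 / y ^ t) / Real.log y := by
    intro d hd
    set s := Real.log d / Real.log y with hs
    have hd' := Finset.mem_Ioc.1 hd
    have hd1 : (1 : ℝ) ≤ d := by exact_mod_cast hd'.1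
    have hs0 : 0 ≤ s := div_nonneg (Real.log_nonneg hd1) hL.le
    have hst : s ≤ t := by
      rw [← Real.rpow_le_rpow_left_iff hy, hlogb d hd]
      exact (Nat.le_floor_iff (by positivity)).1 hd'.2
    rw [← intervalIntegral.integral_add_adjacent_intervals (b := s)
      ((hInt s).mono_set (by
        rw [Set.uIcc_of_le hs0, Set.uIcc_of_le ht]; exact Set.Icc_subset_Icc_right hst))
      ((hInt s).mono_set (by
        rw [Set.uIcc_of_le hst, Set.uIcc_of_le ht]; exact Set.Icc_subset_Icc_left hs0))]
    have h1 : ∫ r in (0 : ℝ)..s, (Set.Ici s).indicator (fun r ↦ y ^ (-r)) r = 0 := by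
      rw [intervalIntegral.integral_of_le hs0, integral_Ioc_eq_integral_Ioo]
      refine setIntegral_eq_zero_of_forall_eq_zero fun r hr ↦ ?_
      exact Set.indicator_of_notMem (fun h ↦ absurd hr.2 (not_lt.2 h)) _
    have h2 : ∫ r in s..t, (Set.Ici s).indicator (fun r ↦ y ^ (-r)) r = ∫ r in s..t, y ^ (-r) := by
      refine intervalIntegral.integral_congr fun r hr ↦ ?_
      rw [Set.uIcc_of_le hst] at hr
      exact Set.indicator_of_mem hr.1 _
    rw [h1, h2, zero_add, integral_rpow_neg_exponent hy, Real.rpow_neg hy0.le, Real.rpow_neg hy0.le,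
      hlogb d hd, one_div, one_div]
  rw [intervalIntegral.integral_congr hpt, intervalIntegral.integral_finsetSum
    fun d _ ↦ (hInt _).const_mul _, psiIn, Finset.sum_div, ← Finset.sum_sub_distrib]
  refine Finset.sum_congr rfl fun d hd ↦ ?_
  rw [intervalIntegral.integral_const_mul, hone d hd]
  have hd1 : (0 : ℝ) < d := by exact_mod_cast (Finset.mem_Ioc.1 hd).1
  have : 0 < y ^ t := by positivity
  field_simp

/-- The restricted Mertens sum is uniformly close to the integral of the density function. -/
lemma exists_abs_mertens_sub_integral_le {U : ℝ} (hU : 0 < U) {e : ℝ} (he : 0 < e) :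
    ∃ y₀ : ℝ, ∀ y, y₀ ≤ y → ∀ P : Set ℕ, (∀ p ∈ P, p.Prime) →
      (∀ p : ℕ, p.Prime → (p : ℝ) ≤ y → p ∈ P) → ∀ t ∈ Set.Icc 0 U,
      |∑ d ∈ Finset.Ioc 0 ⌊y ^ t⌋₊, smoothFun P d * Λ d / (d * Real.log y) -
        ∫ r in (0 : ℝ)..t, densityFun P y r| ≤ e := by
  obtain ⟨z, hz2, hz⟩ := exists_abs_psiIn_sub_primeRatio_mul_le (η := e / (2 * U)) (by positivity)
  set C : ℝ := Real.log 4 + 4 with hC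
  have hC0 : 0 < C := by have := Real.log_pos (show (1 : ℝ) < 4 by norm_num); positivity
  have hlz : 0 < Real.log z := Real.log_pos (by linarith)
  have hlim : Tendsto (fun y ↦ (C + (C + 1) * Real.log z) / Real.log y) atTop (𝓝 0) :=
    Real.tendsto_log_atTop.const_div_atTop _
  obtain ⟨y₁, hy₁⟩ := eventually_atTop.1 (hlim.eventually_le_const (half_pos he))
  refine ⟨max y₁ 2, fun y hy P hP hPy t ht ↦ ?_⟩
  have hy2 : 2 ≤ y := (le_max_right _ _).trans hy
  have hy1 : 1 < y := by linarith
  have hy0 : 0 < y := by linarith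
  have hL := Real.log_pos hy1
  have hsmall := hy₁ y ((le_max_left _ _).trans hy)
  have hi1 : ∀ a b, IntervalIntegrable (fun r ↦ psiIn P (y ^ r) * y ^ (-r)) volume a b :=
    fun a b ↦ (monotone_psiIn_rpow P hy1.le).intervalIntegrable.mul_continuousOn
      (continuous_rpow_neg_exponent hy0).continuousOn
  have hi2 := intervalIntegrable_densityFun hP hy0.le
  have hi := fun a b ↦ (hi1 a b).sub (hi2 a b)
  have key : ∑ d ∈ Finset.Ioc 0 ⌊y ^ t⌋₊, smoothFun P d * Λ d / (d * Real.log y) -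
      ∫ r in (0 : ℝ)..t, densityFun P y r = psiIn P (y ^ t) / (y ^ t * Real.log y) +
      ∫ r in (0 : ℝ)..t, (psiIn P (y ^ r) * y ^ (-r) - densityFun P y r) := by
    rw [intervalIntegral.integral_sub (hi1 _ _) (hi2 _ _), integral_psiIn_rpow P hy1 ht.1]
    ring
  have hb0 : ∀ r : ℝ, 0 ≤ psiIn P (y ^ r) * y ^ (-r) := fun r ↦
    mul_nonneg (psiIn_nonneg P _) (by positivity)
  have hb1 : ∀ r : ℝ, psiIn P (y ^ r) * y ^ (-r) ≤ C := fun r ↦ by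
    rw [Real.rpow_neg hy0.le, ← div_eq_mul_inv, div_le_iff₀ (by positivity)]
    exact psiIn_le P (by positivity)
  have hterm : |psiIn P (y ^ t) / (y ^ t * Real.log y)| ≤ C / Real.log y := by
    rw [abs_of_nonneg (div_nonneg (psiIn_nonneg P _) (by positivity)), ← div_div]
    gcongr
    rw [div_le_iff₀ (by positivity)]
    exact psiIn_le P (by positivity)
  set m := min (Real.log z / Real.log y) t with hm
  have hm0 : 0 ≤ m := le_min (by positivity) ht.1
  have hmt : m ≤ t := min_le_right _ _
  have hI1 : |∫ r in (0 : ℝ)..m, (psiIn P (y ^ r) * y ^ (-r) - densityFun P y r)| ≤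
      (C + 1) * (Real.log z / Real.log y) := by
    rw [← Real.norm_eq_abs]
    refine (intervalIntegral.norm_integral_le_of_norm_le_const (C := C + 1) fun r _ ↦ ?_).trans ?_
    · rw [Real.norm_eq_abs, abs_le]
      have h1 := hb0 r
      have h2 := hb1 r
      have h3 := densityFun_nonneg P y r
      have h4 := densityFun_le_one hP hy0.le r
      constructor <;> linarith
    · rw [sub_zero, abs_of_nonneg hm0]
      gcongr
      exact min_le_left _ _
  have hI2 : |∫ r in m..t, (psiIn P (y ^ r) * y ^ (-r) - densityFun P y r)| ≤ e / 2 := by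
    rw [← Real.norm_eq_abs]
    refine (intervalIntegral.norm_integral_le_of_norm_le_const (C := e / (2 * U))
      fun r hr ↦ ?_).trans ?_
    · rw [Set.uIoc_of_le hmt] at hr
      have hr1 : Real.log z / Real.log y ≤ r := by
        rcases min_lt_iff.1 hr.1 with h | h
        · exact h.le
        · exact absurd hr.2 (not_le.2 h)
      have hzr : z ≤ y ^ r := by
        rw [div_le_iff₀ hL] at hr1
        rw [← Real.log_le_log_iff (by linarith) (by positivity), Real.log_rpow hy0]
        exact hr1
      have hyr : 0 < y ^ r := by positivity
      rw [densityFun_eq_primeRatio hP hPy hy1.le (hz2.trans hzr), Real.norm_eq_abs]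
      have h := hz P hP _ hzr
      have h2 : psiIn P (y ^ r) * y ^ (-r) - primeRatio P (y ^ r) =
          (psiIn P (y ^ r) - primeRatio P (y ^ r) * y ^ r) / y ^ r := by
        rw [Real.rpow_neg hy0.le]
        field_simp
      rwa [h2, abs_div, abs_of_pos hyr, div_le_iff₀ hyr]
    · rw [abs_of_nonneg (by linarith)]
      calc e / (2 * U) * (t - m) ≤ e / (2 * U) * U := by
            gcongr
            linarith [ht.2]
        _ = e / 2 := by field_simp
  rw [key, ← intervalIntegral.integral_add_adjacent_intervals (hi 0 m) (hi m t)]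
  have hs : C / Real.log y + (C + 1) * (Real.log z / Real.log y) ≤ e / 2 := by
    refine le_trans (le_of_eq ?_) hsmall
    ring
  calc _ ≤ C / Real.log y + ((C + 1) * (Real.log z / Real.log y) + e / 2) :=
        (abs_add_le _ _).trans (add_le_add hterm ((abs_add_le _ _).trans (add_le_add hI1 hI2)))
    _ ≤ e := by linarith

/-- A bounded function whose every upper bound self-improves is small. -/
lemma le_div_one_sub_of_forall_upper_bound {S : Set ℝ} {d : ℝ → ℝ} {B q e : ℝ} (hq0 : 0 ≤ q)
    (hq : q < 1) (he : 0 ≤ e) (hB : ∀ u ∈ S, d u ≤ B)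
    (h : ∀ M, 0 ≤ M → (∀ u ∈ S, d u ≤ M) → ∀ u ∈ S, d u ≤ q * M + e) :
    ∀ u ∈ S, d u ≤ e / (1 - q) := by
  intro u hu
  have hbdd : BddAbove (d '' S) := ⟨B, by rintro _ ⟨v, hv, rfl⟩; exact hB v hv⟩
  set M := max 0 (sSup (d '' S)) with hM
  have hM0 : 0 ≤ M := le_max_left _ _
  have hle : ∀ v ∈ S, d v ≤ M := fun v hv ↦
    (le_csSup hbdd (Set.mem_image_of_mem d hv)).trans (le_max_right _ _)
  have h1 : M ≤ q * M + e := by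
    refine max_le (by positivity) (csSup_le ⟨_, Set.mem_image_of_mem d hu⟩ ?_)
    rintro _ ⟨v, hv, rfl⟩
    exact h M hM0 hle v hv
  refine (hle u hu).trans ?_
  rw [le_div_iff₀ (by linarith)]
  linarith

/-- Comparison of a weighted sum with an integral when the weights approximate a density. -/
lemma abs_sum_mul_sub_integral_mul_le {ι : Type*} (s : Finset ι) {α τ : ι → ℝ} {u e K : ℝ}
    {g χ : ℝ → ℝ} (hu : 0 ≤ u) (hK : 0 ≤ K) (hα : ∀ i ∈ s, 0 ≤ α i)
    (hτ : ∀ i ∈ s, 0 ≤ τ i ∧ τ i ≤ u) (hg : ∀ t ∈ Set.Icc 0 u, |g t| ≤ 1)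
    (hgK : ∀ a ∈ Set.Icc 0 u, ∀ b ∈ Set.Icc 0 u, |g a - g b| ≤ K * |a - b|)
    (hχ0 : ∀ t, 0 ≤ χ t) (hχ1 : ∀ t, χ t ≤ 1)
    (hχ : IntervalIntegrable χ volume 0 u)
    (hgχ : IntervalIntegrable (fun t ↦ g t * χ t) volume 0 u)
    (hA : ∀ t ∈ Set.Icc 0 u,
      |∑ i ∈ s, (if τ i ≤ t then α i else 0) - ∫ r in (0 : ℝ)..t, χ r| ≤ e)
    {N : ℕ} (hN : 0 < N) :
    |∑ i ∈ s, α i * g (τ i) - ∫ t in (0 : ℝ)..u, g t * χ t| ≤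
      K * (u / N) * (2 * u + e) + 2 * e * N + e := by
  set w : ι → ℝ → ℝ := fun i t ↦ if τ i ≤ t then α i else 0 with hw
  set A : ℝ → ℝ := fun t ↦ ∑ i ∈ s, w i t with hAdef
  set I : ℝ → ℝ := fun t ↦ ∫ r in (0 : ℝ)..t, χ r with hI
  set Φ : ℝ → ℝ := fun t ↦ ∑ i ∈ s, w i t * g (τ i) - ∫ r in (0 : ℝ)..t, g r * χ r with hΦ
  have hsub : ∀ {f : ℝ → ℝ}, IntervalIntegrable f volume 0 u → ∀ {a b : ℝ}, 0 ≤ a → a ≤ b →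
      b ≤ u → IntervalIntegrable f volume a b := fun hf a b ha hab hb ↦ hf.mono_set (by
    rw [Set.uIcc_of_le hab, Set.uIcc_of_le hu]
    exact Set.Icc_subset_Icc ha hb)
  have hw0 : ∀ i ∈ s, ∀ t, 0 ≤ w i t := fun i hi t ↦ by
    simp only [hw]; split_ifs
    exacts [hα i hi, le_rfl]
  have hwmono : ∀ i ∈ s, ∀ a b, a ≤ b → w i a ≤ w i b := fun i hi a b hab ↦ by
    simp only [hw]
    split_ifs with h1 h2 h2
    exacts [le_rfl, absurd (h1.trans hab) h2, hα i hi, le_rfl]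
  have hstep : ∀ a b, 0 ≤ a → a ≤ b → b ≤ u →
      |Φ b - Φ a| ≤ K * (b - a) * ((A b + I b) - (A a + I a)) + 2 * e := by
    intro a b ha hab hb
    have hbm : b ∈ Set.Icc 0 u := ⟨ha.trans hab, hb⟩
    have ham : a ∈ Set.Icc 0 u := ⟨ha, hab.trans hb⟩
    have hχab := hsub hχ ha hab hb
    have hgχab := hsub hgχ ha hab hb
    have hIab : I b - I a = ∫ r in a..b, χ r :=
      intervalIntegral.integral_interval_sub_left (hsub hχ le_rfl hbm.1 hb)
        (hsub hχ le_rfl ha ham.2)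
    have hJab : (∫ r in (0 : ℝ)..b, g r * χ r) - (∫ r in (0 : ℝ)..a, g r * χ r) =
        ∫ r in a..b, g r * χ r :=
      intervalIntegral.integral_interval_sub_left (hsub hgχ le_rfl hbm.1 hb)
        (hsub hgχ le_rfl ha ham.2)
    have hdecomp : Φ b - Φ a = (∑ i ∈ s, (w i b - w i a) * (g (τ i) - g b)) -
        (∫ r in a..b, (g r - g b) * χ r) + g b * ((A b - I b) - (A a - I a)) := by
      have e1 : ∑ i ∈ s, (w i b - w i a) * (g (τ i) - g b) =
          ∑ i ∈ s, w i b * g (τ i) - ∑ i ∈ s, w i a * g (τ i) - g b * (A b - A a) := by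
        simp only [hAdef, mul_sub, Finset.mul_sum, ← Finset.sum_sub_distrib]
        exact Finset.sum_congr rfl fun i _ ↦ by ring
      have e2 : ∫ r in a..b, (g r - g b) * χ r =
          (∫ r in a..b, g r * χ r) - g b * ∫ r in a..b, χ r := by
        rw [← intervalIntegral.integral_const_mul, ← intervalIntegral.integral_sub hgχab
          (hχab.const_mul _)]
        exact intervalIntegral.integral_congr fun r _ ↦ by ring
      rw [e1, e2, ← hIab, ← hJab]
      simp only [hΦ]
      ring
    have b1 : |∑ i ∈ s, (w i b - w i a) * (g (τ i) - g b)| ≤ K * (b - a) * (A b - A a) := by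
      refine (Finset.abs_sum_le_sum_abs _ _).trans ?_
      simp only [hAdef, ← Finset.sum_sub_distrib, Finset.mul_sum]
      refine Finset.sum_le_sum fun i hi ↦ ?_
      rcases le_or_gt (τ i) a with h1 | h1
      · simp [hw, h1, h1.trans hab]
      rcases le_or_gt (τ i) b with h2 | h2
      · rw [abs_mul, abs_of_nonneg (sub_nonneg.2 (hwmono i hi a b hab)), mul_comm]
        refine mul_le_mul_of_nonneg_right ?_ (sub_nonneg.2 (hwmono i hi a b hab))
        refine (hgK _ (hτ i hi) _ hbm).trans (mul_le_mul_of_nonneg_left ?_ hK)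
        rw [abs_le]
        constructor <;> linarith
      · simp [hw, not_le.2 h2, not_le.2 h1]
    have b2 : |∫ r in a..b, (g r - g b) * χ r| ≤ K * (b - a) * (I b - I a) := by
      rw [hIab, ← intervalIntegral.integral_const_mul, ← Real.norm_eq_abs]
      refine intervalIntegral.norm_integral_le_of_norm_le hab (ae_of_all _ fun r hr ↦ ?_)
        (hχab.const_mul _)
      rw [Real.norm_eq_abs, abs_mul, abs_of_nonneg (hχ0 r)]
      refine mul_le_mul_of_nonneg_right ?_ (hχ0 r)
      refine (hgK _ ⟨ha.trans hr.1.le, hr.2.trans hb⟩ _ hbm).trans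
        (mul_le_mul_of_nonneg_left ?_ hK)
      rw [abs_le]
      constructor <;> linarith [hr.1, hr.2]
    have b3 : |g b * ((A b - I b) - (A a - I a))| ≤ 2 * e := by
      rw [abs_mul]
      have h1 := hA a ham
      have h2 := hA b hbm
      calc _ ≤ 1 * |(A b - I b) - (A a - I a)| := by
            gcongr
            exact hg b hbm
        _ ≤ |A b - I b| + |A a - I a| := by rw [one_mul]; exact abs_sub _ _
        _ ≤ 2 * e := by linarith
    rw [hdecomp]
    calc _ ≤ K * (b - a) * (A b - A a) + K * (b - a) * (I b - I a) + 2 * e :=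
          (abs_add_le _ _).trans (add_le_add ((abs_sub _ _).trans (add_le_add b1 b2)) b3)
      _ = _ := by ring
  have hN0 : (0 : ℝ) < N := by exact_mod_cast hN
  set h := u / N with hh
  have hh0 : 0 ≤ h := by positivity
  have hNh : N * h = u := by rw [hh]; field_simp
  have hA0 : ∀ t, 0 ≤ A t := fun t ↦ Finset.sum_nonneg fun i hi ↦ hw0 i hi t
  have hind : ∀ j : ℕ, j ≤ N →
      |Φ (j * h)| ≤ e + 2 * e * j + K * h * (A (j * h) + I (j * h)) := by
    intro j
    induction j with
    | zero =>
      intro _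
      have h1 := hA 0 ⟨le_rfl, hu⟩
      rw [intervalIntegral.integral_same, sub_zero] at h1
      have h2 : |Φ 0| ≤ A 0 := by
        simp only [hΦ, intervalIntegral.integral_same, sub_zero]
        refine (Finset.abs_sum_le_sum_abs _ _).trans (Finset.sum_le_sum fun i hi ↦ ?_)
        rw [abs_mul, abs_of_nonneg (hw0 i hi 0)]
        exact mul_le_of_le_one_right (hw0 i hi 0) (hg _ (hτ i hi))
      have h3 : I 0 = 0 := intervalIntegral.integral_same
      have h4 : 0 ≤ K * h * A 0 := mul_nonneg (mul_nonneg hK hh0) (hA0 0)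
      have h5 : A 0 ≤ e := (le_abs_self _).trans h1
      simp only [Nat.cast_zero, zero_mul, mul_zero, add_zero, h3]
      linarith
    | succ j ih =>
      intro hj
      have h1 := ih (by omega)
      have hjN : ((j : ℝ) + 1) ≤ N := by exact_mod_cast hj
      have h2 := hstep (j * h) ((j + 1) * h) (by positivity) (by nlinarith)
        (by rw [← hNh]; gcongr)
      have h3 : ((j : ℝ) + 1) * h - j * h = h := by ring
      rw [h3] at h2
      push_cast
      have h4 : |Φ ((j + 1) * h)| ≤ |Φ ((j + 1) * h) - Φ (j * h)| + |Φ (j * h)| := by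
        simpa using abs_add_le (Φ ((j + 1) * h) - Φ (j * h)) (Φ (j * h))
      linarith
  have hfin := hind N le_rfl
  rw [hNh] at hfin
  have hΦu : Φ u = ∑ i ∈ s, α i * g (τ i) - ∫ t in (0 : ℝ)..u, g t * χ t := by
    simp only [hΦ]
    congr 1
    exact Finset.sum_congr rfl fun i hi ↦ by simp [hw, (hτ i hi).2]
  have hIu : I u ≤ u := by
    have := intervalIntegral.integral_mono_on hu hχ intervalIntegrable_const fun t _ ↦ hχ1 t
    simpa using this
  have hAu : A u ≤ u + e := by
    have h1 := (le_abs_self _).trans (hA u ⟨hu, le_rfl⟩)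
    change A u - I u ≤ e at h1
    linarith
  rw [hΦu] at hfin
  have h6 : K * h * (A u + I u) ≤ K * h * (2 * u + e) :=
    mul_le_mul_of_nonneg_left (by linarith) (mul_nonneg hK hh0)
  linarith

/-- `σ` solves the delay equation with density `χ` on `[0, U]`, where `χ` is a measurable density
that equals `1` up to time `1` and is bounded away from `0` up to time `U`. -/
structure IsDelaySolution (U : ℝ) (χ σ : ℝ → ℝ) : Prop where
  one_lt : 1 < U
  measurable : Measurable χ
  nonneg : ∀ t, 0 ≤ χ t
  le_one : ∀ t, χ t ≤ 1
  eq_one : ∀ t ≤ 1, χ t = 1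
  exists_le : ∃ c > 0, ∀ t ≤ U, c ≤ χ t
  sol_eq_one : ∀ u, 0 ≤ u → u ≤ 1 → σ u = 1
  mul_sol : ∀ u, 1 < u → u ≤ U → u * σ u = ∫ t in (0 : ℝ)..u, σ (u - t) * χ t

namespace IsDelaySolution

variable {U : ℝ} {χ σ : ℝ → ℝ}

lemma mul_abs_sol_le (h : IsDelaySolution U χ σ) {u : ℝ} (hu1 : 1 < u) (huU : u ≤ U)
    (hInt : IntervalIntegrable σ volume 0 u) : u * |σ u| ≤ ∫ t in (0 : ℝ)..u, |σ t| := by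
  have h0 : 0 ≤ u := by linarith
  have hcomp : IntervalIntegrable (fun t ↦ |σ (u - t)|) volume 0 u := by
    have := (hInt.abs.comp_sub_left u).symm
    simpa using this
  have h1 : u * |σ u| = |∫ t in (0 : ℝ)..u, σ (u - t) * χ t| := by
    rw [← h.mul_sol u hu1 huU, abs_mul, abs_of_nonneg h0]
  have h2 : ∫ t in (0 : ℝ)..u, |σ t| = ∫ t in (0 : ℝ)..u, |σ (u - t)| := by
    rw [intervalIntegral.integral_comp_sub_left (fun t ↦ |σ t|)]
    simp
  rw [h1, h2, ← Real.norm_eq_abs]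
  refine intervalIntegral.norm_integral_le_of_norm_le h0 (ae_of_all _ fun t _ ↦ ?_) hcomp
  rw [Real.norm_eq_abs, abs_mul, abs_of_nonneg (h.nonneg t)]
  exact mul_le_of_le_one_right (abs_nonneg _) (h.le_one t)

lemma abs_sol_le_one_of_intervalIntegrable (h : IsDelaySolution U χ σ) {b : ℝ} (hb1 : 1 ≤ b)
    (hbU : b ≤ U) (hInt : IntervalIntegrable σ volume 0 b) :
    ∀ u ∈ Set.Icc 0 b, |σ u| ≤ 1 := by
  have hb0 : 0 < b := by linarith
  have hsub : ∀ {a c : ℝ}, 0 ≤ a → a ≤ c → c ≤ b → IntervalIntegrable σ volume a c :=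
    fun ha hac hc ↦ hInt.mono_set (by
      rw [Set.uIcc_of_le hac, Set.uIcc_of_le hb0.le]
      exact Set.Icc_subset_Icc ha hc)
  have key := le_div_one_sub_of_forall_upper_bound (S := Set.Icc 0 b) (d := fun u ↦ |σ u| - 1)
    (B := ∫ t in (0 : ℝ)..b, |σ t|) (q := 1 - 1 / b) (e := 0)
    (by rw [sub_nonneg, div_le_one hb0]; exact hb1) (by
      have : 0 < 1 / b := by positivity
      linarith) le_rfl ?_ ?_
  · intro u hu
    have := key u hu
    rw [zero_div] at this
    linarith
  · intro u hu
    have hnn : 0 ≤ ∫ t in (0 : ℝ)..b, |σ t| :=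
      intervalIntegral.integral_nonneg hb0.le fun t _ ↦ abs_nonneg _
    rcases le_or_gt u 1 with hu1 | hu1
    · simp [h.sol_eq_one u hu.1 hu1, hnn]
    · have h1 := h.mul_abs_sol_le hu1 (hu.2.trans hbU) (hsub le_rfl hu.1 hu.2)
      have h2 : ∫ t in (0 : ℝ)..u, |σ t| ≤ ∫ t in (0 : ℝ)..b, |σ t| :=
        intervalIntegral.integral_mono_interval le_rfl hu.1 hu.2
          (ae_of_all _ fun t ↦ abs_nonneg _) hInt.abs
      nlinarith [abs_nonneg (σ u)]
  · intro M hM0 hM u hu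
    simp only [add_zero]
    rcases le_or_gt u 1 with hu1 | hu1
    · rw [h.sol_eq_one u hu.1 hu1, abs_one, sub_self]
      have : 1 / b ≤ 1 := by rw [div_le_one hb0]; exact hb1
      exact mul_nonneg (by linarith) hM0
    · have hu0 : 0 < u := by linarith
      have h1 := h.mul_abs_sol_le hu1 (hu.2.trans hbU) (hsub le_rfl hu.1 hu.2)
      rw [← intervalIntegral.integral_add_adjacent_intervals
        (hsub le_rfl zero_le_one hb1).abs (hsub zero_le_one hu1.le hu.2).abs] at h1
      have h2 : ∫ t in (0 : ℝ)..1, |σ t| = 1 := by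
        rw [intervalIntegral.integral_congr (g := fun _ ↦ (1 : ℝ))]
        · simp
        · intro t ht
          rw [Set.uIcc_of_le zero_le_one] at ht
          simp [h.sol_eq_one t ht.1 ht.2]
      have h3 : ∫ t in (1 : ℝ)..u, |σ t| ≤ (u - 1) * (M + 1) := by
        have := intervalIntegral.integral_mono_on hu1.le (hsub zero_le_one hu1.le hu.2).abs
          (intervalIntegrable_const (c := M + 1)) fun t ht ↦ by
            linarith [hM t ⟨by linarith [ht.1], ht.2.trans hu.2⟩]
        simpa [mul_add] using this
      have h4 : u * (|σ u| - 1) ≤ (u - 1) * M := by linarith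
      have h5 : |σ u| - 1 ≤ (1 - 1 / u) * M := by
        rw [← mul_le_mul_iff_right₀ hu0]
        refine h4.trans (le_of_eq ?_)
        field_simp
      refine h5.trans (mul_le_mul_of_nonneg_right ?_ hM0)
      have : 1 / b ≤ 1 / u := one_div_le_one_div_of_le hu0 hu.2
      linarith

lemma intervalIntegrable_mul_density (h : IsDelaySolution U χ σ) {f : ℝ → ℝ} {a b : ℝ}
    (hf : IntervalIntegrable f volume a b) :
    IntervalIntegrable (fun t ↦ f t * χ t) volume a b := by
  refine hf.abs.mono_fun' ?_ (ae_of_all _ fun t ↦ ?_)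
  · exact (intervalIntegrable_iff.1 hf).aestronglyMeasurable.mul h.measurable.aestronglyMeasurable
  · simp only [Real.norm_eq_abs, abs_mul, abs_of_nonneg (h.nonneg t)]
    exact mul_le_of_le_one_right (abs_nonneg _) (h.le_one t)

/-- If the solution fails to be integrable up to `u` then the integral in the equation is `0`. -/
lemma sol_eq_zero_of_not_intervalIntegrable (h : IsDelaySolution U χ σ) {u : ℝ} (hu1 : 1 < u)
    (huU : u ≤ U) (hInt : ¬ IntervalIntegrable σ volume 0 u) : σ u = 0 := by
  have hu0 : 0 < u := by linarith
  obtain ⟨c, hc0, hc⟩ := h.exists_le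
  have hn : ¬ IntervalIntegrable (fun t ↦ σ (u - t) * χ t) volume 0 u := by
    intro hi
    apply hInt
    have h1 : IntervalIntegrable (fun t ↦ σ (u - t)) volume 0 u := by
      have h2 : IntervalIntegrable (fun t ↦ σ (u - t) * χ t * (χ t)⁻¹) volume 0 u := by
        refine (hi.abs.mul_const c⁻¹).mono_fun' ?_ ?_
        · exact (intervalIntegrable_iff.1 hi).aestronglyMeasurable.mul
            h.measurable.inv.aestronglyMeasurable
        · refine (ae_restrict_iff' measurableSet_uIoc).2 (ae_of_all _ fun t ht ↦ ?_)
          rw [Set.uIoc_of_le hu0.le] at ht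
          have h3 := hc t (ht.2.trans huU)
          beta_reduce
          rw [Real.norm_eq_abs, abs_mul _ (χ t)⁻¹, abs_of_pos (inv_pos.2 (hc0.trans_le h3))]
          gcongr
      refine h2.congr fun t ht ↦ ?_
      rw [Set.uIoc_of_le hu0.le] at ht
      have h3 := hc0.trans_le (hc t (ht.2.trans huU))
      exact mul_inv_cancel_right₀ h3.ne' _
    have := (h1.comp_sub_left u).symm
    simpa using this
  have h1 := h.mul_sol u hu1 huU
  rw [intervalIntegral.integral_undef hn] at h1
  exact (mul_eq_zero.1 h1).resolve_left hu0.ne'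

lemma intervalIntegrable_sol (h : IsDelaySolution U χ σ) : IntervalIntegrable σ volume 0 U := by
  have hU0 : 0 < U := by linarith [h.one_lt]
  set S := {b : ℝ | b ∈ Set.Icc 1 U ∧ IntervalIntegrable σ volume 0 b} with hS
  have h1S : (1 : ℝ) ∈ S := by
    refine ⟨⟨le_rfl, h.one_lt.le⟩, (intervalIntegrable_const (c := (1 : ℝ))).congr fun t ht ↦ ?_⟩
    rw [Set.uIoc_of_le zero_le_one] at ht
    exact (h.sol_eq_one t ht.1.le ht.2).symm
  have hbdd : BddAbove S := ⟨U, fun b hb ↦ hb.1.2⟩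
  set c := sSup S with hc
  have h1c : 1 ≤ c := le_csSup hbdd h1S
  have hcU : c ≤ U := csSup_le ⟨1, h1S⟩ fun b hb ↦ hb.1.2
  have hlt : ∀ b, b < c → IntegrableOn σ (Set.Ioc 0 b) ∧ (0 ≤ b → |σ b| ≤ 1) := by
    intro b hb
    obtain ⟨a, ha, hba⟩ := exists_lt_of_lt_csSup ⟨1, h1S⟩ hb
    have ha0 : 0 ≤ a := by linarith [ha.1.1]
    refine ⟨((intervalIntegrable_iff_integrableOn_Ioc_of_le ha0).1 ha.2).mono_set
      (Set.Ioc_subset_Ioc_right hba.le), fun hb0 ↦ ?_⟩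
    exact h.abs_sol_le_one_of_intervalIntegrable ha.1.1 ha.1.2 ha.2 b ⟨hb0, hba.le⟩
  have hleft : IntegrableOn σ (Set.Ioo 0 c) := by
    have hunion : Set.Ioo 0 c = ⋃ n : ℕ, Set.Ioc 0 (c - 1 / ((n : ℝ) + 1)) := by
      ext x
      simp only [Set.mem_Ioo, Set.mem_iUnion, Set.mem_Ioc]
      constructor
      · rintro ⟨hx0, hxc⟩
        obtain ⟨n, hn⟩ := exists_nat_one_div_lt (sub_pos.2 hxc)
        exact ⟨n, hx0, by linarith⟩
      · rintro ⟨n, hx0, hx⟩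
        have : 0 < 1 / ((n : ℝ) + 1) := by positivity
        exact ⟨hx0, by linarith⟩
    have hmeas : AEStronglyMeasurable σ (volume.restrict (Set.Ioo 0 c)) := by
      rw [hunion, aestronglyMeasurable_iUnion_iff]
      intro n
      have : 0 < 1 / ((n : ℝ) + 1) := by positivity
      exact (hlt _ (by linarith)).1.aestronglyMeasurable
    refine Integrable.mono' (g := fun _ ↦ (1 : ℝ)) (integrable_const _) hmeas ?_
    exact (ae_restrict_iff' measurableSet_Ioo).2
      (ae_of_all _ fun t ht ↦ (hlt t ht.2).2 ht.1.le)
  have hright : IntegrableOn σ (Set.Ioc c U) := by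
    refine (integrableOn_zero (ε' := ℝ)).congr_fun (fun u hu ↦ ?_) measurableSet_Ioc
    have hu1 : 1 < u := h1c.trans_lt hu.1
    refine (h.sol_eq_zero_of_not_intervalIntegrable hu1 hu.2 fun hi ↦ ?_).symm
    exact absurd (le_csSup hbdd ⟨⟨hu1.le, hu.2⟩, hi⟩) (not_le.2 hu.1)
  rw [intervalIntegrable_iff_integrableOn_Ioc_of_le hU0.le,
    ← Set.Ioc_union_Ioc_eq_Ioc (by linarith : (0 : ℝ) ≤ c) hcU]
  exact ((integrableOn_Ioc_iff_integrableOn_Ioo).2 hleft).union hright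

lemma abs_sol_le_one (h : IsDelaySolution U χ σ) {u : ℝ} (hu : u ∈ Set.Icc 0 U) : |σ u| ≤ 1 :=
  h.abs_sol_le_one_of_intervalIntegrable h.one_lt.le le_rfl h.intervalIntegrable_sol u hu

lemma intervalIntegrable_sol_comp (h : IsDelaySolution U χ σ) {v a b : ℝ} (hv : v ≤ U)
    (ha : 0 ≤ a) (hab : a ≤ b) (hb : b ≤ v) :
    IntervalIntegrable (fun t ↦ σ (v - t)) volume a b := by
  have h1 : IntervalIntegrable σ volume (v - b) (v - a) :=
    h.intervalIntegrable_sol.mono_set (by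
      rw [Set.uIcc_of_le (by linarith), Set.uIcc_of_le (by linarith [h.one_lt])]
      exact Set.Icc_subset_Icc (by linarith) (by linarith))
  have := (h1.comp_sub_left v).symm
  simpa using this

lemma mul_sol_eq (h : IsDelaySolution U χ σ) {u : ℝ} (hu0 : 0 ≤ u) (huU : u ≤ U) :
    u * σ u = ∫ t in (0 : ℝ)..u, σ (u - t) * χ t := by
  rcases le_or_gt u 1 with hu1 | hu1
  · rw [h.sol_eq_one u hu0 hu1, intervalIntegral.integral_congr (g := fun _ ↦ (1 : ℝ))]
    · simp
    · intro t ht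
      rw [Set.uIcc_of_le hu0] at ht
      simp [h.sol_eq_one (u - t) (by linarith [ht.2]) (by linarith [ht.1]),
        h.eq_one t (ht.2.trans hu1)]
  · exact h.mul_sol u hu1 huU

lemma abs_sol_add_sub_le (h : IsDelaySolution U χ σ) {k : ℝ} (hk : 0 ≤ k) (hk2 : k < 1 / 2) :
    ∀ v ∈ Set.Icc 0 (U - k), |σ (v + k) - σ v| ≤ 8 * U * k := by
  have hU := h.one_lt
  have hzero : ∀ v, 0 ≤ v → v ≤ 1 / 2 → σ (v + k) - σ v = 0 := fun v h0 h1 ↦ by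
    rw [h.sol_eq_one v h0 (by linarith), h.sol_eq_one (v + k) (by linarith) (by linarith), sub_self]
  have hUinv : 1 / (2 * U) < 1 := by rw [div_lt_one (by linarith)]; linarith
  have hUpos : 0 < 1 / (2 * U) := by positivity
  have key := le_div_one_sub_of_forall_upper_bound (S := Set.Icc 0 (U - k))
    (d := fun v ↦ |σ (v + k) - σ v|) (B := 2) (q := 1 - 1 / (2 * U)) (e := 4 * k)
    (by linarith) (by linarith) (by linarith) ?_ ?_
  · intro v hv
    refine (key v hv).trans (le_of_eq ?_)
    field_simp
    ring
  · intro v hv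
    have h1 := h.abs_sol_le_one (u := v) ⟨hv.1, by linarith [hv.2]⟩
    have h2 := h.abs_sol_le_one (u := v + k) ⟨by linarith [hv.1], by linarith [hv.2]⟩
    exact (abs_sub _ _).trans (by linarith)
  · intro M hM0 hM v hv
    have hv0 := hv.1
    have hvU : v + k ≤ U := by linarith [hv.2]
    rcases le_or_gt v (1 / 2) with hv2 | hv2
    · simp only [hzero v hv0 hv2, abs_zero]
      have : 0 ≤ (1 - 1 / (2 * U)) * M := mul_nonneg (by linarith) hM0
      linarith
    have hvpos : 0 < v := by linarith
    have e1 := h.mul_sol_eq (u := v + k) (by linarith) hvU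
    have e2 := h.mul_sol_eq (u := v) hv0 (by linarith)
    have i1 : ∀ {a b : ℝ}, 0 ≤ a → a ≤ b → b ≤ v + k →
        IntervalIntegrable (fun t ↦ σ (v + k - t) * χ t) volume a b := fun ha hab hb ↦
      h.intervalIntegrable_mul_density (h.intervalIntegrable_sol_comp hvU ha hab hb)
    have i2 : ∀ {a b : ℝ}, 0 ≤ a → a ≤ b → b ≤ v →
        IntervalIntegrable (fun t ↦ σ (v - t) * χ t) volume a b := fun ha hab hb ↦
      h.intervalIntegrable_mul_density
        (h.intervalIntegrable_sol_comp (by linarith) ha hab hb)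
    have i3 : ∀ {a b : ℝ}, 0 ≤ a → a ≤ b → b ≤ v →
        IntervalIntegrable (fun t ↦ σ (v + k - t) * χ t - σ (v - t) * χ t) volume a b :=
      fun ha hab hb ↦ (i1 ha hab (by linarith)).sub (i2 ha hab hb)
    have hsplit : v * (σ (v + k) - σ v) =
        (∫ t in (0 : ℝ)..(v - 1 / 2), (σ (v + k - t) * χ t - σ (v - t) * χ t)) +
        (∫ t in (v - 1 / 2)..v, (σ (v + k - t) * χ t - σ (v - t) * χ t)) +
        (∫ t in v..(v + k), σ (v + k - t) * χ t) - k * σ (v + k) := by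
      rw [intervalIntegral.integral_add_adjacent_intervals (i3 le_rfl (by linarith) (by linarith))
        (i3 (by linarith) (by linarith) le_rfl),
        intervalIntegral.integral_sub (i1 le_rfl hv0 (by linarith)) (i2 le_rfl hv0 le_rfl)]
      rw [← intervalIntegral.integral_add_adjacent_intervals (i1 le_rfl hv0 (by linarith))
        (i1 hv0 (by linarith) le_rfl)] at e1
      linarith
    have b1 : |∫ t in (0 : ℝ)..(v - 1 / 2), (σ (v + k - t) * χ t - σ (v - t) * χ t)| ≤
        M * (v - 1 / 2) := by
      have := intervalIntegral.norm_integral_le_of_norm_le_const (a := 0) (b := v - 1 / 2)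
        (C := M) (f := fun t ↦ σ (v + k - t) * χ t - σ (v - t) * χ t) fun t ht ↦ by
          rw [Set.uIoc_of_le (by linarith)] at ht
          have h1 := hM (v - t) ⟨by linarith [ht.2], by linarith [ht.1, hv.2]⟩
          rw [← sub_mul, Real.norm_eq_abs, abs_mul, abs_of_nonneg (h.nonneg t),
            show v + k - t = v - t + k by ring]
          exact (mul_le_of_le_one_right (abs_nonneg _) (h.le_one t)).trans h1
      rwa [sub_zero, abs_of_nonneg (by linarith : 0 ≤ v - 1 / 2)] at this
    have b2 : ∫ t in (v - 1 / 2)..v, (σ (v + k - t) * χ t - σ (v - t) * χ t) = 0 := by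
      rw [intervalIntegral.integral_congr (g := fun _ ↦ (0 : ℝ))]
      · simp
      · intro t ht
        rw [Set.uIcc_of_le (by linarith)] at ht
        have h1 := hzero (v - t) (by linarith [ht.2]) (by linarith [ht.1])
        simp only
        rw [← sub_mul, show v + k - t = v - t + k by ring, h1, zero_mul]
    have b3 : |∫ t in v..(v + k), σ (v + k - t) * χ t| ≤ k := by
      have := intervalIntegral.norm_integral_le_of_norm_le_const (a := v) (b := v + k)
        (C := 1) (f := fun t ↦ σ (v + k - t) * χ t) fun t ht ↦ by
          rw [Set.uIoc_of_le (by linarith)] at ht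
          have h1 := h.abs_sol_le_one (u := v + k - t) ⟨by linarith [ht.2], by linarith [ht.1]⟩
          rw [Real.norm_eq_abs, abs_mul, abs_of_nonneg (h.nonneg t)]
          exact (mul_le_of_le_one_right (abs_nonneg _) (h.le_one t)).trans h1
      rwa [add_sub_cancel_left, abs_of_nonneg hk, one_mul] at this
    have b4 : |k * σ (v + k)| ≤ k := by
      rw [abs_mul, abs_of_nonneg hk]
      exact mul_le_of_le_one_right hk
        (h.abs_sol_le_one (u := v + k) ⟨by linarith, hvU⟩)
    have h5 : v * |σ (v + k) - σ v| ≤ M * (v - 1 / 2) + 2 * k := by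
      rw [← abs_of_nonneg hv0, ← abs_mul, abs_of_nonneg hv0, hsplit, b2, add_zero]
      refine (abs_sub _ _).trans ?_
      have := abs_add_le (∫ t in (0 : ℝ)..(v - 1 / 2), (σ (v + k - t) * χ t - σ (v - t) * χ t))
        (∫ t in v..(v + k), σ (v + k - t) * χ t)
      linarith
    have h6 : |σ (v + k) - σ v| ≤ (1 - 1 / (2 * v)) * M + 2 * k / v := by
      rw [← mul_le_mul_iff_right₀ hvpos]
      refine h5.trans (le_of_eq ?_)
      field_simp
    have h7 : 1 / (2 * U) ≤ 1 / (2 * v) := one_div_le_one_div_of_le (by linarith) (by linarith)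
    have h8 : 2 * k / v ≤ 4 * k := by
      rw [div_le_iff₀ hvpos]
      nlinarith
    have h9 : (1 - 1 / (2 * v)) * M ≤ (1 - 1 / (2 * U)) * M :=
      mul_le_mul_of_nonneg_right (by linarith) hM0
    exact h6.trans (add_le_add h9 h8)

/-- The solution of the delay equation is Lipschitz. -/
lemma abs_sol_sub_le (h : IsDelaySolution U χ σ) {a b : ℝ} (ha : a ∈ Set.Icc 0 U)
    (hb : b ∈ Set.Icc 0 U) : |σ a - σ b| ≤ 8 * U * |a - b| := by
  wlog hab : b ≤ a generalizing a b
  · rw [abs_sub_comm, abs_sub_comm a]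
    exact this hb ha (by linarith)
  have hU := h.one_lt
  rw [abs_of_nonneg (sub_nonneg.2 hab)]
  rcases lt_or_ge (a - b) (1 / 2) with hk | hk
  · have := h.abs_sol_add_sub_le (sub_nonneg.2 hab) hk b ⟨hb.1, by linarith [ha.2]⟩
    rwa [add_sub_cancel] at this
  · have h1 := h.abs_sol_le_one ha
    have h2 := h.abs_sol_le_one hb
    refine (abs_sub _ _).trans ?_
    nlinarith

end IsDelaySolution

lemma rpow_sub_log_div_log {y : ℝ} (hy : 1 < y) (u : ℝ) {d : ℕ} (hd : 0 < d) :
    y ^ (u - Real.log d / Real.log y) = y ^ u / d := by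
  have hL := Real.log_pos hy
  have hd0 : (0 : ℝ) < d := by exact_mod_cast hd
  rw [Real.rpow_sub (by linarith), Real.rpow_def_of_pos (by linarith) (Real.log d / Real.log y),
    mul_div_cancel₀ _ hL.ne', Real.exp_log hd0]

lemma log_div_log_le_iff {y t : ℝ} (hy : 1 < y) {d : ℕ} (hd : 0 < d) :
    Real.log d / Real.log y ≤ t ↔ d ≤ ⌊y ^ t⌋₊ := by
  have hd0 : (0 : ℝ) < d := by exact_mod_cast hd
  have hy0 : 0 < y := by linarith
  rw [Nat.le_floor_iff (by positivity), div_le_iff₀ (Real.log_pos hy), ← Real.log_rpow hy0,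
    Real.log_le_log_iff hd0 (by positivity)]

/-- The approximate delay equation for the proportion of integers composed of primes in `P`. -/
lemma abs_mul_smoothIn_div_sub_sum_le (P : Set ℕ) {y u : ℝ} (hy : 1 < y) (hu : 0 ≤ u) :
    |u * (smoothIn (y ^ u) P / y ^ u) - ∑ d ∈ Finset.Ioc 0 ⌊y ^ u⌋₊,
      smoothFun P d * Λ d / (d * Real.log y) *
        (smoothIn (y ^ (u - Real.log d / Real.log y)) P / y ^ (u - Real.log d / Real.log y))| ≤
      2 / Real.log y := by
  have hL := Real.log_pos hy
  have hy0 : 0 < y := by linarith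
  have hx : 0 < y ^ u := by positivity
  have h := abs_smoothIn_mul_log_sub_le P (Real.one_le_rpow hy.le hu)
  rw [Real.log_rpow hy0] at h
  have heq : u * (smoothIn (y ^ u) P / y ^ u) - ∑ d ∈ Finset.Ioc 0 ⌊y ^ u⌋₊,
      smoothFun P d * Λ d / (d * Real.log y) *
        (smoothIn (y ^ (u - Real.log d / Real.log y)) P / y ^ (u - Real.log d / Real.log y)) =
      (smoothIn (y ^ u) P * (u * Real.log y) -
        ∑ d ∈ Finset.Ioc 0 ⌊y ^ u⌋₊, smoothFun P d * Λ d * smoothIn (y ^ u / d) P) /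
        (y ^ u * Real.log y) := by
    rw [sub_div, Finset.sum_div]
    congr 1
    · field_simp
    · refine Finset.sum_congr rfl fun d hd ↦ ?_
      have hd0 : (0 : ℝ) < d := by exact_mod_cast (Finset.mem_Ioc.1 hd).1
      rw [rpow_sub_log_div_log hy u (Finset.mem_Ioc.1 hd).1]
      field_simp
  rw [heq, abs_div, abs_of_pos (by positivity : 0 < y ^ u * Real.log y),
    div_le_iff₀ (by positivity)]
  refine h.trans (le_of_eq ?_)
  field_simp

lemma abs_smoothIn_div_sub_sol_le {U y e : ℝ} {P : Set ℕ} {σ : ℝ → ℝ} {N : ℕ} (hN : 0 < N)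
    (hP : ∀ p ∈ P, p.Prime) (hPy : ∀ p : ℕ, p.Prime → (p : ℝ) ≤ y → p ∈ P) (hy : 1 < y)
    (hσ : IsDelaySolution U (densityFun P y) σ) (he : 0 ≤ e) (heU : e ≤ 1 / (2 * U))
    (hA : ∀ t ∈ Set.Icc 0 U,
      |∑ d ∈ Finset.Ioc 0 ⌊y ^ t⌋₊, smoothFun P d * Λ d / (d * Real.log y) -
        ∫ r in (0 : ℝ)..t, densityFun P y r| ≤ e) :
    ∀ u ∈ Set.Icc 1 U, |smoothIn (y ^ u) P / y ^ u - σ u| ≤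
      2 * U * ((Real.log 4 + 6) / Real.log y +
        (8 * U * (U / N) * (2 * U + e) + 2 * e * N + e)) := by
  have hU := hσ.one_lt
  have hU0 : 0 < U := by linarith
  have hL := Real.log_pos hy
  have hy0 : 0 < y := by linarith
  have hN0 : (0 : ℝ) < N := by exact_mod_cast hN
  have hl4 : 0 < Real.log 4 := Real.log_pos (by norm_num)
  set E : ℝ := (Real.log 4 + 6) / Real.log y +
    (8 * U * (U / N) * (2 * U + e) + 2 * e * N + e) with hE
  have hE0 : 0 ≤ E := by positivity
  set s : ℝ → ℝ := fun v ↦ smoothIn (y ^ v) P / y ^ v with hs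
  have hs0 : ∀ v, 0 ≤ s v := fun v ↦ by positivity
  have hs1 : ∀ v, s v ≤ 1 := fun v ↦
    div_le_one_of_le₀ (smoothIn_le (by positivity) P) (by positivity)
  have hUinv : 1 / (2 * U) < 1 := by rw [div_lt_one (by linarith)]; linarith
  have hUpos : 0 < 1 / (2 * U) := by positivity
  set α : ℕ → ℝ := fun d ↦ smoothFun P d * Λ d / (d * Real.log y) with hα
  set τ : ℕ → ℝ := fun d ↦ Real.log d / Real.log y with hτ
  have hα0 : ∀ d, 0 ≤ α d := fun d ↦ div_nonneg
    (mul_nonneg (smoothFun_nonneg P d) ArithmeticFunction.vonMangoldt_nonneg) (by positivity)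
  have hτ0 : ∀ d, 0 ≤ τ d := fun d ↦ div_nonneg (Real.log_natCast_nonneg d) hL.le
  have hsumτ : ∀ u t, t ≤ u → ∑ d ∈ Finset.Ioc 0 ⌊y ^ u⌋₊, (if τ d ≤ t then α d else 0) =
      ∑ d ∈ Finset.Ioc 0 ⌊y ^ t⌋₊, α d := by
    intro u t htu
    rw [← Finset.sum_filter]
    refine Finset.sum_congr ?_ fun _ _ ↦ rfl
    ext d
    have hmono : ⌊y ^ t⌋₊ ≤ ⌊y ^ u⌋₊ :=
      Nat.floor_le_floor (Real.rpow_le_rpow_of_exponent_le hy.le htu)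
    rw [Finset.mem_filter, Finset.mem_Ioc, Finset.mem_Ioc]
    constructor
    · exact fun h ↦ ⟨h.1.1, (log_div_log_le_iff hy h.1.1).1 h.2⟩
    · exact fun h ↦ ⟨⟨h.1, h.2.trans hmono⟩, (log_div_log_le_iff hy h.1).2 h.2⟩
  have key := le_div_one_sub_of_forall_upper_bound (S := Set.Icc 1 U)
    (d := fun u ↦ |s u - σ u|) (B := 2) (q := 1 - 1 / (2 * U)) (e := E)
    (by linarith) (by linarith) hE0 ?_ ?_
  · intro u hu
    refine (key u hu).trans (le_of_eq ?_)
    field_simp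
    ring
  · intro u hu
    have h1 := hσ.abs_sol_le_one (u := u) ⟨by linarith [hu.1], hu.2⟩
    refine (abs_sub _ _).trans ?_
    rw [abs_of_nonneg (hs0 u)]
    linarith [hs1 u]
  · intro M hM0 hM u hu
    have hu0 : 0 < u := by linarith [hu.1]
    set S := Finset.Ioc 0 ⌊y ^ u⌋₊ with hS
    have hτu : ∀ d ∈ S, 0 ≤ τ d ∧ τ d ≤ u := fun d hd ↦
      ⟨hτ0 d, (log_div_log_le_iff hy (Finset.mem_Ioc.1 hd).1).2 (Finset.mem_Ioc.1 hd).2⟩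
    have b1 : |u * s u - ∑ d ∈ S, α d * s (u - τ d)| ≤ 2 / Real.log y :=
      abs_mul_smoothIn_div_sub_sum_le P hy hu0.le
    have b2 : |∑ d ∈ S, α d * σ (u - τ d) - ∫ t in (0 : ℝ)..u, σ (u - t) * densityFun P y t| ≤
        8 * U * (U / N) * (2 * U + e) + 2 * e * N + e := by
      refine (abs_sum_mul_sub_integral_mul_le S (g := fun t ↦ σ (u - t)) (K := 8 * U) (e := e)
        hu0.le (by positivity) (fun d _ ↦ hα0 d) hτu
        (fun t ht ↦ hσ.abs_sol_le_one ⟨by linarith [ht.2], by linarith [ht.1, hu.2]⟩) ?_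
        hσ.nonneg hσ.le_one (intervalIntegrable_densityFun hP hy0.le _ _)
        (hσ.intervalIntegrable_mul_density
          (hσ.intervalIntegrable_sol_comp hu.2 le_rfl hu0.le le_rfl)) ?_ hN).trans ?_
      · intro a ha b hb
        refine (hσ.abs_sol_sub_le ⟨by linarith [ha.2], by linarith [ha.1, hu.2]⟩
          ⟨by linarith [hb.2], by linarith [hb.1, hu.2]⟩).trans (le_of_eq ?_)
        rw [abs_sub_comm a b]
        congr 2
        ring
      · intro t ht
        rw [hsumτ u t ht.2]
        exact hA t ⟨ht.1, ht.2.trans hu.2⟩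
      · have := hu.2
        gcongr
    have b3 : |∑ d ∈ S, α d * (s (u - τ d) - σ (u - τ d))| ≤
        (u - 1 + e) * M + (Real.log 4 + 4) / Real.log y := by
      have hterm : ∀ d ∈ S, |α d * (s (u - τ d) - σ (u - τ d))| ≤
          M * (if τ d ≤ u - 1 then α d else 0) + α d * (d / y ^ u) := by
        intro d hd
        have hd1 := (Finset.mem_Ioc.1 hd).1
        have hd0 : (0 : ℝ) < d := by exact_mod_cast hd1
        rw [abs_mul, abs_of_nonneg (hα0 d)]
        split_ifs with hcase
        · have h1 := hM (u - τ d) ⟨by linarith, by linarith [hτ0 d, hu.2]⟩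
          have h2 : α d * |s (u - τ d) - σ (u - τ d)| ≤ α d * M :=
            mul_le_mul_of_nonneg_left h1 (hα0 d)
          have h3 : 0 ≤ α d * (d / y ^ u) := mul_nonneg (hα0 d) (by positivity)
          linarith
        · rw [mul_zero, zero_add]
          refine mul_le_mul_of_nonneg_left ?_ (hα0 d)
          push Not at hcase
          have hv1 : u - τ d ≤ 1 := by linarith
          have hyv : y ^ (u - τ d) = y ^ u / d := rpow_sub_log_div_log hy u hd1
          rw [hσ.sol_eq_one _ (by linarith [(hτu d hd).2]) hv1]
          have hpos : 0 < y ^ (u - τ d) := by positivity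
          have h1 := abs_smoothIn_sub_le hPy hpos.le
            (by simpa using Real.rpow_le_rpow_of_exponent_le hy.le hv1)
          have h2 : s (u - τ d) - 1 =
              (smoothIn (y ^ (u - τ d)) P - y ^ (u - τ d)) / y ^ (u - τ d) := by
            simp only [hs]
            field_simp
          rw [h2, abs_div, abs_of_pos hpos]
          calc _ ≤ 1 / y ^ (u - τ d) := by gcongr
            _ = d / y ^ u := by rw [hyv, one_div_div]
      refine (Finset.abs_sum_le_sum_abs _ _).trans ((Finset.sum_le_sum hterm).trans ?_)
      rw [Finset.sum_add_distrib, ← Finset.mul_sum, hsumτ u (u - 1) (by linarith)]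
      refine add_le_add ?_ ?_
      · rw [mul_comm]
        refine mul_le_mul_of_nonneg_right ?_ hM0
        have h1 := (le_abs_self _).trans (hA (u - 1) ⟨by linarith [hu.1], by linarith [hu.2]⟩)
        have h2 : ∫ r in (0 : ℝ)..(u - 1), densityFun P y r ≤ u - 1 := by
          have := intervalIntegral.integral_mono_on (by linarith [hu.1] : (0 : ℝ) ≤ u - 1)
            (intervalIntegrable_densityFun hP hy0.le _ _)
            (intervalIntegrable_const (c := (1 : ℝ))) fun t _ ↦ hσ.le_one t
          simpa using this
        linarith
      · have h1 : ∑ d ∈ S, α d * (d / y ^ u) = psiIn P (y ^ u) / y ^ u / Real.log y := by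
          rw [psiIn, Finset.sum_div, Finset.sum_div]
          refine Finset.sum_congr rfl fun d hd ↦ ?_
          have hd0 : (0 : ℝ) < d := by exact_mod_cast (Finset.mem_Ioc.1 hd).1
          simp only [hα]
          field_simp
        rw [h1]
        gcongr
        rw [div_le_iff₀ (by positivity)]
        exact psiIn_le P (by positivity)
    have hdecomp : u * (s u - σ u) = (u * s u - ∑ d ∈ S, α d * s (u - τ d)) +
        ∑ d ∈ S, α d * (s (u - τ d) - σ (u - τ d)) +
        (∑ d ∈ S, α d * σ (u - τ d) - ∫ t in (0 : ℝ)..u, σ (u - t) * densityFun P y t) := by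
      rw [← hσ.mul_sol_eq hu0.le hu.2]
      simp only [mul_sub, Finset.sum_sub_distrib]
      ring
    have h1 : u * |s u - σ u| ≤ (u - 1 + e) * M + E := by
      have hsum : E = 2 / Real.log y + (Real.log 4 + 4) / Real.log y +
          (8 * U * (U / N) * (2 * U + e) + 2 * e * N + e) := by
        rw [hE]
        ring
      have h2 : u * |s u - σ u| = |u * (s u - σ u)| := by rw [abs_mul, abs_of_pos hu0]
      rw [h2, hdecomp]
      refine (abs_add_le _ _).trans ?_
      have := abs_add_le (u * s u - ∑ d ∈ S, α d * s (u - τ d))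
        (∑ d ∈ S, α d * (s (u - τ d) - σ (u - τ d)))
      linarith
    have h3 : |s u - σ u| ≤ (1 - 1 / u + e / u) * M + E / u := by
      rw [← mul_le_mul_iff_right₀ hu0]
      refine h1.trans (le_of_eq ?_)
      field_simp
    have h4 : e / u ≤ 1 / (2 * U) := (div_le_self he hu.1).trans heU
    have h5 : 1 / U ≤ 1 / u := one_div_le_one_div_of_le hu0 hu.2
    have h6 : 1 / U = 1 / (2 * U) + 1 / (2 * U) := by field_simp; norm_num
    have h7 : E / u ≤ E := div_le_self hE0 hu.1
    exact h3.trans (add_le_add (mul_le_mul_of_nonneg_right (by linarith) hM0) h7)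

theorem statement5 (U : ℝ) (hU : 1 < U)
    (P : ℝ → Set ℕ)
    (hP : ∀ y : ℝ, 2 ≤ y → ∀ p ∈ P y, Nat.Prime p ∧ (p : ℝ) ≤ y ^ U)
    (hPy : ∀ y : ℝ, 2 ≤ y → ∀ p : ℕ, Nat.Prime p → (p : ℝ) ≤ y → p ∈ P y)
    (χ : ℝ → ℝ → ℝ)
    (hχ1 : ∀ y : ℝ, 2 ≤ y → ∀ t : ℝ, 0 ≤ t → t ≤ 1 → χ y t = 1)
    (hχ2 : ∀ y : ℝ, 2 ≤ y → ∀ t : ℝ, 1 < t → t ≤ U →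
      χ y t = ({p : ℕ | p ∈ P y ∧ (p : ℝ) ≤ y ^ t}.ncard : ℝ) / (primePi (y ^ t) : ℝ))
    (σ : ℝ → ℝ → ℝ)
    (hσ1 : ∀ y : ℝ, 2 ≤ y → ∀ u : ℝ, 0 ≤ u → u ≤ 1 → σ y u = 1)
    (hσeq : ∀ y : ℝ, 2 ≤ y → ∀ u : ℝ, 1 < u → u ≤ U →
      u * σ y u = ∫ t in (0 : ℝ)..u, σ y (u - t) * χ y t) :
    ∀ ε : ℝ, 0 < ε → ∃ y₀ : ℝ, ∀ y : ℝ, y₀ ≤ y → ∀ u ∈ Set.Icc (1 : ℝ) U,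
      |(smoothIn (y ^ u) (P y) : ℝ) / y ^ u - σ y u| ≤ ε := by
  intro ε hε
  have hU0 : 0 < U := by linarith
  have hsol : ∀ y, 2 ≤ y → IsDelaySolution U (densityFun (P y) y) (σ y) := by
    intro y hy
    refine ⟨hU, measurable_densityFun _ _, densityFun_nonneg _ _,
      densityFun_le_one (fun p hp ↦ (hP y hy p hp).1) (by linarith), fun t ht ↦ if_pos ht,
      exists_le_densityFun (hPy y hy) hy U, hσ1 y hy, fun u hu1 huU ↦ ?_⟩
    rw [hσeq y hy u hu1 huU]
    refine intervalIntegral.integral_congr fun t ht ↦ ?_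
    rw [Set.uIcc_of_le (by linarith)] at ht
    have h1 : χ y t = densityFun (P y) y t := by
      rcases le_or_gt t 1 with h | h
      · rw [hχ1 y hy t ht.1 h, densityFun, if_pos h]
      · rw [hχ2 y hy t h (ht.2.trans huU), densityFun, if_neg (not_le.2 h), primeRatio]
    simp only [h1]
  obtain ⟨N, hN⟩ := exists_nat_gt (64 * U ^ 3 * (2 * U + 1) / ε)
  have hN0 : (0 : ℝ) < N := lt_trans (by positivity) hN
  set e : ℝ := min (1 / (2 * U)) (ε / (8 * U * (2 * N + 1))) with he
  have he0 : 0 < e := by positivity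
  have heU : e ≤ 1 / (2 * U) := min_le_left _ _
  have he1 : e ≤ 1 := heU.trans (by rw [div_le_one (by positivity)]; linarith)
  have heN : e * (2 * N + 1) ≤ ε / (8 * U) := by
    have h1 : e ≤ ε / (8 * U * (2 * N + 1)) := min_le_right _ _
    calc _ ≤ ε / (8 * U * (2 * N + 1)) * (2 * N + 1) := by gcongr
      _ = _ := by field_simp
  obtain ⟨y₁, hy₁⟩ := exists_abs_mertens_sub_integral_le hU0 he0
  have hlim : Tendsto (fun y ↦ (Real.log 4 + 6) / Real.log y) atTop (𝓝 0) :=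
    Real.tendsto_log_atTop.const_div_atTop _
  obtain ⟨y₂, hy₂⟩ := eventually_atTop.1
    (hlim.eventually_le_const (show 0 < ε / (8 * U) by positivity))
  refine ⟨max 2 (max y₁ y₂), fun y hy u hu ↦ ?_⟩
  have hy2 : 2 ≤ y := (le_max_left _ _).trans hy
  have hyy := (le_max_right _ _).trans hy
  have hPp : ∀ p ∈ P y, p.Prime := fun p hp ↦ (hP y hy2 p hp).1
  refine (abs_smoothIn_div_sub_sol_le (N := N) (by exact_mod_cast hN0) hPp (hPy y hy2)
    (by linarith) (hsol y hy2) he0.le heU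
    (hy₁ y ((le_max_left _ _).trans hyy) (P y) hPp (hPy y hy2)) u hu).trans ?_
  have h1 := hy₂ y ((le_max_right _ _).trans hyy)
  have h2 : 8 * U * (U / N) * (2 * U + e) ≤ ε / (8 * U) := by
    have h3 : 64 * U ^ 3 * (2 * U + 1) ≤ N * ε := ((div_lt_iff₀ hε).1 hN).le
    calc 8 * U * (U / N) * (2 * U + e) ≤ 8 * U * (U / N) * (2 * U + 1) := by gcongr
      _ = 64 * U ^ 3 * (2 * U + 1) / (8 * U * N) := by field_simp; norm_num
      _ ≤ N * ε / (8 * U * N) := by gcongr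
      _ = ε / (8 * U) := by field_simp
  calc _ ≤ 2 * U * (ε / (8 * U) + (ε / (8 * U) + ε / (8 * U))) := by
        refine mul_le_mul_of_nonneg_left ?_ (by positivity)
        linarith
    _ = 3 / 4 * ε := by field_simp; norm_num
    _ ≤ ε := by linarith
end
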